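/- arXiv:2105.04748 — 3 statements merged into one kernel-verified Lean document; each statement's English description precedes it below -/
import Mathlib

section
/- Let k ≥ 4 be an integer, ε ∈ {1, −1}, and δ(x, y) = x²y + ε·y^{k−1} (a D_k-type singular impasse curve). Let X = (P, Q) be real-analytic on a neighborhood of the origin in ℝ² with P(0,0) ≠ 0 and Q(x, 0) = 0 for all x in a neighborhood of 0. Then the constrained system (X, δ) is orientation-preserving C⁰-orbitally equivalent at (0, 0) to the constrained system (Y, δ), where Y is the constant vector field Y ≡ (P(0,0), Q(0,0)). -/
/-- A phase curve of the vector field `X` in the set `V`: a differentiable curve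
`c : J → V` on a nondegenerate interval `J` with `c'(t) = X(c(t))` for all `t ∈ J`. -/
def IsPhaseCurve (X : ℝ × ℝ → ℝ × ℝ) (V : Set (ℝ × ℝ)) (J : Set ℝ) (c : ℝ → ℝ × ℝ) : Prop :=
  J.OrdConnected ∧ J.Nontrivial ∧ (∀ t ∈ J, c t ∈ V) ∧
    ∀ t ∈ J, HasDerivWithinAt c (X (c t)) J t

/-- The planar constrained systems `(X, δ)` and `(Y, γ)` are orientation-preserving
`C⁰`-orbitally equivalent at `(p₁, p₂)`: there are open neighborhoods `V₁ ∋ p₁`, `V₂ ∋ p₂`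
and a homeomorphism `Φ : V₁ → V₂` sending `p₁` to `p₂` and impasse set to impasse set, which
carries phase curves of `X` off the impasse set onto phase curves of `Y` off the impasse set
up to continuous strictly increasing reparametrizations, and conversely for `Φ⁻¹`. -/
def OrbitallyEquivAt (X : ℝ × ℝ → ℝ × ℝ) (δ : ℝ × ℝ → ℝ) (p₁ : ℝ × ℝ)
    (Y : ℝ × ℝ → ℝ × ℝ) (γ : ℝ × ℝ → ℝ) (p₂ : ℝ × ℝ) : Prop :=
  ∃ (V₁ V₂ : Set (ℝ × ℝ)) (Φ Φinv : ℝ × ℝ → ℝ × ℝ),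
    IsOpen V₁ ∧ IsOpen V₂ ∧ p₁ ∈ V₁ ∧ p₂ ∈ V₂ ∧
    -- Φ is a homeomorphism from V₁ onto V₂ with inverse Φinv
    ContinuousOn Φ V₁ ∧ ContinuousOn Φinv V₂ ∧
    Set.MapsTo Φ V₁ V₂ ∧ Set.MapsTo Φinv V₂ V₁ ∧
    (∀ z ∈ V₁, Φinv (Φ z) = z) ∧ (∀ z ∈ V₂, Φ (Φinv z) = z) ∧
    Φ p₁ = p₂ ∧
    -- Φ maps the impasse set to the impasse set
    Φ '' ({z | δ z = 0} ∩ V₁) = {z | γ z = 0} ∩ V₂ ∧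
    -- Φ maps phase curves of X to phase curves of Y, preserving orientation
    (∀ (J : Set ℝ) (c : ℝ → ℝ × ℝ),
      IsPhaseCurve X (V₁ \ {z | δ z = 0}) J c →
      ∃ (J' : Set ℝ) (d : ℝ → ℝ × ℝ) (τ : ℝ → ℝ),
        IsPhaseCurve Y (V₂ \ {z | γ z = 0}) J' d ∧
        ContinuousOn τ J ∧ StrictMonoOn τ J ∧ τ '' J = J' ∧
        ∀ t ∈ J, Φ (c t) = d (τ t)) ∧
    -- Φ⁻¹ maps phase curves of Y to phase curves of X, preserving orientation
    (∀ (J : Set ℝ) (d : ℝ → ℝ × ℝ),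
      IsPhaseCurve Y (V₂ \ {z | γ z = 0}) J d →
      ∃ (J' : Set ℝ) (c : ℝ → ℝ × ℝ) (τ : ℝ → ℝ),
        IsPhaseCurve X (V₁ \ {z | δ z = 0}) J' c ∧
        ContinuousOn τ J ∧ StrictMonoOn τ J ∧ τ '' J = J' ∧
        ∀ t ∈ J, Φinv (d t) = c (τ t))

open Set Filter Topology Metric

/-- Positive derivative within an interval implies strict monotonicity. -/
lemma strictMonoOn_of_interval_deriv_pos {J : Set ℝ} (hJ : J.OrdConnected) {τ τ' : ℝ → ℝ}
    (h : ∀ t ∈ J, HasDerivWithinAt τ (τ' t) J t) (hpos : ∀ t ∈ J, 0 < τ' t) :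
    StrictMonoOn τ J := by
  apply strictMonoOn_of_deriv_pos hJ.convex
  · exact fun t ht => (h t ht).continuousWithinAt
  · intro t ht
    have h1 := (h t (interior_subset ht)).hasDerivAt (mem_interior_iff_mem_nhds.1 ht)
    rw [h1.deriv]
    exact hpos t (interior_subset ht)

lemma image_interval {J : Set ℝ} (hJ : J.OrdConnected) (hn : J.Nontrivial) {τ : ℝ → ℝ}
    (hc : ContinuousOn τ J) (hm : StrictMonoOn τ J) :
    (τ '' J).OrdConnected ∧ (τ '' J).Nontrivial := by
  refine ⟨(hJ.isPreconnected.image τ hc).ordConnected, hn.image_of_injOn hm.injOn⟩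

/-- The primitive of a function that is continuous on an interval. -/
lemma primitive_within {J : Set ℝ} (hJ : J.OrdConnected) {μ : ℝ → ℝ} (hμ : ContinuousOn μ J)
    {t₀ : ℝ} (h0 : t₀ ∈ J) :
    ∀ t ∈ J, HasDerivWithinAt (fun t => ∫ s in t₀..t, μ s) (μ t) J t := by
  intro t ht
  have hint : ∀ a ∈ J, ∀ b ∈ J, IntervalIntegrable μ MeasureTheory.volume a b := fun a ha b hb =>
    (hμ.mono (hJ.uIcc_subset ha hb)).intervalIntegrable
  rw [hasDerivWithinAt_iff_isLittleO, Asymptotics.isLittleO_iff]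
  intro c hc
  have h1 := Metric.continuousWithinAt_iff.1 (hμ t ht) c hc
  obtain ⟨d, hd, h1⟩ := h1
  filter_upwards [self_mem_nhdsWithin, mem_nhdsWithin_of_mem_nhds (Metric.ball_mem_nhds t hd)]
    with s hs hsd
  have e1 : (∫ r in t₀..s, μ r) - (∫ r in t₀..t, μ r) - (s - t) • μ t
      = ∫ r in t..s, (μ r - μ t) := by
    rw [intervalIntegral.integral_sub (hint t ht s hs) (by simp),
      intervalIntegral.integral_interval_sub_left (hint _ h0 _ hs) (hint _ h0 _ ht)]
    simp
  rw [e1]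
  have := intervalIntegral.norm_integral_le_of_norm_le_const (a := t) (b := s)
    (f := fun r => μ r - μ t) (C := c) ?_
  · simpa using this
  · intro r hr
    have hr' : r ∈ uIcc t s := uIoc_subset_uIcc hr
    have hrJ : r ∈ J := hJ.uIcc_subset ht hs hr'
    have : dist r t < d := by
      have h2 := abs_sub_left_of_mem_uIcc hr'
      rw [mem_ball, Real.dist_eq] at hsd
      rw [Real.dist_eq]
      linarith
    exact (h1 hrJ this).le

/-- A curve tangent to `X` with positive speed factor can be reparametrized to a phase curve. -/
lemma reparam_phase {X : ℝ × ℝ → ℝ × ℝ} {V : Set (ℝ × ℝ)} {J : Set ℝ} (hJ : J.OrdConnected)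
    (hn : J.Nontrivial) {e : ℝ → ℝ × ℝ} {μ : ℝ → ℝ} (hμ : ContinuousOn μ J)
    (hpos : ∀ t ∈ J, 0 < μ t) (hV : ∀ t ∈ J, e t ∈ V)
    (he : ∀ t ∈ J, HasDerivWithinAt e (μ t • X (e t)) J t) :
    ∃ (J' : Set ℝ) (c : ℝ → ℝ × ℝ) (τ : ℝ → ℝ), IsPhaseCurve X V J' c ∧
      ContinuousOn τ J ∧ StrictMonoOn τ J ∧ τ '' J = J' ∧ ∀ t ∈ J, e t = c (τ t) := by
  obtain ⟨t₀, h0⟩ := hn.nonempty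
  set τ : ℝ → ℝ := fun t => ∫ s in t₀..t, μ s with hτ
  have hd := primitive_within hJ hμ h0
  have hm : StrictMonoOn τ J := strictMonoOn_of_interval_deriv_pos hJ hd hpos
  have hc : ContinuousOn τ J := fun t ht => (hd t ht).continuousWithinAt
  obtain ⟨hJ', hn'⟩ := image_interval hJ hn hc hm
  set σ : ℝ → ℝ := Function.invFunOn τ J with hσ
  have hleft : ∀ t ∈ J, σ (τ t) = t := fun t ht => hm.injOn.leftInvOn_invFunOn ht
  have hσc : ContinuousOn σ (τ '' J) := by
    rw [continuousOn_iff_continuous_domRestrict]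
    have : Continuous (hm.orderIso τ J).symm := by
      have := hJ
      have := hJ'
      exact (hm.orderIso τ J).symm.continuous
    have h2 := continuous_subtype_val.comp this
    refine h2.congr ?_
    rintro ⟨y, t, ht, rfl⟩
    simp only [Function.comp, domRestrict_apply, hleft t ht]
    have : (hm.orderIso τ J).symm ⟨τ t, t, ht, rfl⟩ = ⟨t, ht⟩ := by
      rw [OrderIso.symm_apply_eq]; rfl
    rw [this]
  refine ⟨τ '' J, e ∘ σ, τ, ⟨hJ', hn', ?_, ?_⟩, hc, hm, rfl, ?_⟩
  · rintro _ ⟨t, ht, rfl⟩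
    simpa [hleft t ht] using hV t ht
  · rintro _ ⟨t, ht, rfl⟩
    have hmaps : MapsTo σ (τ '' J) J := by
      rintro _ ⟨s, hs, rfl⟩
      rw [hleft s hs]; exact hs
    have hμt := (hpos t ht).ne'
    have hσd : HasDerivWithinAt σ (μ t)⁻¹ (τ '' J) (τ t) := by
      have h3 : HasFDerivWithinAt τ
          ((ContinuousLinearEquiv.unitsEquivAut ℝ (Units.mk0 (μ t) hμt) : ℝ ≃L[ℝ] ℝ) : ℝ →L[ℝ] ℝ)
          J (σ (τ t)) := by
        rw [hleft t ht]
        refine (hd t ht).hasFDerivWithinAt.congr_fderiv ?_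
        ext; simp
      have h4 := h3.of_local_left_inverse (g := σ) (s := τ '' J) (a := τ t) ?_ ⟨t, ht, rfl⟩ ?_
      · have := h4.hasDerivWithinAt
        refine this.congr_deriv ?_
        simp
      · exact (hσc (τ t) ⟨t, ht, rfl⟩).tendsto_nhdsWithin hmaps
      · filter_upwards [self_mem_nhdsWithin]
        rintro _ ⟨s, hs, rfl⟩
        rw [hleft s hs]
    have h5 : HasDerivWithinAt e (μ t • X (e t)) J (σ (τ t)) := by
      rw [hleft t ht]; exact he t ht
    have h6 := h5.scomp (τ t) hσd hmaps
    refine h6.congr_deriv ?_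
    simp [hleft t ht, smul_smul, hμt]
  · intro t ht
    simp [hleft t ht]

/-- A Lipschitz map transfers derivatives between tangent curves. -/
lemma lip_transfer {E F : Type*} [NormedAddCommGroup E] [NormedSpace ℝ E]
    [NormedAddCommGroup F] [NormedSpace ℝ F] {Φ : E → F} {K : NNReal} {V : Set E}
    (hΦ : LipschitzOnWith K Φ V) (hV : IsOpen V) {c₁ c₂ : ℝ → E} {w : E} {w' : F} {J : Set ℝ}
    {t : ℝ} (h1 : HasDerivWithinAt c₁ w J t)
    (h2 : HasDerivWithinAt c₂ w J t) (heq : c₁ t = c₂ t) (hmem : c₁ t ∈ V)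
    (h : HasDerivWithinAt (fun s => Φ (c₁ s)) w' J t) :
    HasDerivWithinAt (fun s => Φ (c₂ s)) w' J t := by
  have h3 : HasDerivWithinAt (fun s => Φ (c₂ s) - Φ (c₁ s)) 0 J t := by
    rw [hasDerivWithinAt_iff_isLittleO]
    have h4 := h2.sub h1
    rw [hasDerivWithinAt_iff_isLittleO] at h4
    refine Asymptotics.IsBigO.trans_isLittleO ?_ h4
    refine Asymptotics.IsBigO.of_bound K ?_
    have m1 := h1.continuousWithinAt (hV.mem_nhds hmem)
    have m2 := h2.continuousWithinAt (hV.mem_nhds (heq ▸ hmem))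
    filter_upwards [m1, m2] with s hs1 hs2
    have := hΦ.norm_sub_le hs2 hs1
    simpa [heq] using this
  have h5 := h3.add h
  refine (h5.congr_deriv (by simp)).congr_of_eventuallyEq (Eventually.of_forall fun s => ?_) ?_ <;> simp

lemma hasDerivAt_comp_fst {E F : Type*} [NormedAddCommGroup E] [NormedSpace ℝ E]
    [NormedAddCommGroup F] [NormedSpace ℝ F] {c : ℝ → E × F} {w : E × F} {t : ℝ}
    (h : HasDerivAt c w t) : HasDerivAt (fun s => (c s).1) w.1 t :=
  (ContinuousLinearMap.fst ℝ E F).hasFDerivAt.comp_hasDerivAt t h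

lemma hasDerivAt_comp_snd {E F : Type*} [NormedAddCommGroup E] [NormedSpace ℝ E]
    [NormedAddCommGroup F] [NormedSpace ℝ F] {c : ℝ → E × F} {w : E × F} {t : ℝ}
    (h : HasDerivAt c w t) : HasDerivAt (fun s => (c s).2) w.2 t :=
  (ContinuousLinearMap.snd ℝ E F).hasFDerivAt.comp_hasDerivAt t h

/-- Hadamard factorization with a Lipschitz factor. -/
lemma hadamard_factor {f : ℝ × ℝ → ℝ} (hf : AnalyticAt ℝ f (0, 0))
    (h0 : ∀ᶠ x in 𝓝 (0 : ℝ), f (x, 0) = 0) :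
    ∃ (g : ℝ × ℝ → ℝ) (r : ℝ) (K : NNReal), 0 < r ∧ LipschitzOnWith K g (ball (0, 0) r) ∧
      ∀ z ∈ ball ((0 : ℝ), (0 : ℝ)) r, f z = z.2 * g z := by
  set D : ℝ × ℝ → ℝ := fun z => fderiv ℝ f z (0, 1) with hD
  have hDa : AnalyticAt ℝ D (0, 0) := by
    have := hf.fderiv
    exact ((ContinuousLinearMap.apply ℝ ℝ ((0 : ℝ), (1 : ℝ))).analyticAt _).comp this
  obtain ⟨K, s, hs, hl⟩ := (hDa.contDiffAt (n := 1)).exists_lipschitzOnWith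
  have hdiff : ∀ᶠ z in 𝓝 ((0 : ℝ), (0 : ℝ)), DifferentiableAt ℝ f z :=
    hf.eventually_analyticAt.mono fun z hz => hz.differentiableAt
  obtain ⟨r1, hr1, H1⟩ := Metric.mem_nhds_iff.1 hs
  obtain ⟨r2, hr2, H2⟩ := Metric.eventually_nhds_iff_ball.1 hdiff
  obtain ⟨r3, hr3, H3⟩ := Metric.eventually_nhds_iff_ball.1 h0
  set r := min r1 (min r2 r3) with hr
  have hrr1 : r ≤ r1 := min_le_left _ _
  have hrr2 : r ≤ r2 := (min_le_right _ _).trans (min_le_left _ _)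
  have hrr3 : r ≤ r3 := (min_le_right _ _).trans (min_le_right _ _)
  have hmem : ∀ z ∈ ball ((0 : ℝ), (0 : ℝ)) r, ∀ θ ∈ Icc (0 : ℝ) 1,
      (z.1, θ * z.2) ∈ ball ((0 : ℝ), (0 : ℝ)) r := by
    intro z hz θ hθ
    rw [mem_ball, Prod.dist_eq, max_lt_iff] at hz ⊢
    simp only [Real.dist_eq, sub_zero] at hz ⊢
    refine ⟨hz.1, ?_⟩
    rw [abs_mul, abs_of_nonneg hθ.1]
    nlinarith [hθ.2, hz.2, abs_nonneg z.2]
  have hDl : LipschitzOnWith K D (ball (0, 0) r) :=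
    hl.mono ((ball_subset_ball hrr1).trans H1)
  have hcont : ∀ z ∈ ball ((0 : ℝ), (0 : ℝ)) r,
      ContinuousOn (fun θ : ℝ => D (z.1, θ * z.2)) (uIcc 0 1) := by
    intro z hz
    rw [uIcc_of_le zero_le_one]
    exact hDl.continuousOn.comp (by fun_prop) (fun θ hθ => hmem z hz θ hθ)
  refine ⟨fun z => ∫ θ in (0 : ℝ)..1, D (z.1, θ * z.2), r, K, by positivity, ?_, ?_⟩
  · refine LipschitzOnWith.of_dist_le_mul fun z hz w hw => ?_
    rw [Real.dist_eq, ← intervalIntegral.integral_sub (hcont z hz).intervalIntegrable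
      (hcont w hw).intervalIntegrable]
    have := intervalIntegral.norm_integral_le_of_norm_le_const (a := (0 : ℝ)) (b := 1)
      (f := fun θ => D (z.1, θ * z.2) - D (w.1, θ * w.2)) (C := K * dist z w) ?_
    · simpa using this
    · intro θ hθ
      rw [uIoc_of_le zero_le_one] at hθ
      have hθ' : θ ∈ Icc (0 : ℝ) 1 := Ioc_subset_Icc_self hθ
      rw [← dist_eq_norm]
      refine (hDl.dist_le_mul _ (hmem z hz θ hθ') _ (hmem w hw θ hθ')).trans ?_
      gcongr
      simp only [Prod.dist_eq, Real.dist_eq]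
      apply max_le_max le_rfl
      rw [← mul_sub, abs_mul, abs_of_nonneg hθ'.1]
      nlinarith [hθ'.2, abs_nonneg (z.2 - w.2)]
  · intro z hz
    have h1 : ∀ θ ∈ uIcc (0 : ℝ) 1,
        HasDerivAt (fun θ : ℝ => f (z.1, θ * z.2)) (z.2 * D (z.1, θ * z.2)) θ := by
      intro θ hθ
      rw [uIcc_of_le zero_le_one] at hθ
      have hd := (H2 _ (ball_subset_ball hrr2 (hmem z hz θ hθ))).hasFDerivAt
      have hc : HasDerivAt (fun θ : ℝ => (z.1, θ * z.2)) (0, z.2) θ := by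
        have := (hasDerivAt_const θ z.1).prodMk ((hasDerivAt_id θ).mul_const z.2)
        simpa using! this
      have h2 := hd.comp_hasDerivAt θ hc
      refine h2.congr_deriv ?_
      have : ((0 : ℝ), z.2) = z.2 • ((0 : ℝ), (1 : ℝ)) := by simp
      rw [this, map_smul]; rfl
    have h2 := intervalIntegral.integral_eq_sub_of_hasDerivAt h1
      ((continuousOn_const.mul (hcont z hz)).intervalIntegrable)
    rw [intervalIntegral.integral_const_mul] at h2
    have h3 : f (z.1, 0) = 0 := by
      apply H3
      rw [mem_ball, Prod.dist_eq, max_lt_iff] at hz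
      exact hz.1.trans_le hrr3
    simp only [one_mul, zero_mul, h3, sub_zero] at h2
    exact h2.symm

/-- Transport equation along `(1, f)` solved by the method of characteristics. -/
lemma transport_sol {f g : ℝ × ℝ → ℝ} {Kf Kg : NNReal} (hf : LipschitzWith Kf f)
    (hg : LipschitzWith Kg g) :
    ∃ (v : ℝ × ℝ → ℝ) (r : ℝ) (K : NNReal), 0 < r ∧ LipschitzOnWith K v (ball (0, 0) r) ∧
      v (0, 0) = 0 ∧
      ∀ z ∈ ball ((0 : ℝ), (0 : ℝ)) r, HasLineDerivAt ℝ v (g z) z (1, f z) := by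
  let F : ℝ × ℝ × ℝ → ℝ × ℝ × ℝ := fun p => (1, f (p.1, p.2.1), g (p.1, p.2.1))
  have hpr : LipschitzWith 1 (fun p : ℝ × ℝ × ℝ => (p.1, p.2.1)) := by
    refine LipschitzWith.of_dist_le_mul fun p q => ?_
    simp only [Prod.dist_eq, NNReal.coe_one, one_mul]
    exact max_le_max le_rfl (le_max_left _ _)
  obtain ⟨K, hF⟩ : ∃ K, LipschitzWith K F :=
    ⟨_, (LipschitzWith.const 1).prodMk ((hf.comp hpr).prodMk (hg.comp hpr))⟩
  obtain ⟨L, hL⟩ : ∃ L : NNReal, ∀ p ∈ closedBall (0 : ℝ × ℝ × ℝ) (1 : NNReal), ‖F p‖ ≤ L := by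
    obtain ⟨C, hC⟩ := (isCompact_closedBall (0 : ℝ × ℝ × ℝ) (1 : NNReal)).exists_bound_of_continuousOn
      hF.continuous.continuousOn
    exact ⟨C.toNNReal, fun p hp => (hC p hp).trans (Real.le_coe_toNNReal C)⟩
  set T : ℝ := 1 / (2 * (L + 1)) with hT
  have hT0 : 0 < T := by positivity
  have h0T : (0 : ℝ) ∈ Icc (-T) T := ⟨by linarith, hT0.le⟩
  have hPL : IsPicardLindelof (fun _ => F) (tmin := -T) (tmax := T) ⟨0, h0T⟩
      (0 : ℝ × ℝ × ℝ) 1 (1 / 2) L K := by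
    refine IsPicardLindelof.of_time_independent hL (hF.lipschitzOnWith) ?_
    have : (L : ℝ) * T ≤ 1 / 2 := by
      rw [hT, mul_one_div, div_le_iff₀ (by positivity)]
      linarith
    simp only [sub_zero, zero_sub, neg_neg, max_self, NNReal.coe_one]
    push_cast
    linarith
  obtain ⟨α, hα, K', hK'⟩ := hPL.exists_forall_mem_closedBall_eq_hasDerivWithinAt_lipschitzOnWith
  simp only at hα
  have hder : ∀ p ∈ closedBall (0 : ℝ × ℝ × ℝ) ((1 / 2 : NNReal) : ℝ), ∀ t ∈ Ioo (-T) T,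
      HasDerivAt (α p) (F (α p t)) t := fun p hp t ht =>
    ((hα p hp).2 t (Ioo_subset_Icc_self ht)).hasDerivAt (Icc_mem_nhds ht.1 ht.2)
  have hx : ∀ p ∈ closedBall (0 : ℝ × ℝ × ℝ) ((1 / 2 : NNReal) : ℝ), ∀ t ∈ Ioo (-T) T,
      (α p t).1 = p.1 + t := by
    intro p hp t ht
    have h1 : ∀ s ∈ Ioo (-T) T, HasDerivAt (fun s => (α p s).1 - s) 0 s := by
      intro s hs
      have h3 : HasDerivAt (fun s => (α p s).1 - s) ((F (α p s)).1 - 1) s :=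
        (hasDerivAt_comp_fst (hder p hp s hs)).sub (hasDerivAt_id s)
      exact h3.congr_deriv (by simp [F])
    have h2 := (convex_Ioo (-T) T).is_const_of_fderivWithin_eq_zero (𝕜 := ℝ)
      (f := fun s => (α p s).1 - s) (fun s hs => (h1 s hs).differentiableAt.differentiableWithinAt)
      (fun s hs => by
        rw [fderivWithin_of_isOpen isOpen_Ioo hs, (h1 s hs).hasFDerivAt.fderiv]; ext; simp)
      ht (show (0 : ℝ) ∈ Ioo (-T) T from ⟨by linarith, hT0⟩)
    simp only [(hα p hp).1] at h2
    linarith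
  -- uniqueness up to a vertical shift
  have hshift : ∀ p ∈ closedBall (0 : ℝ × ℝ × ℝ) ((1 / 2 : NNReal) : ℝ),
      ∀ q ∈ closedBall (0 : ℝ × ℝ × ℝ) ((1 / 2 : NNReal) : ℝ), ∀ s w : ℝ, |s| < T / 2 →
      q + (0, 0, w) = α p s → ∀ t, |t| < T / 2 → α q t + (0, 0, w) = α p (s + t) := by
    intro p hp q hq s w hs hqs t ht
    rw [abs_lt] at hs ht
    have := ODE_solution_unique_of_mem_Ioo (v := fun _ => F) (s := fun _ => univ) (K := K)
      (a := -(T / 2)) (b := T / 2) (t₀ := 0) (f := fun t => α q t + (0, 0, w))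
      (g := fun t => α p (s + t)) (fun _ _ => hF.lipschitzOnWith) ⟨by linarith, by linarith⟩
      (fun t ht => ⟨?_, trivial⟩) (fun t ht => ⟨?_, trivial⟩) (by simp [(hα q hq).1, hqs])
    · exact this ht
    · have h1 := (hder q hq t ⟨by linarith [ht.1], by linarith [ht.2]⟩).add_const (0, 0, w)
      refine h1.congr_deriv ?_
      simp [F]
    · have h1 := hder p hp (s + t) ⟨by linarith [ht.1], by linarith [ht.2]⟩
      exact h1.comp_const_add s t
  -- Lipschitz in time
  obtain ⟨L2, hL2⟩ : ∃ L2 : NNReal, ∀ p ∈ closedBall (0 : ℝ × ℝ × ℝ) ((1 / 2 : NNReal) : ℝ),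
      ∀ t ∈ Icc (-T) T, ‖F (α p t)‖ ≤ L2 := by
    have hcα : ContinuousOn (Function.uncurry α)
        (closedBall (0 : ℝ × ℝ × ℝ) ((1 / 2 : NNReal) : ℝ) ×ˢ Icc (-T) T) := by
      apply continuousOn_prod_of_continuousOn_lipschitzOnWith _ K' _ hK'
      exact fun x hx ↦ HasDerivWithinAt.continuousOn (hα x hx).2
    obtain ⟨C, hC⟩ := ((isCompact_closedBall (0 : ℝ × ℝ × ℝ) ((1 / 2 : NNReal) : ℝ)).prod
      (isCompact_Icc (a := -T) (b := T))).exists_bound_of_continuousOn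
      (hF.continuous.comp_continuousOn hcα)
    exact ⟨C.toNNReal, fun p hp t ht => (hC (p, t) ⟨hp, ht⟩).trans (Real.le_coe_toNNReal C)⟩
  have htime : ∀ p ∈ closedBall (0 : ℝ × ℝ × ℝ) ((1 / 2 : NNReal) : ℝ),
      LipschitzOnWith L2 (α p) (Icc (-T) T) := fun p hp =>
    (convex_Icc (-T) T).lipschitzOnWith_of_nnnorm_hasDerivWithin_le (fun t ht => (hα p hp).2 t ht)
      (fun t ht => hL2 p hp t ht)
  set r : ℝ := min (1 / 2) (T / 2) with hr
  have hr0 : 0 < r := by positivity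
  have hin : ∀ z ∈ ball ((0 : ℝ), (0 : ℝ)) r,
      (z.1, z.2, (0 : ℝ)) ∈ ball (0 : ℝ × ℝ × ℝ) ((1 / 2 : NNReal) : ℝ) ∧ |z.1| < T / 2 := by
    intro z hz
    rw [mem_ball, Prod.dist_eq, max_lt_iff] at hz
    simp only [Real.dist_eq, sub_zero] at hz
    have h1 : r ≤ 1 / 2 := min_le_left _ _
    have h2 : r ≤ T / 2 := min_le_right _ _
    refine ⟨?_, by linarith⟩
    simp only [mem_ball, Prod.dist_eq, Prod.fst_zero, Prod.snd_zero, Real.dist_eq, sub_zero,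
      abs_zero]
    push_cast
    refine max_lt (by linarith) (max_lt (by linarith) (by norm_num))
  set v : ℝ × ℝ → ℝ := fun z => -(α (z.1, z.2, 0) (-z.1)).2.2 with hv
  have hvl : LipschitzOnWith (L2 + K') v (ball (0, 0) r) := by
    refine LipschitzOnWith.of_dist_le_mul fun z hz w hw => ?_
    obtain ⟨hz1, hz2⟩ := hin z hz
    obtain ⟨hw1, hw2⟩ := hin w hw
    have hz1' := ball_subset_closedBall hz1
    have hw1' := ball_subset_closedBall hw1
    rw [abs_lt] at hz2 hw2
    have i1 : -z.1 ∈ Icc (-T) T := ⟨by linarith, by linarith⟩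
    have i2 : -w.1 ∈ Icc (-T) T := ⟨by linarith, by linarith⟩
    have d1 := (htime _ hz1').dist_le_mul _ i1 _ i2
    have d2 := (hK' _ i2).dist_le_mul _ hz1' _ hw1'
    have d3 : dist (v z) (v w) ≤ dist (α (z.1, z.2, 0) (-z.1)) (α (w.1, w.2, 0) (-w.1)) := by
      simp only [hv, dist_neg_neg, Prod.dist_eq (α := ℝ)]
      exact (le_max_right _ _).trans (le_max_right _ _)
    have d4 := dist_triangle (α (z.1, z.2, 0) (-z.1)) (α (z.1, z.2, 0) (-w.1))
      (α (w.1, w.2, 0) (-w.1))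
    have d5 : dist (-z.1) (-w.1) ≤ dist z w := by
      rw [dist_neg_neg, Prod.dist_eq]; exact le_max_left _ _
    have d6 : dist (z.1, z.2, (0 : ℝ)) (w.1, w.2, 0) ≤ dist z w := by
      simp only [Prod.dist_eq, dist_self]
      exact max_le_max le_rfl (max_le le_rfl dist_nonneg)
    have d7 : (L2 : ℝ) * dist (-z.1) (-w.1) ≤ L2 * dist z w := by gcongr
    have d8 : (K' : ℝ) * dist (z.1, z.2, (0 : ℝ)) (w.1, w.2, 0) ≤ K' * dist z w := by gcongr
    push_cast
    linarith
  refine ⟨v, r, L2 + K', hr0, hvl, ?_, ?_⟩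
  · have := (hα ((0 : ℝ), (0 : ℝ), (0 : ℝ)) (by simp [Prod.zero_eq_mk])).1
    simp [hv, this]
  · intro z hz
    obtain ⟨hz1, hz2⟩ := hin z hz
    have hz1' := ball_subset_closedBall hz1
    set p : ℝ × ℝ × ℝ := (z.1, z.2, 0) with hp
    have hp0 : α p 0 = p := (hα p hz1').1
    have hd0 : HasDerivAt (α p) (F p) 0 := by
      have := hder p hz1' 0 ⟨by linarith, hT0⟩
      rwa [hp0] at this
    have hq : Tendsto (fun s => ((α p s).1, (α p s).2.1, (0 : ℝ))) (𝓝 0) (𝓝 p) := by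
      have hc := hd0.continuousAt
      have : ContinuousAt (fun s => ((α p s).1, (α p s).2.1, (0 : ℝ))) 0 := by fun_prop
      have h2 := this.tendsto
      simpa only [hp0] using h2
    have hkey : (fun s => v ((α p s).1, (α p s).2.1)) =ᶠ[𝓝 0] fun s => v z + (α p s).2.2 := by
      have e1 : ∀ᶠ s in 𝓝 (0 : ℝ), |s| < T / 2 := by
        have : Tendsto (fun s : ℝ => |s|) (𝓝 0) (𝓝 |0|) := continuous_abs.tendsto 0
        exact this.eventually_lt_const (by simpa using hT0)
      have e2 : ∀ᶠ s in 𝓝 (0 : ℝ), |z.1 + s| < T / 2 := by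
        have : Tendsto (fun s : ℝ => |z.1 + s|) (𝓝 0) (𝓝 |z.1 + 0|) :=
          (Continuous.tendsto (by fun_prop) 0)
        exact this.eventually_lt_const (by simpa using hz2)
      filter_upwards [e1, e2, hq (isOpen_ball.mem_nhds hz1)] with s hs1 hs2 hs3
      have hs1' := abs_lt.1 hs1
      have hxs := hx p hz1' s ⟨by linarith, by linarith⟩
      have h3 := hshift p hz1' _ (ball_subset_closedBall hs3) s (α p s).2.2 hs1 (by simp)
        (-(z.1 + s)) (by rwa [abs_neg])
      have h4 : s + -(z.1 + s) = -z.1 := by ring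
      rw [h4] at h3
      have h5 := congrArg (fun p : ℝ × ℝ × ℝ => p.2.2) h3
      simp only [Prod.snd_add] at h5
      have h6 : (α p s).1 = z.1 + s := hxs
      simp only [hv]
      rw [← hp, ← h5, h6]
      ring
    have h1 : HasDerivAt (fun s => v ((α p s).1, (α p s).2.1)) (g z) 0 := by
      have := (hasDerivAt_comp_snd (hasDerivAt_comp_snd hd0)).const_add (v z)
      exact this.congr_of_eventuallyEq hkey
    have hc1 : HasDerivAt (fun s => ((α p s).1, (α p s).2.1)) (1, f z) 0 :=
      (hasDerivAt_comp_fst hd0).prodMk (hasDerivAt_comp_fst (hasDerivAt_comp_snd hd0))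
    have hc2 : HasDerivAt (fun s : ℝ => z + s • ((1 : ℝ), f z)) (1, f z) 0 := by
      have := ((hasDerivAt_id (0 : ℝ)).smul_const ((1 : ℝ), f z)).const_add z
      simpa using! this
    have h2 := lip_transfer hvl isOpen_ball hc1.hasDerivWithinAt hc2.hasDerivWithinAt
      (J := univ) (by rw [hp0]; simp [hp]) (by rw [hp0]; exact hz) h1.hasDerivWithinAt
    rw [hasDerivWithinAt_univ] at h2
    exact h2

lemma hasDerivAt_line {E : Type*} [NormedAddCommGroup E] [NormedSpace ℝ E] (z w : E) (t : ℝ) :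
    HasDerivAt (fun s : ℝ => z + (s - t) • w) w t := by
  have := (((hasDerivAt_id t).sub_const t).smul_const w).const_add z
  simpa using! this

lemma lineDeriv_along {E F : Type*} [NormedAddCommGroup E] [NormedSpace ℝ E]
    [NormedAddCommGroup F] [NormedSpace ℝ F] {Φ : E → F} {w' : F} {z w : E}
    (h : HasLineDerivAt ℝ Φ w' z w) (t : ℝ) :
    HasDerivAt (fun s : ℝ => Φ (z + (s - t) • w)) w' t := by
  have h2 : HasDerivAt (fun s : ℝ => Φ (z + s • w)) w' (t - t) := by
    rw [sub_self]; exact h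
  exact h2.comp_sub_const t t

/-- A bi-Lipschitz map straightening `X` (in the sense of line derivatives) gives an orbital
equivalence. -/
lemma equiv_of_straightening {X : ℝ × ℝ → ℝ × ℝ} {P0 : ℝ} (hP0 : P0 ≠ 0) {δ : ℝ × ℝ → ℝ}
    {Φ : ℝ × ℝ → ℝ × ℝ} {f' : (ℝ × ℝ) ≃L[ℝ] (ℝ × ℝ)} {s : Set (ℝ × ℝ)} {c : NNReal}
    (hs : IsOpen s) (h0s : (0, 0) ∈ s)
    (happ : ApproximatesLinearOn Φ (f' : ℝ × ℝ →L[ℝ] ℝ × ℝ) s c)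
    (hc : c < ‖(f'.symm : ℝ × ℝ →L[ℝ] ℝ × ℝ)‖₊⁻¹)
    (hΦ0 : Φ (0, 0) = (0, 0)) (hδ : ∀ z ∈ s, δ (Φ z) = 0 ↔ δ z = 0)
    {a : ℝ × ℝ → ℝ} (ha : ContinuousOn a s) (hpos : ∀ z ∈ s, 0 < a z / P0)
    (hline : ∀ z ∈ s, HasLineDerivAt ℝ Φ (a z, 0) z (X z)) :
    OrbitallyEquivAt X δ (0, 0) (fun _ => (P0, 0)) δ (0, 0) := by
  set H := happ.toOpenPartialHomeomorph Φ s (Or.inr hc) hs with hH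
  have hHinv := happ.to_inv (Or.inr hc)
  obtain ⟨K1, hK1⟩ : ∃ K, LipschitzOnWith K Φ s :=
    ⟨_, lipschitzOnWith_iff_restrict.2 happ.lipschitz⟩
  obtain ⟨K2, hK2⟩ : ∃ K, LipschitzOnWith K H.symm (Φ '' s) :=
    ⟨_, lipschitzOnWith_iff_restrict.2 hHinv.lipschitz⟩
  have hopen : IsOpen (Φ '' s) := H.open_target
  have hleft : ∀ z ∈ s, H.symm (Φ z) = z := fun z hz => H.left_inv hz
  have hright : ∀ z ∈ Φ '' s, Φ (H.symm z) = z := fun z hz => H.right_inv hz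
  have hmaps : ∀ z ∈ Φ '' s, H.symm z ∈ s := fun z hz => H.map_target hz
  refine ⟨s, Φ '' s, Φ, H.symm, hs, hopen, h0s, ⟨_, h0s, hΦ0⟩, hK1.continuousOn, hK2.continuousOn,
    mapsTo_image _ _, hmaps, hleft, hright, hΦ0, ?_, ?_, ?_⟩
  · ext y
    constructor
    · rintro ⟨z, ⟨hz1, hz2⟩, rfl⟩
      exact ⟨(hδ z hz2).2 hz1, z, hz2, rfl⟩
    · rintro ⟨hy, z, hz, rfl⟩
      exact ⟨z, ⟨(hδ z hz).1 hy, hz⟩, rfl⟩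
  · rintro J c ⟨hJ, hn, hcV, hcd⟩
    have hd : ∀ t ∈ J, HasDerivWithinAt (fun t => Φ (c t)) (a (c t), 0) J t := by
      intro t ht
      have hz := (hcV t ht).1
      exact lip_transfer hK1 hs (hasDerivAt_line (c t) (X (c t)) t).hasDerivWithinAt (hcd t ht)
        (by simp) (by simpa using hz) (lineDeriv_along (hline _ hz) t).hasDerivWithinAt
    set τ : ℝ → ℝ := fun t => (Φ (c t)).1 / P0 with hτ
    have hτd : ∀ t ∈ J, HasDerivWithinAt τ (a (c t) / P0) J t := fun t ht =>
      ((ContinuousLinearMap.fst ℝ ℝ ℝ).hasFDerivAt.comp_hasDerivWithinAt t (hd t ht)).div_const P0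
    have hm : StrictMonoOn τ J :=
      strictMonoOn_of_interval_deriv_pos hJ hτd fun t ht => hpos _ (hcV t ht).1
    have hτc : ContinuousOn τ J := fun t ht => (hτd t ht).continuousWithinAt
    obtain ⟨hJ', hn'⟩ := image_interval hJ hn hτc hm
    obtain ⟨t₀, ht₀⟩ := hn.nonempty
    have h2d : ∀ t ∈ J, HasDerivWithinAt (fun t => (Φ (c t)).2) 0 J t := fun t ht =>
      (ContinuousLinearMap.snd ℝ ℝ ℝ).hasFDerivAt.comp_hasDerivWithinAt t (hd t ht)
    have hconst : ∀ t ∈ J, (Φ (c t)).2 = (Φ (c t₀)).2 := by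
      intro t ht
      have := hJ.convex.norm_image_sub_le_of_norm_hasDerivWithin_le (C := 0) h2d
        (by simp) ht₀ ht
      simpa [sub_eq_zero] using this
    have heq : ∀ t ∈ J, Φ (c t) = (P0 * τ t, (Φ (c t₀)).2) := by
      intro t ht
      ext
      · simp only [hτ]; field_simp
      · exact hconst t ht
    refine ⟨τ '' J, fun s => (P0 * s, (Φ (c t₀)).2), τ, ⟨hJ', hn', ?_, ?_⟩, hτc, hm, rfl, heq⟩
    · rintro _ ⟨t, ht, rfl⟩
      simp only [← heq t ht]
      exact ⟨⟨_, (hcV t ht).1, rfl⟩, fun h => (hcV t ht).2 ((hδ _ (hcV t ht).1).1 h)⟩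
    · intro t _
      have := ((hasDerivAt_id t).const_mul P0).prodMk (hasDerivAt_const t (Φ (c t₀)).2)
      simp only [mul_one] at this
      exact this.hasDerivWithinAt
  · rintro J d ⟨hJ, hn, hdV, hdd⟩
    set e : ℝ → ℝ × ℝ := fun t => H.symm (d t) with he
    have hes : ∀ t ∈ J, e t ∈ s := fun t ht => hmaps _ (hdV t ht).1
    have hdc : ContinuousOn d J := fun t ht => (hdd t ht).continuousWithinAt
    have hec : ContinuousOn e J := hK2.continuousOn.comp hdc fun t ht => (hdV t ht).1
    have hane : ∀ z ∈ s, a z ≠ 0 := fun z hz h => by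
      have := hpos z hz
      simp [h] at this
    apply reparam_phase hJ hn (e := e) (μ := fun t => P0 / a (e t))
    · exact continuousOn_const.div (ha.comp hec hes) fun t ht => hane _ (hes t ht)
    · intro t ht
      rw [← inv_div]
      exact inv_pos.2 (hpos _ (hes t ht))
    · intro t ht
      refine ⟨hes t ht, fun h => (hdV t ht).2 ?_⟩
      have := (hδ _ (hes t ht)).2 h
      rwa [hright _ (hdV t ht).1] at this
    · intro t ht
      have hz := hes t ht
      have hΦe : Φ (e t) = d t := hright _ (hdV t ht).1
      set w : ℝ × ℝ := (P0 / a (e t)) • X (e t) with hw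
      have h1 : HasDerivAt (fun r : ℝ => e t + (r - t) • w) w t := hasDerivAt_line _ _ _
      have h2 : HasDerivAt (fun r : ℝ => Φ (e t + (r - t) • w)) (P0, 0) t := by
        have := lineDeriv_along ((hline _ hz).smul (P0 / a (e t))) t
        refine this.congr_deriv ?_
        simp [hane _ hz]
      have h3 : HasDerivAt (fun r : ℝ => H.symm (Φ (e t + (r - t) • w))) w t := by
        refine h1.congr_of_eventuallyEq ?_
        have : ∀ᶠ r in 𝓝 t, e t + (r - t) • w ∈ s :=
          h1.continuousAt (hs.mem_nhds (by simpa using hz))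
        filter_upwards [this] with r hr
        exact hleft _ hr
      exact lip_transfer hK2 hopen h2.hasDerivWithinAt (hdd t ht) (by simp [hΦe])
        (by rw [sub_self, zero_smul, add_zero]; exact ⟨e t, hz, rfl⟩) h3.hasDerivWithinAt

/-- A linear form times a Lipschitz function is strictly differentiable at `0`. -/
lemma strict_mul {E : Type*} [NormedAddCommGroup E] [NormedSpace ℝ E] {κ : E → ℝ} {C : NNReal}
    {V : Set E} (hV : V ∈ 𝓝 (0 : E)) (hκ : LipschitzOnWith C κ V) (ℓ : E →L[ℝ] ℝ) :
    HasStrictFDerivAt (fun z => ℓ z * κ z) (κ 0 • ℓ) 0 := by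
  rw [hasStrictFDerivAt_iff_isLittleO, Asymptotics.isLittleO_iff]
  intro b hb
  set M : ℝ := 2 * ‖ℓ‖ * C + 1 with hM
  have hM0 : 0 < M := by positivity
  have hball : V ∩ ball 0 (b / M) ∈ 𝓝 (0 : E) :=
    inter_mem hV (ball_mem_nhds _ (by positivity))
  filter_upwards [prod_mem_nhds hball hball] with p hp
  obtain ⟨⟨hz, hz'⟩, ⟨hw, hw'⟩⟩ := hp
  obtain ⟨z, w⟩ := p
  simp only at hz hz' hw hw' ⊢
  rw [mem_ball_zero_iff] at hz' hw'
  have e : ℓ z * κ z - ℓ w * κ w - (κ 0 • ℓ) (z - w)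
      = ℓ (z - w) * (κ z - κ 0) + ℓ w * (κ z - κ w) := by
    simp only [map_sub, smul_apply, smul_eq_mul]; ring
  rw [e]
  have h0 : (0 : E) ∈ V := mem_of_mem_nhds hV
  have b1 : ‖ℓ (z - w) * (κ z - κ 0)‖ ≤ (‖ℓ‖ * ‖z - w‖) * (C * ‖z‖) := by
    rw [norm_mul]
    have := hκ.norm_sub_le hz h0
    rw [sub_zero] at this
    gcongr
    exact ℓ.le_opNorm _
  have b2 : ‖ℓ w * (κ z - κ w)‖ ≤ (‖ℓ‖ * ‖w‖) * (C * ‖z - w‖) := by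
    rw [norm_mul]
    have := hκ.norm_sub_le hz hw
    gcongr
    exact ℓ.le_opNorm _
  calc _ ≤ (‖ℓ‖ * ‖z - w‖) * (C * ‖z‖) + (‖ℓ‖ * ‖w‖) * (C * ‖z - w‖) :=
        (norm_add_le _ _).trans (add_le_add b1 b2)
    _ ≤ (‖ℓ‖ * ‖z - w‖) * (C * (b / M)) + (‖ℓ‖ * (b / M)) * (C * ‖z - w‖) := by gcongr
    _ = (2 * ‖ℓ‖ * C / M) * b * ‖z - w‖ := by ring
    _ ≤ 1 * b * ‖z - w‖ := by
        gcongr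
        rw [div_le_one hM0]; linarith
    _ = b * ‖z - w‖ := by ring

/-- Composition of a Lipschitz function with an exponential is locally Lipschitz. -/
lemma exp_lip {E : Type*} [NormedAddCommGroup E] [NormedSpace ℝ E] {v : E → ℝ} {C : NNReal}
    {V : Set E} (hV : V ∈ 𝓝 (0 : E)) (hv : LipschitzOnWith C v V) (b : ℝ) :
    ∃ V' ∈ 𝓝 (0 : E), ∃ C', LipschitzOnWith C' (fun z => Real.exp (b * v z)) V' := by
  have hd : ContDiffAt ℝ 1 (fun x : ℝ => Real.exp (b * x)) (v 0) := by fun_prop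
  obtain ⟨K, s, hs, hl⟩ := hd.exists_lipschitzOnWith
  have hc : ContinuousAt v 0 := hv.continuousOn.continuousAt hV
  exact ⟨V ∩ v ⁻¹' s, inter_mem hV (hc hs), K * C,
    hl.comp (hv.mono inter_subset_left) fun z hz => hz.2⟩

/-- (`D_k`-type impasse curve, `k ≥ 4`, Case 4 of Table 2.)
If `δ(x,y) = x²y + ε·y^{k−1}` and `X = (P,Q)` is real-analytic near the origin with
`P(0,0) ≠ 0` and `Q(x,0) = 0` for all `x` near `0`, then `(X, δ)` is orientation-preserving
`C⁰`-orbitally equivalent at the origin to the system with constant adjoint vector field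
`(P(0,0), Q(0,0))`. -/
theorem Dk_case4 (k : ℕ) (hk : 4 ≤ k) (ε : ℝ) (hε : ε = 1 ∨ ε = -1)
    (P Q : ℝ × ℝ → ℝ)
    (hP : AnalyticAt ℝ P (0, 0)) (hQ : AnalyticAt ℝ Q (0, 0))
    (hP0 : P (0, 0) ≠ 0)
    (hQ0 : ∀ᶠ x in nhds (0 : ℝ), Q (x, 0) = 0) :
    OrbitallyEquivAt (fun z => (P z, Q z))
      (fun z => z.1 ^ 2 * z.2 + ε * z.2 ^ (k - 1)) (0, 0)
      (fun _ => (P (0, 0), Q (0, 0)))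
      (fun z => z.1 ^ 2 * z.2 + ε * z.2 ^ (k - 1)) (0, 0) := by
  have hQ00 : Q (0, 0) = 0 := hQ0.self_of_nhds
  rw [hQ00]
  set f : ℝ × ℝ → ℝ := fun z => Q z / P z with hf
  have hfa : AnalyticAt ℝ f (0, 0) := hQ.div hP hP0
  have hf0 : ∀ᶠ x in 𝓝 (0 : ℝ), f (x, 0) = 0 := hQ0.mono fun x hx => by simp [hf, hx]
  obtain ⟨g, r1, Kg, hr1, hgl, hfg⟩ := hadamard_factor hfa hf0
  obtain ⟨Kf, sf, hsf, hfl⟩ := (hfa.contDiffAt (n := 1)).exists_lipschitzOnWith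
  obtain ⟨f1, hf1, hff1⟩ := hfl.extend_real
  obtain ⟨g1, hg1, hgg1⟩ := hgl.extend_real
  obtain ⟨v, r2, Kv, hr2, hvl, hv0, hvd⟩ := transport_sol hf1 hg1
  have hPev : ∀ᶠ z in 𝓝 ((0 : ℝ), (0 : ℝ)), ContinuousAt P z :=
    hP.eventually_analyticAt.mono fun z hz => hz.continuousAt
  have hPne : ∀ᶠ z in 𝓝 ((0 : ℝ), (0 : ℝ)), P z ≠ 0 := hP.continuousAt.eventually_ne hP0
  set β : ℝ := ((k - 2 : ℕ) : ℝ) / 2 with hβ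
  set Φ : ℝ × ℝ → ℝ × ℝ := fun z =>
    (z.1 * Real.exp (-β * v z), z.2 * Real.exp (-1 * v z)) with hΦ
  set a : ℝ × ℝ → ℝ := fun z =>
    Real.exp (-β * v z) * (P z * (1 - z.1 * (β * g1 z))) with ha
  have hvball : ball ((0 : ℝ), (0 : ℝ)) r2 ∈ 𝓝 (0 : ℝ × ℝ) := ball_mem_nhds _ hr2
  -- strict differentiability
  have hstrict : HasStrictFDerivAt Φ
      ((ContinuousLinearEquiv.refl ℝ (ℝ × ℝ) : (ℝ × ℝ) ≃L[ℝ] (ℝ × ℝ)) : ℝ × ℝ →L[ℝ] ℝ × ℝ) 0 := by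
    obtain ⟨V1, hV1, C1, hC1⟩ := exp_lip hvball hvl (-β)
    obtain ⟨V2, hV2, C2, hC2⟩ := exp_lip hvball hvl (-1)
    have h1 := strict_mul hV1 hC1 (ContinuousLinearMap.fst ℝ ℝ ℝ)
    have h2 := strict_mul hV2 hC2 (ContinuousLinearMap.snd ℝ ℝ ℝ)
    have h3 := h1.prodMk h2
    have hv0' : v 0 = 0 := hv0
    refine h3.congr_fderiv ?_
    ext <;> simp [hv0']
  obtain ⟨s, h0s, hs, happ⟩ := hstrict.approximates_deriv_on_open_nhds
  have hg1c : Continuous g1 := hg1.continuous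
  -- positivity near the origin
  have hpos : ∀ᶠ z in 𝓝 ((0 : ℝ), (0 : ℝ)), 0 < a z / P (0, 0) := by
    have hvc : ContinuousAt v (0, 0) := hvl.continuousOn.continuousAt (ball_mem_nhds _ hr2)
    have hPc := hP.continuousAt
    have hc : ContinuousAt (fun z => a z / P (0, 0)) (0, 0) := by
      simp only [ha]
      fun_prop
    refine hc.eventually (lt_mem_nhds ?_)
    simp [ha, hv0, hP0]
  have hW : ∀ᶠ z in 𝓝 ((0 : ℝ), (0 : ℝ)), z ∈ s ∧ z ∈ ball ((0 : ℝ), (0 : ℝ)) r1 ∧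
      z ∈ ball ((0 : ℝ), (0 : ℝ)) r2 ∧ z ∈ sf ∧ ContinuousAt P z ∧ P z ≠ 0 ∧
      0 < a z / P (0, 0) := by
    filter_upwards [hs.mem_nhds h0s, ball_mem_nhds _ hr1, ball_mem_nhds _ hr2, hsf, hPev, hPne,
      hpos] with z h1 h2 h3 h4 h5 h6 h7
    exact ⟨h1, h2, h3, h4, h5, h6, h7⟩
  obtain ⟨W, hWs, hWo, h0W⟩ := _root_.eventually_nhds_iff.1 hW
  refine equiv_of_straightening (Φ := Φ) (s := W) (a := a) hP0 hWo h0W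
    (happ.mono_set fun z hz => (hWs z hz).1) ?_ (by simp [hΦ]) ?_ ?_
    (fun z hz => (hWs z hz).2.2.2.2.2.2) ?_
  · refine NNReal.half_lt_self (inv_ne_zero ?_)
    simp
  · intro z hz
    obtain ⟨m, rfl⟩ : ∃ m, k = m + 2 := ⟨k - 2, by omega⟩
    have e1 : Real.exp (-β * v z) ^ 2 = Real.exp (-1 * v z) ^ m := by
      rw [← Real.exp_nat_mul, ← Real.exp_nat_mul]
      congr 1
      simp only [hβ, Nat.add_sub_cancel]
      push_cast
      ring
    have e2 : (z.1 * Real.exp (-β * v z)) ^ 2 * (z.2 * Real.exp (-1 * v z))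
        + ε * (z.2 * Real.exp (-1 * v z)) ^ (m + 2 - 1)
        = Real.exp (-1 * v z) ^ (m + 1) * (z.1 ^ 2 * z.2 + ε * z.2 ^ (m + 2 - 1)) := by
      have : m + 2 - 1 = m + 1 := by omega
      rw [this, mul_pow, e1, mul_pow]
      ring
    simp only [hΦ]
    rw [e2, mul_eq_zero]
    simp
  · intro z hz
    obtain ⟨h1, h2, h3, h4, h5, h6, h7⟩ := hWs z hz
    have hvc : ContinuousAt v z := hvl.continuousOn.continuousAt (isOpen_ball.mem_nhds h3)
    apply ContinuousAt.continuousWithinAt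
    simp only [ha]
    fun_prop
  · intro z hz
    obtain ⟨h1, h2, h3, h4, h5, h6, h7⟩ := hWs z hz
    have hX : P z • ((1 : ℝ), f1 z) = (P z, Q z) := by
      rw [← hff1 h4]
      simp only [hf, Prod.smul_mk, smul_eq_mul, mul_one]
      congr 1
      field_simp
    have hvX : HasLineDerivAt ℝ v (P z * g1 z) z (P z, Q z) := by
      have := (hvd z h3).smul (P z)
      rwa [hX] at this
    have hv' : HasDerivAt (fun t : ℝ => v (z + t • (P z, Q z))) (P z * g1 z) 0 := hvX
    have hQz : Q z = z.2 * (P z * g1 z) := by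
      have := hfg z h2
      rw [hgg1 h2] at this
      simp only [hf] at this
      rw [div_eq_iff h6] at this
      rw [this]; ring
    have hx' : HasDerivAt (fun t : ℝ => z.1 + t * P z) (P z) 0 := by
      simpa using! ((hasDerivAt_id (0 : ℝ)).mul_const (P z)).const_add z.1
    have hy' : HasDerivAt (fun t : ℝ => z.2 + t * Q z) (Q z) 0 := by
      simpa using! ((hasDerivAt_id (0 : ℝ)).mul_const (Q z)).const_add z.2
    have hA := hx'.mul (hv'.const_mul (-β)).exp
    have hB := hy'.mul (hv'.const_mul (-1)).exp
    have hAB := hA.prodMk hB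
    refine HasDerivAt.congr_deriv (f' := _) hAB ?_
    ext
    · simp [ha]; ring
    · simp [hQz]; ring
end

section
/- Let k ≥ 4 be an integer, ε ∈ {1, −1}, and δ(x, y) = x²y + ε·y^{k−1} (a D_k-type singular impasse curve). Let X = (P, Q) be real-analytic on a neighborhood of the origin in ℝ² with P(0,0) = 0, Q(0,0) ≠ 0, and such that (∂ⁿP/∂yⁿ)(0,0) = 0 for every integer n with 1 ≤ 2n ≤ k − 4 (equivalently, the order of vanishing n₀ of y ↦ P(0, y) at 0 satisfies k − 4 < 2n₀). Then the constrained system (X, δ) is orientation-preserving C⁰-orbitally equivalent at (0, 0) to the constrained system (Y, δ), where Y is the constant vector field Y ≡ (0, Q(0,0)). -/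
open Set Filter Topology

/-- Gronwall on an arbitrary interval. -/
lemma dk_gronwall {J : Set ℝ} (hJ : J.OrdConnected) {w w' : ℝ → ℝ} {C : ℝ}
    (hw : ∀ t ∈ J, HasDerivWithinAt w (w' t) J t) (hb : ∀ t ∈ J, |w' t| ≤ C * |w t|)
    {t₀ t : ℝ} (h₀ : t₀ ∈ J) (ht : t ∈ J) : |w t| ≤ |w t₀| * Real.exp (C * |t - t₀|) := by
  rcases le_total t₀ t with h | h
  · have hsub : Icc t₀ t ⊆ J := hJ.out h₀ ht
    have := norm_le_gronwallBound_of_norm_deriv_right_le (f := w) (f' := w') (δ := |w t₀|) (K := C)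
      (ε := 0) (a := t₀) (b := t)
      (fun x hx => ((hw x (hsub hx)).continuousWithinAt).mono hsub)
      (fun x hx => by
        refine ((hw x (hsub ⟨hx.1, hx.2.le⟩)).mono hsub).mono_of_mem_nhdsWithin ?_
        exact Filter.mem_of_superset (Icc_mem_nhdsGE hx.2) (Icc_subset_Icc_left hx.1))
      le_rfl (fun x hx => by simpa using hb x (hsub ⟨hx.1, hx.2.le⟩)) t ⟨h, le_rfl⟩
    rw [gronwallBound_ε0] at this
    rwa [abs_of_nonneg (sub_nonneg.2 h)]
  · have hsub : Icc t t₀ ⊆ J := hJ.out ht h₀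
    have hd : ∀ x ∈ Icc (-t₀) (-t),
        HasDerivWithinAt (fun u => w (-u)) (-(w' (-x))) (Icc (-t₀) (-t)) x := by
      intro x hx
      have h1 : -x ∈ Icc t t₀ := ⟨by linarith [hx.2], by linarith [hx.1]⟩
      have h2 := (hw (-x) (hsub h1)).mono hsub
      have h3 := HasDerivWithinAt.comp (h := fun u : ℝ => -u) (s := Icc (-t₀) (-t)) x h2
        (hasDerivWithinAt_neg x _) (fun u hu => ⟨by linarith [hu.2], by linarith [hu.1]⟩)
      exact h3.congr_deriv (by ring)
    have := norm_le_gronwallBound_of_norm_deriv_right_le (f := fun u => w (-u))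
      (f' := fun x => -(w' (-x))) (δ := |w t₀|) (K := C)
      (ε := 0) (a := -t₀) (b := -t)
      (fun x hx => (hd x hx).continuousWithinAt)
      (fun x hx => by
        refine (hd x ⟨hx.1, hx.2.le⟩).mono_of_mem_nhdsWithin ?_
        exact Filter.mem_of_superset (Icc_mem_nhdsGE hx.2) (Icc_subset_Icc_left hx.1))
      (by simp) (fun x hx => by
        have := hb (-x) (hsub ⟨by linarith [hx.2], by linarith [hx.1]⟩)
        simpa using this) (-t) ⟨by linarith, le_rfl⟩
    rw [gronwallBound_ε0] at this
    rw [abs_of_nonpos (sub_nonpos.2 h)]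
    simp only [neg_neg, Real.norm_eq_abs] at this
    convert this using 3
    ring

/-- A global flow of the scalar ODE `dx/dy = f (x, y)` started at `y = 0`, with its inverse. -/
structure DkFlow (f : ℝ × ℝ → ℝ) (φ h : ℝ → ℝ → ℝ) : Prop where
  zero : ∀ s, φ s 0 = s
  der : ∀ s y, HasDerivAt (φ s) (f (φ s y, y)) y
  contφ : Continuous fun z : ℝ × ℝ => φ z.1 z.2
  conth : Continuous fun z : ℝ × ℝ => h z.1 z.2
  right : ∀ x y, φ (h x y) y = x
  left : ∀ s y, h (φ s y) y = s
  mono : ∀ y, StrictMono fun s => φ s y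

lemma dk_exists_sol (f : ℝ × ℝ → ℝ) (K M : ℝ) (hc : Continuous f)
    (hK : ∀ x x' y, |f (x, y) - f (x', y)| ≤ K * |x - x'|) (hM : ∀ z, |f z| ≤ M) (s : ℝ) :
    ∃ u : ℝ → ℝ, u 0 = s ∧ ∀ y, HasDerivAt u (f (u y, y)) y := by
  have hM0 : 0 ≤ M := (abs_nonneg _).trans (hM 0)
  have hK0 : 0 ≤ K := by simpa using (abs_nonneg _).trans (hK 1 0 0)
  have key : ∀ T : ℝ, 0 < T → ∃ u : ℝ → ℝ, u 0 = s ∧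
      ∀ y ∈ Ioo (-T) T, HasDerivAt u (f (u y, y)) y := by
    intro T hT
    have hpl : IsPicardLindelof (fun t x => f (x, t)) (tmin := -T) (tmax := T)
        ⟨0, by constructor <;> linarith⟩ s (⟨M * T, by positivity⟩) 0 ⟨M, hM0⟩ ⟨K, hK0⟩ := by
      refine ⟨?_, ?_, ?_, ?_⟩
      · intro t _
        refine LipschitzOnWith.of_dist_le_mul ?_
        intro x _ x' _
        rw [Real.dist_eq, Real.dist_eq]
        exact hK x x' t
      · intro x _
        fun_prop
      · intro t _ x _
        exact hM _
      · simp only [sub_zero, zero_sub, neg_neg, max_self, NNReal.coe_zero]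
        exact le_rfl
    obtain ⟨u, hu0, hu⟩ := hpl.exists_eq_forall_mem_Icc_hasDerivWithinAt₀
    refine ⟨u, hu0, fun y hy => ?_⟩
    exact (hu y ⟨hy.1.le, hy.2.le⟩).hasDerivAt (Icc_mem_nhds hy.1 hy.2)
  have key2 : ∀ n : ℕ, ∃ u : ℝ → ℝ, u 0 = s ∧
      ∀ y ∈ Ioo (-((n : ℝ) + 1)) ((n : ℝ) + 1), HasDerivAt u (f (u y, y)) y :=
    fun n => key _ (by positivity)
  choose u hu0 hu using key2
  have agree : ∀ m n : ℕ, m ≤ n → ∀ y ∈ Ioo (-((m : ℝ) + 1)) ((m : ℝ) + 1), u m y = u n y := by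
    intro m n hmn y hy
    have hmn' : (m : ℝ) ≤ n := by exact_mod_cast hmn
    have := dk_gronwall (J := Ioo (-((m : ℝ) + 1)) ((m : ℝ) + 1)) ordConnected_Ioo
      (w := fun y => u m y - u n y) (w' := fun y => f (u m y, y) - f (u n y, y)) (C := K)
      (fun t ht => ((hu m t ht).sub (hu n t ⟨by linarith [ht.1], by linarith [ht.2]⟩)).hasDerivWithinAt)
      (fun t ht => hK _ _ _) (t₀ := 0) (t := y) ⟨by linarith [hy.1, hy.2], by linarith [hy.1, hy.2]⟩ hy
    simp only [hu0, sub_self, abs_zero, zero_mul] at this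
    linarith [abs_nonpos_iff.1 this]
  refine ⟨fun y => u ⌈|y|⌉₊ y, by simp [hu0], fun y => ?_⟩
  set N := ⌈|y|⌉₊ + 1 with hN
  have hyN : |y| < N := by
    have := Nat.le_ceil |y|
    push_cast [hN]; linarith
  have hyN' := abs_lt.1 hyN
  have heq : ∀ z ∈ Ioo (-(N : ℝ)) N, u ⌈|z|⌉₊ z = u N z := by
    intro z hz
    have hz1 : |z| < N := abs_lt.2 ⟨hz.1, hz.2⟩
    have hz2 := abs_lt.1 (lt_of_le_of_lt (Nat.le_ceil |z|) (lt_add_one _))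
    exact agree _ _ (Nat.ceil_le.2 hz1.le) z ⟨hz2.1, hz2.2⟩
  have h1 := hu N y ⟨by linarith, by linarith⟩
  simp only []
  rw [heq y ⟨hyN'.1, hyN'.2⟩]
  refine h1.congr_of_eventuallyEq ?_
  filter_upwards [Ioo_mem_nhds hyN'.1 hyN'.2] with z hz using heq z hz

lemma dk_exists_flow (f : ℝ × ℝ → ℝ) (K M : ℝ) (hc : Continuous f)
    (hK : ∀ x x' y, |f (x, y) - f (x', y)| ≤ K * |x - x'|) (hM : ∀ z, |f z| ≤ M) :
    ∃ φ h : ℝ → ℝ → ℝ, DkFlow f φ h ∧ ∀ s y, |φ s y - s| ≤ M * |y| := by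
  choose φ h0 hd using dk_exists_sol f K M hc hK hM
  have gr : ∀ s s' y y', |φ s y - φ s' y| ≤ |φ s y' - φ s' y'| * Real.exp (K * |y - y'|) := by
    intro s s' y y'
    exact dk_gronwall (J := univ) ordConnected_univ
      (w := fun y => φ s y - φ s' y) (w' := fun y => f (φ s y, y) - f (φ s' y, y)) (C := K)
      (fun t _ => ((hd s t).sub (hd s' t)).hasDerivWithinAt) (fun t _ => hK _ _ _) (mem_univ _)
      (mem_univ _)
  have lipy : ∀ s y y', |φ s y - φ s y'| ≤ M * |y - y'| := by
    intro s y y'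
    have := Convex.norm_image_sub_le_of_norm_hasDerivWithin_le (f := φ s)
      (f' := fun y => f (φ s y, y)) (C := M) (s := univ) (x := y') (y := y)
      (fun x _ => (hd s x).hasDerivWithinAt) (fun x _ => hM _) convex_univ (mem_univ _) (mem_univ _)
    simpa using this
  have bd : ∀ s y, |φ s y - s| ≤ M * |y| := by
    intro s y
    have := lipy s y 0
    simpa [h0] using this
  have contφ : Continuous fun z : ℝ × ℝ => φ z.1 z.2 := by
    rw [continuous_iff_continuousAt]
    rintro ⟨s, y⟩
    have hlim : Tendsto (fun z : ℝ × ℝ => |z.1 - s| * Real.exp (K * |z.2|) + M * |z.2 - y|)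
        (𝓝 (s, y)) (𝓝 0) := by
      have : Continuous (fun z : ℝ × ℝ => |z.1 - s| * Real.exp (K * |z.2|) + M * |z.2 - y|) := by
        fun_prop
      simpa using this.tendsto (s, y)
    rw [ContinuousAt, tendsto_iff_dist_tendsto_zero]
    refine squeeze_zero (fun _ => dist_nonneg) (fun z => ?_) hlim
    rw [Real.dist_eq]
    have h1 := gr z.1 s z.2 0
    have h2 := lipy s z.2 y
    simp only [h0, sub_zero] at h1
    calc |φ z.1 z.2 - φ s y| = |(φ z.1 z.2 - φ s z.2) + (φ s z.2 - φ s y)| := by ring_nf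
      _ ≤ _ := (abs_add_le _ _).trans (add_le_add h1 h2)
  have contφ1 : ∀ y, Continuous fun s => φ s y := fun y =>
    contφ.comp (by fun_prop : Continuous fun s : ℝ => (s, y))
  have inv : ∀ s s' y, |s - s'| ≤ |φ s y - φ s' y| * Real.exp (K * |y|) := by
    intro s s' y
    have := gr s s' 0 y
    simpa [h0] using this
  have inj : ∀ y, Function.Injective fun s => φ s y := by
    intro y s s' hs
    have := inv s s' y
    simp only at hs
    rw [hs, sub_self, abs_zero, zero_mul] at this
    linarith [abs_nonpos_iff.1 this]
  have surj : ∀ y, Function.Surjective fun s => φ s y := by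
    intro y
    refine (contφ1 y).surjective ?_ ?_
    · refine tendsto_atTop_mono (f := fun s => s - M * |y|) (fun s => ?_)
        (tendsto_atTop_add_const_right _ _ tendsto_id)
      linarith [(abs_le.1 (bd s y)).1]
    · refine tendsto_atBot_mono (f := fun s => s + M * |y|) (fun s => ?_)
        (tendsto_atBot_add_const_right _ _ tendsto_id)
      linarith [(abs_le.1 (bd s y)).2]
  have mono : ∀ y, StrictMono fun s => φ s y := by
    intro y
    rcases (contφ1 y).strictMono_of_inj (inj y) with h | h
    · exact h
    · exfalso
      have hM0 : 0 ≤ M := (abs_nonneg _).trans (hM 0)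
      have h1 := h (show (0:ℝ) < 2 * M * |y| + 1 by positivity)
      simp only at h1
      linarith [(abs_le.1 (bd 0 y)).2, (abs_le.1 (bd (2 * M * |y| + 1) y)).1]
  choose h' hh' using surj
  refine ⟨φ, fun x y => h' y x, ⟨h0, hd, contφ, ?_, fun x y => hh' y x, fun s y => inj y (hh' y _), mono⟩, bd⟩
  rw [continuous_iff_continuousAt]
  rintro ⟨x, y⟩
  have hlim : Tendsto (fun z : ℝ × ℝ => |z.1 - φ (h' y x) z.2| * Real.exp (K * |z.2|))
        (𝓝 (x, y)) (𝓝 0) := by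
    have h1 : Continuous fun z : ℝ × ℝ => φ (h' y x) z.2 :=
      contφ.comp (by fun_prop : Continuous fun z : ℝ × ℝ => (h' y x, z.2))
    have : Continuous (fun z : ℝ × ℝ => |z.1 - φ (h' y x) z.2| * Real.exp (K * |z.2|)) := by
      fun_prop
    have h2 := this.tendsto (x, y)
    have h3 := hh' y x
    simp only at h3
    simpa [h3] using h2
  rw [ContinuousAt, tendsto_iff_dist_tendsto_zero]
  refine squeeze_zero (fun _ => dist_nonneg) (fun z => ?_) hlim
  rw [Real.dist_eq]
  have h1 := inv (h' z.2 z.1) (h' y x) z.2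
  have h3 := hh' z.2 z.1
  simp only at h3
  rwa [h3] at h1

lemma dk_sq_one {σ : ℝ} (h : σ = 1 ∨ σ = -1) : σ * σ = 1 := by
  rcases h with rfl | rfl <;> norm_num

lemma DkFlow.reflect {f : ℝ × ℝ → ℝ} {φ h : ℝ → ℝ → ℝ} (F : DkFlow f φ h) {σ τ : ℝ}
    (hσ : σ = 1 ∨ σ = -1) :
    DkFlow (fun z => σ * τ * f (σ * z.1, τ * z.2)) (fun s y => σ * φ (σ * s) (τ * y))
      (fun x y => σ * h (σ * x) (τ * y)) := by
  have h1 := dk_sq_one hσ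
  have e : ∀ x, σ * (σ * x) = x := fun x => by rw [← mul_assoc, h1, one_mul]
  refine ⟨?_, ?_, ?_, ?_, ?_, ?_, ?_⟩
  · intro s; simp [F.zero, e]
  · intro s y
    have h2 := ((F.der (σ * s) (τ * y)).comp y ((hasDerivAt_id y).const_mul τ)).const_mul σ
    simp only [e]
    exact h2.congr_deriv (by ring)
  · have := F.contφ.comp (by fun_prop : Continuous fun z : ℝ × ℝ => (σ * z.1, τ * z.2))
    exact continuous_const.mul this
  · have := F.conth.comp (by fun_prop : Continuous fun z : ℝ × ℝ => (σ * z.1, τ * z.2))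
    exact continuous_const.mul this
  · intro x y; simp only [e, F.right]
  · intro s y; simp only [e, F.left]
  · intro y s s' hs
    have := F.mono (τ * y)
    rcases hσ with rfl | rfl
    · simpa using this hs
    · have := this (neg_lt_neg hs)
      simp only at this
      simp only [neg_mul, one_mul]
      linarith

lemma dk_quadrant {f : ℝ × ℝ → ℝ} {φ h : ℝ → ℝ → ℝ} (F : DkFlow f φ h) {m ρ : ℝ} (hm : 1 ≤ m)
    (hρ : 0 < ρ) (hlt : ∀ y, 0 < y → y ≤ ρ → f (y ^ m, y) < m * y ^ (m - 1)) :
    ∃ p : ℝ → ℝ, Continuous p ∧ StrictMono p ∧ p 0 = 0 ∧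
      ∀ s y, 0 < y → y ≤ ρ → (y = p s ↔ φ s y = y ^ m) := by
  have cB : Continuous fun y : ℝ => y ^ m := continuous_id.rpow_const (fun _ => Or.inr (by linarith))
  obtain ⟨a, ha⟩ : ∃ a : ℝ → ℝ, a = fun y => h (y ^ m) y := ⟨_, rfl⟩
  have ca : Continuous a := by
    rw [ha]
    exact F.conth.comp (cB.prodMk continuous_id)
  have φa : ∀ y, φ (a y) y = y ^ m := fun y => by rw [ha]; exact F.right _ _
  have a0 : a 0 = 0 := by
    rw [ha]
    have := F.left 0 0
    rw [F.zero] at this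
    simpa [Real.zero_rpow (show m ≠ 0 by linarith)] using this
  have dB : ∀ y : ℝ, 0 < y → HasDerivAt (fun y : ℝ => y ^ m) (m * y ^ (m - 1)) y := fun y hy =>
    Real.hasDerivAt_rpow_const (Or.inl hy.ne')
  have mono : ∀ y₁ y₂, 0 < y₁ → y₁ ≤ y₂ → y₂ ≤ ρ → a y₁ ≤ a y₂ := by
    intro y₁ y₂ h1 h12 h2
    have := image_le_of_deriv_right_lt_deriv_boundary' (f := φ (a y₁))
      (f' := fun y => f (φ (a y₁) y, y)) (a := y₁) (b := y₂)
      (fun y _ => (F.der _ y).continuousAt.continuousWithinAt)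
      (fun y _ => (F.der _ y).hasDerivWithinAt)
      (B := fun y => y ^ m) (B' := fun y => m * y ^ (m - 1)) (φa y₁).le
      cB.continuousOn (fun y hy => (dB y (h1.trans_le hy.1)).hasDerivWithinAt)
      (fun y hy he => by
        rw [he]; exact hlt y (h1.trans_le hy.1) (hy.2.le.trans h2)) (x := y₂) ⟨h12, le_rfl⟩
    rw [← φa y₂] at this
    exact (F.mono y₂).le_iff_le.1 this
  have smono : ∀ y₁ y₂, 0 < y₁ → y₁ < y₂ → y₂ ≤ ρ → a y₁ < a y₂ := by
    intro y₁ y₂ h1 h12 h2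
    refine lt_of_le_of_ne (mono y₁ y₂ h1 h12.le h2) (fun he => ?_)
    have hc : ∀ y ∈ Icc y₁ y₂, φ (a y₁) y = y ^ m := by
      intro y hy
      have : a y = a y₁ := le_antisymm
        (he ▸ mono y y₂ (h1.trans_le hy.1) hy.2 h2) (mono y₁ y h1 hy.1 (hy.2.trans h2))
      rw [← this, φa]
    have d1 := (F.der (a y₁) y₁).hasDerivWithinAt (s := Icc y₁ y₂)
    have d2 := ((dB y₁ h1).hasDerivWithinAt (s := Icc y₁ y₂)).congr hc (hc _ ⟨le_rfl, h12.le⟩)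
    have := (uniqueDiffOn_Icc h12 y₁ ⟨le_rfl, h12.le⟩).eq_deriv _ d1 d2
    rw [φa] at this
    exact absurd this (hlt y₁ h1 (h12.le.trans h2)).ne
  have apos : ∀ y, 0 < y → y ≤ ρ → 0 < a y := by
    intro y h0 h1
    have : a 0 ≤ a (y / 2) := by
      have ht : Tendsto a (𝓝[>] 0) (𝓝 (a 0)) := (ca.tendsto 0).mono_left nhdsWithin_le_nhds
      refine le_of_tendsto ht ?_
      filter_upwards [Ioc_mem_nhdsGT (show (0:ℝ) < y / 2 by linarith)] with z hz
      exact mono z (y / 2) hz.1 hz.2 (by linarith)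
    have h2 := smono (y / 2) y (by linarith) (by linarith) h1
    linarith
  have smono' : ∀ y₁ y₂, 0 ≤ y₁ → y₁ < y₂ → y₂ ≤ ρ → a y₁ < a y₂ := by
    intro y₁ y₂ h1 h12 h2
    rcases h1.eq_or_lt with rfl | h1
    · rw [a0]; exact apos _ h12 h2
    · exact smono _ _ h1 h12 h2
  obtain ⟨k, hk⟩ : ∃ k : ℝ → ℝ, k = fun y => max 0 (min y ρ) := ⟨_, rfl⟩
  have k0 : ∀ y, 0 ≤ k y := fun y => by rw [hk]; exact le_max_left _ _
  have kρ : ∀ y, k y ≤ ρ := fun y => by rw [hk]; exact max_le hρ.le (min_le_right _ _)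
  have kid : ∀ y, 0 ≤ y → y ≤ ρ → k y = y := fun y h1 h2 => by
    rw [hk]; simp [h1, h2]
  have anonneg : ∀ y, 0 ≤ a (k y) := fun y => by
    rcases (k0 y).eq_or_lt with h1 | h1
    · rw [← h1, a0]
    · exact (apos _ h1 (kρ y)).le
  have ale : ∀ y, a (k y) ≤ a ρ := fun y => by
    rcases (kρ y).eq_or_lt with h1 | h1
    · rw [h1]
    · exact (smono' _ _ (k0 y) h1 le_rfl).le
  obtain ⟨A, hA⟩ : ∃ A : ℝ → ℝ, A = fun y => a (k y) + (y - k y) := ⟨_, rfl⟩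
  have ck : Continuous k := by rw [hk]; fun_prop
  have cA : Continuous A := by
    rw [hA]; exact (ca.comp ck).add (continuous_id.sub ck)
  have sA : StrictMono A := by
    intro y₁ y₂ h12
    have hkk : k y₁ ≤ k y₂ ∧ k y₂ - k y₁ ≤ y₂ - y₁ := by
      rw [hk]
      constructor
      · exact max_le_max le_rfl (min_le_min h12.le le_rfl)
      · simp only
        grind
    rw [hA]
    simp only
    rcases hkk.1.eq_or_lt with h1 | h1
    · rw [h1]; linarith
    · have := smono' _ _ (k0 y₁) h1 (kρ y₂)
      linarith
  have surjA : Function.Surjective A := by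
    refine cA.surjective ?_ ?_
    · refine tendsto_atTop_mono (f := fun s => s - ρ) (fun s => ?_)
        (tendsto_atTop_add_const_right _ _ tendsto_id)
      rw [hA]; simp only; linarith [anonneg s, kρ s]
    · refine tendsto_atBot_mono (f := fun s => s + a ρ) (fun s => ?_)
        (tendsto_atBot_add_const_right _ _ tendsto_id)
      rw [hA]; simp only; linarith [ale s, k0 s]
  have Ap : ∀ y, 0 ≤ y → y ≤ ρ → A y = a y := fun y h1 h2 => by
    rw [hA]; simp [kid y h1 h2]
  let iso := sA.orderIsoOfSurjective A surjA
  have iso_app : ∀ y, iso y = A y := fun _ => rfl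
  refine ⟨iso.symm, iso.symm.continuous, iso.symm.strictMono, ?_, ?_⟩
  · rw [OrderIso.symm_apply_eq, iso_app, Ap 0 le_rfl hρ.le, a0]
  · intro s y h1 h2
    rw [eq_comm, OrderIso.symm_apply_eq, iso_app, Ap y h1.le h2]
    constructor
    · rintro rfl; exact φa y
    · intro he
      rw [ha]
      simp only
      rw [← he, F.left]

lemma dk_half {f : ℝ × ℝ → ℝ} {φ h : ℝ → ℝ → ℝ} (F : DkFlow f φ h) {m ρ τ : ℝ} (hm : 1 ≤ m)
    (hρ : 0 < ρ) (hτ : τ = 1 ∨ τ = -1)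
    (hlt : ∀ x y, 0 < y → y ≤ ρ → |x| = y ^ m → |f (x, τ * y)| < m * y ^ (m - 1)) :
    ∃ p : ℝ → ℝ, Continuous p ∧ p 0 = 0 ∧ (∀ s, s ≠ 0 → 0 < p s) ∧
      ∀ s y, 0 < y → y ≤ ρ → (y = p s ↔ |φ s (τ * y)| = y ^ m) := by
  have aux : ∀ σ : ℝ, (σ = 1 ∨ σ = -1) → ∃ p : ℝ → ℝ, Continuous p ∧ StrictMono p ∧ p 0 = 0 ∧
      ∀ s y, 0 < y → y ≤ ρ → (y = p s ↔ σ * φ (σ * s) (τ * y) = y ^ m) := by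
    intro σ hσ
    refine dk_quadrant (F.reflect (σ := σ) (τ := τ) hσ) hm hρ ?_
    intro y h1 h2
    have h3 : |σ| = 1 := by rcases hσ with rfl | rfl <;> simp
    have h4 : |τ| = 1 := by rcases hτ with rfl | rfl <;> simp
    have := hlt (σ * y ^ m) y h1 h2 (by
      rw [abs_mul, h3, one_mul, abs_of_nonneg (Real.rpow_nonneg h1.le _)])
    refine lt_of_le_of_lt (le_abs_self _) ?_
    rw [abs_mul, abs_mul, h3, h4]
    simpa using this
  obtain ⟨p, cp, sp, p0, hp⟩ := aux 1 (Or.inl rfl)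
  obtain ⟨q, cq, sq, q0, hq⟩ := aux (-1) (Or.inr rfl)
  have pos : ∀ s, 0 < s → 0 < p s ∧ q (-s) < 0 := fun s hs => by
    have h1 := sp hs
    have h2 := sq (neg_lt_zero.2 hs)
    rw [p0] at h1; rw [q0] at h2
    exact ⟨h1, h2⟩
  have neg : ∀ s, s < 0 → p s < 0 ∧ 0 < q (-s) := fun s hs => by
    have h1 := sp hs
    have h2 := sq (neg_pos.2 hs)
    rw [p0] at h1; rw [q0] at h2
    exact ⟨h1, h2⟩
  refine ⟨fun s => max (p s) (q (-s)), by fun_prop, by simp [p0, q0], ?_, ?_⟩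
  · intro s hs
    rcases lt_or_gt_of_ne hs with h1 | h1
    · exact lt_max_of_lt_right (neg s h1).2
    · exact lt_max_of_lt_left (pos s h1).1
  · intro s y h1 h2
    have e1 := hp s y h1 h2
    have e2 := hq (-s) y h1 h2
    simp only [one_mul, neg_mul, neg_neg] at e1 e2
    have e3 : |φ s (τ * y)| = y ^ m ↔ (y = p s ∨ y = q (-s)) := by
      rw [abs_eq (Real.rpow_nonneg h1.le _), e1, e2, neg_eq_iff_eq_neg]
    rw [e3]
    simp only
    rcases lt_trichotomy s 0 with h | rfl | h
    · have := neg s h; rw [max_eq_right (by linarith)]; grind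
    · simp [p0, q0]
    · have := pos s h; rw [max_eq_left (by linarith)]; grind

/-- The piecewise linear stretching of the half line carrying `p` to `q`. -/
noncomputable def dkG (p q y : ℝ) : ℝ := min y p * (q / p) + max (y - p) 0

lemma dkG_zero {p q : ℝ} (hp : 0 ≤ p) : dkG p q 0 = 0 := by
  simp [dkG, hp]

lemma dkG_self {p q : ℝ} (h : p = 0 → q = 0) : dkG p q p = q := by
  by_cases hp : p = 0
  · simp [dkG, hp, h hp]
  · simp [dkG]; field_simp

/-- Admissible stretching parameters. -/
def DkAdm (p q : ℝ) : Prop := (p = 0 ∧ q = 0) ∨ (0 < p ∧ 0 < q)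

lemma dkG_strictMono {p q : ℝ} (h : DkAdm p q) : StrictMonoOn (dkG p q) (Ici 0) := by
  intro y hy y' _ hyy
  have hy : 0 ≤ y := hy
  rcases h with ⟨rfl, rfl⟩ | ⟨hp, hq⟩
  · simp only [dkG, div_zero, mul_zero, zero_add, sub_zero]
    rw [max_eq_left hy, max_eq_left (hy.trans hyy.le)]; exact hyy
  · have hd : 0 < q / p := by positivity
    simp only [dkG]
    rcases le_total y' p with h1 | h1
    · rw [min_eq_left h1, min_eq_left (hyy.le.trans h1), max_eq_right (by linarith),
        max_eq_right (by linarith)]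
      nlinarith
    · rcases le_total y p with h2 | h2
      · rw [min_eq_right h1, min_eq_left h2, max_eq_left (by linarith : 0 ≤ y' - p),
          max_eq_right (by linarith : y - p ≤ 0)]
        rcases h2.eq_or_lt with h3 | h3
        · rw [h3]; linarith
        · nlinarith
      · rw [min_eq_right h1, min_eq_right h2, max_eq_left (by linarith), max_eq_left (by linarith)]
        linarith

lemma dkG_nonneg {p q y : ℝ} (h : DkAdm p q) (hy : 0 ≤ y) : 0 ≤ dkG p q y := by
  have hp : 0 ≤ p := by rcases h with h | h <;> linarith [h.1]
  rw [← dkG_zero (q := q) hp]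
  exact (dkG_strictMono h).monotoneOn self_mem_Ici hy hy

lemma dkG_inv {p q y : ℝ} (h : DkAdm p q) (hy : 0 ≤ y) : dkG q p (dkG p q y) = y := by
  rcases h with ⟨rfl, rfl⟩ | ⟨hp, hq⟩
  · simp [dkG, hy]
  · simp only [dkG]
    rcases le_total y p with h1 | h1
    · have h2 : y * (q / p) ≤ q := by
        rw [mul_div_assoc', div_le_iff₀ hp]; nlinarith
      rw [min_eq_left h1, max_eq_right (by linarith : y - p ≤ 0), add_zero, min_eq_left h2,
        max_eq_right (by linarith)]
      field_simp; ring
    · rw [min_eq_right h1, max_eq_left (by linarith : 0 ≤ y - p)]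
      have : p * (q / p) = q := by field_simp
      rw [this, min_eq_right (by linarith), max_eq_left (by linarith)]
      field_simp; ring

lemma dkG_cont {α : Type*} [TopologicalSpace α] {p q y : α → ℝ} (hp : Continuous p)
    (hq : Continuous q) (hy : Continuous y) (h : ∀ z, DkAdm (p z) (q z)) (hy0 : ∀ z, 0 ≤ y z) :
    Continuous fun z => dkG (p z) (q z) (y z) := by
  unfold dkG
  refine Continuous.add ?_ (by fun_prop)
  rw [continuous_iff_continuousAt]
  intro z
  rcases h z with ⟨h1, h2⟩ | ⟨h1, h2⟩
  · have hq0 : Tendsto q (𝓝 z) (𝓝 0) := h2 ▸ hq.tendsto z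
    rw [ContinuousAt, h2]
    simp only [zero_div, mul_zero]
    refine squeeze_zero (fun x => ?_) (fun x => ?_) hq0
    · rcases h x with ⟨e1, e2⟩ | ⟨e1, e2⟩
      · simp [e1, e2]
      · have := hy0 x
        positivity
    · rcases h x with ⟨e1, e2⟩ | ⟨e1, e2⟩
      · simp [e1, e2]
      · rw [mul_div_assoc', div_le_iff₀ e1, mul_comm]
        exact mul_le_mul_of_nonneg_left (min_le_right _ _) e2.le
  · have := hp.continuousAt (x := z)
    have := hq.continuousAt (x := z)
    have := hy.continuousAt (x := z)
    fun_prop (disch := exact h1.ne')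

/-- Stretching of the whole line, separately on both half lines. -/
noncomputable def dkg (p p' q q' y : ℝ) : ℝ := dkG p q (max y 0) - dkG p' q' (max (-y) 0)

lemma DkAdm.symm {p q : ℝ} (h : DkAdm p q) : DkAdm q p := by
  rcases h with h | h
  · exact Or.inl ⟨h.2, h.1⟩
  · exact Or.inr ⟨h.2, h.1⟩

lemma DkAdm.nonneg {p q : ℝ} (h : DkAdm p q) : 0 ≤ p := by
  rcases h with h | h <;> linarith [h.1]

lemma dkg_pos {p p' q q' y : ℝ} (h' : DkAdm p' q') (hy : 0 ≤ y) :
    dkg p p' q q' y = dkG p q y := by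
  rw [dkg, max_eq_left hy, max_eq_right (by linarith), dkG_zero h'.nonneg, sub_zero]

lemma dkg_neg {p p' q q' y : ℝ} (h : DkAdm p q) (hy : y ≤ 0) :
    dkg p p' q q' y = -dkG p' q' (-y) := by
  rw [dkg, max_eq_right hy, max_eq_left (by linarith), dkG_zero h.nonneg, zero_sub]

lemma dkg_strictMono {p p' q q' : ℝ} (h : DkAdm p q) (h' : DkAdm p' q') :
    StrictMono (dkg p p' q q') := by
  intro y y' hyy
  have mm : ∀ t : ℝ, max t 0 ∈ Ici (0 : ℝ) := fun t => le_max_right t 0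
  have m1 := (dkG_strictMono h).monotoneOn (a := max y 0) (b := max y' 0) (mm _)
    (mm _) (max_le_max hyy.le le_rfl)
  have m2 := (dkG_strictMono h').monotoneOn (a := max (-y') 0) (b := max (-y) 0) (mm _)
    (mm _) (max_le_max (by linarith) le_rfl)
  unfold dkg
  rcases le_or_gt y' 0 with h1 | h1
  · have := dkG_strictMono h' (a := max (-y') 0) (b := max (-y) 0) (mm _)
      (mm _) (by
        rw [max_eq_left (by linarith), max_eq_left (by linarith)]; linarith)
    linarith
  · have := dkG_strictMono h (a := max y 0) (b := max y' 0) (mm _)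
      (mm _) (by rw [max_eq_left h1.le]; exact max_lt hyy h1)
    linarith

lemma dkg_zero {p p' q q' : ℝ} (h : DkAdm p q) (h' : DkAdm p' q') : dkg p p' q q' 0 = 0 := by
  rw [dkg_pos h' le_rfl, dkG_zero h.nonneg]

lemma dkg_inv {p p' q q' : ℝ} (h : DkAdm p q) (h' : DkAdm p' q') (y : ℝ) :
    dkg q q' p p' (dkg p p' q q' y) = y := by
  rcases le_total 0 y with hy | hy
  · rw [dkg_pos h' hy, dkg_pos h'.symm (dkG_nonneg h hy), dkG_inv h hy]
  · rw [dkg_neg h hy, dkg_neg h.symm (by linarith [dkG_nonneg h' (neg_nonneg.2 hy)]), neg_neg,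
      dkG_inv h' (neg_nonneg.2 hy), neg_neg]

lemma dkg_cont {α : Type*} [TopologicalSpace α] {p p' q q' y : α → ℝ} (hp : Continuous p)
    (hp' : Continuous p') (hq : Continuous q) (hq' : Continuous q') (hy : Continuous y)
    (h : ∀ z, DkAdm (p z) (q z)) (h' : ∀ z, DkAdm (p' z) (q' z)) :
    Continuous fun z => dkg (p z) (p' z) (q z) (q' z) (y z) := by
  unfold dkg
  exact (dkG_cont hp hq (by fun_prop) h (fun _ => le_max_right _ _)).sub
    (dkG_cont hp' hq' (by fun_prop) h' (fun _ => le_max_right _ _))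

/-- The fibrewise stretching which carries the transformed branches to the model branches. -/
lemma dk_stretch {f : ℝ × ℝ → ℝ} {φ h : ℝ → ℝ → ℝ} (F : DkFlow f φ h) {m ρ : ℝ} (hm : 1 ≤ m)
    (hρ : 0 < ρ)
    (hlt : ∀ x y, 0 < |y| → |y| ≤ ρ → |x| = |y| ^ m → |f (x, y)| < m * |y| ^ (m - 1)) :
    ∃ g gi : ℝ → ℝ → ℝ, (Continuous fun z : ℝ × ℝ => g z.1 z.2) ∧
      (Continuous fun z : ℝ × ℝ => gi z.1 z.2) ∧ (∀ s, g s 0 = 0) ∧ (∀ s, StrictMono (g s)) ∧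
      (∀ s, StrictMono (gi s)) ∧
      (∀ s y, gi s (g s y) = y) ∧ (∀ s y, g s (gi s y) = y) ∧
      ∀ s y, y ≠ 0 → |y| ≤ ρ → (|φ s y| = |y| ^ m ↔ |s| = |g s y| ^ m) := by
  obtain ⟨p, cp, p0, pp, hp⟩ := dk_half F (τ := 1) hm hρ (Or.inl rfl) (fun x y h1 h2 h3 => by
    have e : |y| = y := abs_of_pos h1
    have := hlt x y (by rwa [e]) (by rwa [e]) (by rwa [e])
    rw [e] at this
    simpa using this)
  obtain ⟨p', cp', p0', pp', hp'⟩ := dk_half F (τ := -1) hm hρ (Or.inr rfl) (fun x y h1 h2 h3 => by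
    have e : |-y| = y := by rw [abs_neg, abs_of_pos h1]
    have := hlt x (-y) (by rwa [e]) (by rwa [e]) (by rwa [e])
    rw [e] at this
    simpa using this)
  obtain ⟨q, hq⟩ : ∃ q : ℝ → ℝ, q = fun s => |s| ^ (1 / m) := ⟨_, rfl⟩
  have hm0 : 0 < m := by linarith
  have cq : Continuous q := by
    rw [hq]
    exact continuous_abs.rpow_const (fun _ => Or.inr (by positivity))
  have q0 : q 0 = 0 := by
    rw [hq]; simp only [abs_zero]; exact Real.zero_rpow (by positivity)
  have qp : ∀ s, s ≠ 0 → 0 < q s := fun s hs => by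
    rw [hq]; exact Real.rpow_pos_of_pos (abs_pos.2 hs) _
  have qm : ∀ s y, 0 ≤ y → (y = q s ↔ |s| = y ^ m) := fun s y hy => by
    rw [hq]
    simp only [one_div]
    rw [eq_comm, Real.rpow_inv_eq (abs_nonneg _) hy hm0.ne']
  have ad : ∀ s, DkAdm (p s) (q s) := fun s => by
    by_cases hs : s = 0
    · subst hs; exact Or.inl ⟨p0, q0⟩
    · exact Or.inr ⟨pp s hs, qp s hs⟩
  have ad' : ∀ s, DkAdm (p' s) (q s) := fun s => by
    by_cases hs : s = 0
    · subst hs; exact Or.inl ⟨p0', q0⟩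
    · exact Or.inr ⟨pp' s hs, qp s hs⟩
  have imp : ∀ {a b : ℝ}, DkAdm a b → a = 0 → b = 0 := fun hab h0 => by
    rcases hab with hh | hh
    · exact hh.2
    · exact absurd h0 hh.1.ne'
  refine ⟨fun s y => dkg (p s) (p' s) (q s) (q s) y, fun s y => dkg (q s) (q s) (p s) (p' s) y,
    ?_, ?_, fun s => dkg_zero (ad s) (ad' s), fun s => dkg_strictMono (ad s) (ad' s),
    fun s => dkg_strictMono (ad s).symm (ad' s).symm,
    fun s y => dkg_inv (ad s) (ad' s) y, fun s y => dkg_inv (ad s).symm (ad' s).symm y, ?_⟩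
  · exact dkg_cont (by fun_prop) (by fun_prop) (by fun_prop) (by fun_prop) (by fun_prop)
      (fun z => ad z.1) (fun z => ad' z.1)
  · exact dkg_cont (by fun_prop) (by fun_prop) (by fun_prop) (by fun_prop) (by fun_prop)
      (fun z => (ad z.1).symm) (fun z => (ad' z.1).symm)
  · intro s y hy hyρ
    rcases lt_or_gt_of_ne hy with h1 | h1
    · have hn : 0 < -y := by linarith
      have e1 := hp' s (-y) hn (by rwa [abs_of_neg h1] at hyρ)
      have hG := dkG_nonneg (ad' s) hn.le
      simp only [neg_mul, one_mul, neg_neg] at e1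
      simp only
      rw [dkg_neg (ad s) h1.le, abs_neg, abs_of_nonneg hG, ← qm s _ hG, abs_of_neg h1, ← e1]
      constructor
      · intro he; rw [he]; exact dkG_self (imp (ad' s))
      · intro he
        refine (dkG_strictMono (ad' s)).injOn (show (-y) ∈ Ici 0 from hn.le)
          (show p' s ∈ Ici 0 from (ad' s).nonneg) ?_
        rw [he, dkG_self (imp (ad' s))]
    · have e1 := hp s y h1 (by rwa [abs_of_pos h1] at hyρ)
      have hG := dkG_nonneg (ad s) h1.le
      simp only [one_mul] at e1
      simp only
      rw [dkg_pos (ad' s) h1.le, abs_of_nonneg hG, ← qm s _ hG, abs_of_pos h1, ← e1]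
      constructor
      · intro he; rw [he]; exact dkG_self (imp (ad s))
      · intro he
        refine (dkG_strictMono (ad s)).injOn (show y ∈ Ici 0 from h1.le)
          (show p s ∈ Ici 0 from (ad s).nonneg) ?_
        rw [he, dkG_self (imp (ad s))]

lemma dk_scale_mono {A : ℝ → ℝ} (hA : StrictMono A) {Q₀ : ℝ} (hQ : Q₀ ≠ 0) (w : ℝ) :
    StrictMono fun t => A (w + Q₀ * t) / Q₀ := by
  intro t t' htt
  simp only
  rcases lt_or_gt_of_ne hQ with h | h
  · rw [div_lt_div_right_of_neg h]
    exact hA (by nlinarith)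
  · rw [div_lt_div_iff_of_pos_right h]
    exact hA (by nlinarith)

lemma dk_fst_deriv {c : ℝ → ℝ × ℝ} {v : ℝ × ℝ} {J : Set ℝ} {t : ℝ}
    (h : HasDerivWithinAt c v J t) : HasDerivWithinAt (fun t => (c t).1) v.1 J t := by
  have := (ContinuousLinearMap.fst ℝ ℝ ℝ).hasFDerivAt.comp_hasDerivWithinAt t h
  exact this

lemma dk_snd_deriv {c : ℝ → ℝ × ℝ} {v : ℝ × ℝ} {J : Set ℝ} {t : ℝ}
    (h : HasDerivWithinAt c v J t) : HasDerivWithinAt (fun t => (c t).2) v.2 J t := by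
  have := (ContinuousLinearMap.snd ℝ ℝ ℝ).hasFDerivAt.comp_hasDerivWithinAt t h
  exact this

/-- On a phase curve, the first integral is constant. -/
lemma dk_const {f : ℝ × ℝ → ℝ} {φ h : ℝ → ℝ → ℝ} (F : DkFlow f φ h) {K B : ℝ}
    (hK : ∀ x x' y, |f (x, y) - f (x', y)| ≤ K * |x - x'|)
    {J : Set ℝ} (hJ : J.OrdConnected) {x y v : ℝ → ℝ} (hv : ∀ t ∈ J, |v t| ≤ B)
    (hx : ∀ t ∈ J, HasDerivWithinAt x (f (x t, y t) * v t) J t)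
    (hy : ∀ t ∈ J, HasDerivWithinAt y (v t) J t) {t₀ t : ℝ} (h₀ : t₀ ∈ J) (ht : t ∈ J) :
    h (x t) (y t) = h (x t₀) (y t₀) := by
  set s := h (x t₀) (y t₀) with hs
  have hB0 : 0 ≤ B := (abs_nonneg _).trans (hv t ht)
  have := dk_gronwall hJ (w := fun t => x t - φ s (y t))
    (w' := fun t => f (x t, y t) * v t - f (φ s (y t), y t) * v t) (C := K * B)
    (fun u hu => (hx u hu).sub ((F.der s (y u)).comp_hasDerivWithinAt u (hy u hu)))
    (fun u hu => by
      rw [← sub_mul, abs_mul]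
      calc _ ≤ (K * |x u - φ s (y u)|) * B :=
            mul_le_mul (hK _ _ _) (hv u hu) (abs_nonneg _) ((abs_nonneg _).trans (hK _ _ (y u)))
        _ = _ := by ring) h₀ ht
  have e : φ s (y t₀) = x t₀ := by rw [hs, F.right]
  simp only [e, sub_self, abs_zero, zero_mul] at this
  have e2 : x t = φ s (y t) := by linarith [abs_nonpos_iff.1 this]
  rw [e2, F.left]

/-- Time reparametrization of an orbit. -/
lemma dk_time {u : ℝ → ℝ} (hu : Continuous u) {b : ℝ} (hb : 0 < b) (hub : ∀ y, b ≤ u y) :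
    ∃ T : ℝ ≃o ℝ, ∀ t, HasDerivAt T.symm (u (T.symm t))⁻¹ t := by
  set A : ℝ → ℝ := fun y => ∫ η in (0:ℝ)..y, u η with hA
  have dA : ∀ y, HasDerivAt A (u y) y := fun y =>
    intervalIntegral.integral_hasDerivAt_right (hu.intervalIntegrable _ _)
      hu.stronglyMeasurable.stronglyMeasurableAtFilter hu.continuousAt
  have cA : Continuous A := continuous_iff_continuousAt.2 fun y => (dA y).continuousAt
  have sA : StrictMono A := strictMono_of_deriv_pos fun y => by
    rw [(dA y).deriv]; linarith [hub y]
  have A0 : A 0 = 0 := by simp [hA]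
  have mB : Monotone fun y => A y - b * y := by
    refine monotone_of_deriv_nonneg (fun y => ?_) (fun y => ?_)
    · exact ((dA y).sub ((hasDerivAt_id y).const_mul b)).differentiableAt
    · have := ((dA y).sub ((hasDerivAt_id y).const_mul b)).deriv
      simp only [id_eq, mul_one] at this
      have h2 : deriv (fun y => A y - b * y) y = u y - b := this
      rw [h2]; linarith [hub y]
  have surj : Function.Surjective A := by
    refine cA.surjective ?_ ?_
    · refine tendsto_atTop_mono' (f₁ := fun y => b * y) atTop ?_
        (tendsto_id.const_mul_atTop hb)
      filter_upwards [eventually_ge_atTop 0] with y hy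
      have := mB hy
      simp only [A0, mul_zero, sub_zero] at this
      linarith
    · refine tendsto_atBot_mono' (f₂ := A) (f₁ := fun y => b * y) atBot ?_
        (tendsto_id.const_mul_atBot hb)
      filter_upwards [eventually_le_atBot 0] with y hy
      have := mB hy
      simp only [A0, mul_zero, sub_zero] at this
      linarith
  refine ⟨sA.orderIsoOfSurjective A surj, fun t => ?_⟩
  set T := sA.orderIsoOfSurjective A surj with hT
  refine HasDerivAt.of_local_left_inverse (f := A) T.symm.continuous.continuousAt (dA _)
    (by linarith [hub (T.symm t)] : (0:ℝ) < _).ne' ?_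
  exact Eventually.of_forall fun y => T.apply_symm_apply y

theorem dk_core (δ : ℝ × ℝ → ℝ) (m : ℝ) (hm : 1 ≤ m) (S : ℝ → Prop)
    (hδ : ∀ z : ℝ × ℝ, δ z = 0 ↔ z.2 = 0 ∨ (S z.2 ∧ |z.1| = |z.2| ^ m))
    (hS : ∀ y y', 0 < y * y' → (S y ↔ S y'))
    (P Q f Qt : ℝ × ℝ → ℝ) {φ h : ℝ → ℝ → ℝ} (F : DkFlow f φ h) {K M B Q₀ R ρ : ℝ}
    (hK : ∀ x x' y, |f (x, y) - f (x', y)| ≤ K * |x - x'|)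
    (hM0 : 0 ≤ M) (hbd : ∀ s y, |φ s y - s| ≤ M * |y|) (hQc : Continuous Qt) (hQ₀ : Q₀ ≠ 0)
    (hQt : ∀ z, 0 < Qt z / Q₀) (hQB : ∀ z, |Qt z| ≤ B) (hR : 0 < R) (hρ : 0 < ρ)
    (hPQ : ∀ z : ℝ × ℝ, |z.1| < R → |z.2| < R → P z = f z * Qt z ∧ Q z = Qt z)
    (hlt : ∀ x y, 0 < |y| → |y| ≤ ρ → |x| = |y| ^ m → |f (x, y)| < m * |y| ^ (m - 1)) :
    OrbitallyEquivAt (fun z => (P z, Q z)) δ (0, 0) (fun _ => ((0 : ℝ), Q₀)) δ (0, 0) := by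
  obtain ⟨g, gi, cg, cgi, g0, mg, mgi, gig, ggi, hbr⟩ := dk_stretch F hm hρ hlt
  obtain ⟨r, hr0, hrρ, hrR, hrM⟩ : ∃ r : ℝ, 0 < r ∧ r ≤ ρ ∧ r ≤ R ∧ M * r ≤ R / 2 := by
    refine ⟨min ρ (min R (R / (2 * (M + 1)))), by positivity, min_le_left _ _,
      (min_le_right _ _).trans (min_le_left _ _), ?_⟩
    have : min ρ (min R (R / (2 * (M + 1)))) ≤ R / (2 * (M + 1)) :=
      (min_le_right _ _).trans (min_le_right _ _)
    calc M * min ρ (min R (R / (2 * (M + 1)))) ≤ (M + 1) * (R / (2 * (M + 1))) :=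
          mul_le_mul (by linarith) this (by positivity) (by linarith)
      _ = R / 2 := by field_simp
  obtain ⟨V₁, hV₁⟩ : ∃ V : Set (ℝ × ℝ), V = {z | |h z.1 z.2| < R / 2 ∧ |z.2| < r} := ⟨_, rfl⟩
  obtain ⟨V₂, hV₂⟩ : ∃ V : Set (ℝ × ℝ), V = {z | |z.1| < R / 2 ∧ |gi z.1 z.2| < r} := ⟨_, rfl⟩
  obtain ⟨Φ, hΦ⟩ : ∃ Φ : ℝ × ℝ → ℝ × ℝ, Φ = fun z => (h z.1 z.2, g (h z.1 z.2) z.2) := ⟨_, rfl⟩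
  obtain ⟨Ψ, hΨ⟩ : ∃ Ψ : ℝ × ℝ → ℝ × ℝ, Ψ = fun z => (φ z.1 (gi z.1 z.2), gi z.1 z.2) := ⟨_, rfl⟩
  have cΦ : Continuous Φ := by
    rw [hΦ]
    exact F.conth.prodMk (cg.comp (F.conth.prodMk continuous_snd))
  have cΨ : Continuous Ψ := by
    rw [hΨ]
    exact (F.contφ.comp (continuous_fst.prodMk cgi)).prodMk cgi
  have ΨΦ : ∀ z, Ψ (Φ z) = z := fun z => by
    rw [hΨ, hΦ]; simp [gig, F.right]
  have ΦΨ : ∀ z, Φ (Ψ z) = z := fun z => by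
    rw [hΨ, hΦ]; simp [ggi, F.left]
  have mΦ : MapsTo Φ V₁ V₂ := fun z hz => by
    rw [hV₁] at hz
    rw [hV₂, hΦ]; simpa [gig] using hz
  have mΨ : MapsTo Ψ V₂ V₁ := fun z hz => by
    rw [hV₂] at hz
    rw [hV₁, hΨ]; simpa [F.left] using hz
  have reg : ∀ z ∈ V₁, P z = f z * Qt z ∧ Q z = Qt z := fun z hz => by
    rw [hV₁] at hz
    refine hPQ z ?_ (hz.2.trans_le hrR)
    have h1 := hbd (h z.1 z.2) z.2
    rw [F.right] at h1
    have h2 : M * |z.2| ≤ M * r := mul_le_mul_of_nonneg_left hz.2.le hM0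
    calc |z.1| = |(z.1 - h z.1 z.2) + h z.1 z.2| := by ring_nf
      _ ≤ _ := abs_add_le _ _
      _ < R := by linarith [hz.1]
  have imp : ∀ z ∈ V₁, (δ (Φ z) = 0 ↔ δ z = 0) := fun z hz => by
    rw [hV₁] at hz
    rw [hδ, hδ, hΦ]
    simp only
    set s := h z.1 z.2 with hs
    have hz1 : z.1 = φ s z.2 := by rw [hs, F.right]
    by_cases hy : z.2 = 0
    · simp [hy, g0]
    · have hgy : 0 < g s z.2 * z.2 := by
        rcases lt_or_gt_of_ne hy with h1 | h1
        · have := mg s h1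
          rw [g0] at this
          exact mul_pos_of_neg_of_neg this h1
        · have := mg s h1
          rw [g0] at this
          exact mul_pos this h1
      have hgy0 : g s z.2 ≠ 0 := fun h0 => by rw [h0] at hgy; simp at hgy
      have e := hbr s z.2 hy (hz.2.le.trans hrρ)
      rw [← hz1] at e
      simp only [hy, hgy0, false_or]
      rw [e, hS _ _ hgy]
  have h00 : h 0 0 = 0 := by
    have := F.left 0 0
    rwa [F.zero] at this
  refine ⟨V₁, V₂, Φ, Ψ, ?_, ?_, ?_, ?_, cΦ.continuousOn, cΨ.continuousOn, mΦ, mΨ,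
    fun z _ => ΨΦ z, fun z _ => ΦΨ z, ?_, ?_, ?_, ?_⟩
  · rw [hV₁]
    exact (isOpen_lt F.conth.abs continuous_const).inter
      (isOpen_lt continuous_snd.abs continuous_const)
  · rw [hV₂]
    exact (isOpen_lt continuous_fst.abs continuous_const).inter
      (isOpen_lt cgi.abs continuous_const)
  · rw [hV₁]; simp [h00, hr0, hR]
  · have := gig 0 0
    rw [g0] at this
    rw [hV₂]; simp [this, hr0, hR]
  · rw [hΦ]; simp [h00, g0]
  · ext z
    constructor
    · rintro ⟨w, ⟨hw1, hw2⟩, rfl⟩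
      exact ⟨(imp w hw2).2 hw1, mΦ hw2⟩
    · rintro ⟨hz1, hz2⟩
      refine ⟨Ψ z, ⟨?_, mΨ hz2⟩, ΦΨ z⟩
      have := imp _ (mΨ hz2)
      rw [ΦΨ] at this
      exact this.1 hz1
  · rintro J c ⟨hJ, hJn, hcV, hcd⟩
    obtain ⟨t₀, ht₀⟩ := hJn.nonempty
    have hx : ∀ t ∈ J, HasDerivWithinAt (fun t => (c t).1)
        (f ((c t).1, (c t).2) * Qt (c t)) J t := fun t ht =>
      (dk_fst_deriv (hcd t ht)).congr_deriv (reg _ (hcV t ht).1).1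
    have hy : ∀ t ∈ J, HasDerivWithinAt (fun t => (c t).2) (Qt (c t)) J t := fun t ht =>
      (dk_snd_deriv (hcd t ht)).congr_deriv (reg _ (hcV t ht).1).2
    set s := h (c t₀).1 (c t₀).2 with hs
    have hconst : ∀ t ∈ J, h (c t).1 (c t).2 = s := fun t ht =>
      dk_const F hK hJ (x := fun t => (c t).1) (y := fun t => (c t).2) (v := fun t => Qt (c t))
        (fun t _ => hQB _) hx hy ht₀ ht
    have hcy : ContinuousOn (fun t => (c t).2) J := fun t ht => (hy t ht).continuousWithinAt
    have ymono : StrictMonoOn (fun t => (c t).2 / Q₀) J := by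
      refine strictMonoOn_of_deriv_pos hJ.convex (hcy.div_const _) (fun t ht => ?_)
      have h1 := ((hy t (interior_subset ht)).div_const Q₀).hasDerivAt
        (mem_interior_iff_mem_nhds.1 ht)
      rw [h1.deriv]
      exact hQt _
    have cgs : Continuous (g s) := cg.comp (by fun_prop : Continuous fun y : ℝ => (s, y))
    have hτc : ContinuousOn (fun t => g s (c t).2 / Q₀) J :=
      (cgs.comp_continuousOn hcy).div_const _
    have hτm : StrictMonoOn (fun t => g s (c t).2 / Q₀) J := by
      intro t ht t' ht' htt
      have h1 := dk_scale_mono (mg s) hQ₀ 0 (ymono ht ht' htt)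
      simp only [zero_add] at h1
      rwa [mul_div_cancel₀ _ hQ₀, mul_div_cancel₀ _ hQ₀] at h1
    have hd : ∀ t ∈ J, Φ (c t) = (s, Q₀ * (g s (c t).2 / Q₀)) := fun t ht => by
      rw [hΦ]
      simp only
      rw [hconst t ht, mul_div_cancel₀ _ hQ₀]
    refine ⟨(fun t => g s (c t).2 / Q₀) '' J, fun t => (s, Q₀ * t), fun t => g s (c t).2 / Q₀,
      ⟨?_, ?_, ?_, ?_⟩, hτc, hτm, rfl, hd⟩
    · exact (hJ.isPreconnected.image _ hτc).ordConnected
    · exact hJn.image_of_injOn hτm.injOn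
    · rintro _ ⟨t, ht, rfl⟩
      simp only
      rw [← hd t ht]
      exact ⟨mΦ (hcV t ht).1, fun h0 => (hcV t ht).2 ((imp _ (hcV t ht).1).1 h0)⟩
    · intro t _
      have := (hasDerivAt_const t s).prodMk ((hasDerivAt_id t).const_mul Q₀)
      simp only [mul_one] at this
      exact this.hasDerivWithinAt
  · rintro J d ⟨hJ, hJn, hdV, hdd⟩
    obtain ⟨t₀, ht₀⟩ := hJn.nonempty
    have h1 : ∀ t ∈ J, (d t).1 = (d t₀).1 := fun t ht => by
      have := dk_gronwall hJ (w := fun t => (d t).1 - (d t₀).1) (w' := fun _ => 0) (C := 0)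
        (fun u hu => (dk_fst_deriv (hdd u hu)).sub_const _) (fun u hu => by simp) ht₀ ht
      simp only [sub_self, abs_zero, zero_mul] at this
      linarith [abs_nonpos_iff.1 this]
    have h2 : ∀ t ∈ J, (d t).2 = ((d t₀).2 - Q₀ * t₀) + Q₀ * t := fun t ht => by
      have := dk_gronwall hJ (w := fun t => (d t).2 - Q₀ * t - ((d t₀).2 - Q₀ * t₀))
        (w' := fun _ => Q₀ - Q₀ * 1) (C := 0)
        (fun u hu => ((dk_snd_deriv (hdd u hu)).sub
          ((hasDerivWithinAt_id u J).const_mul Q₀)).sub_const _) (fun u hu => by simp) ht₀ ht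
      simp only [sub_self, abs_zero, zero_mul] at this
      linarith [abs_nonpos_iff.1 this]
    set s := (d t₀).1 with hs
    set w := (d t₀).2 - Q₀ * t₀ with hw
    have hB0 : 0 < B := by
      have h3 := hQt 0
      have h4 : Qt 0 ≠ 0 := fun h0 => by rw [h0] at h3; simp at h3
      exact (abs_pos.2 h4).trans_le (hQB 0)
    have cφs : Continuous (φ s) := F.contφ.comp (by fun_prop : Continuous fun y : ℝ => (s, y))
    have hQn : ∀ z, Qt z ≠ 0 := fun z h0 => by
      have h3 := hQt z
      rw [h0] at h3; simp at h3
    obtain ⟨T, hT⟩ := dk_time (u := fun y => (Qt (φ s y, y) / Q₀)⁻¹) (b := |Q₀| / B)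
      ((hQc.comp (cφs.prodMk continuous_id)).div_const _ |>.inv₀ fun y => (hQt _).ne')
      (by positivity) (fun y => by
        rw [inv_div]
        have h5 : Q₀ / Qt (φ s y, y) = |Q₀| / |Qt (φ s y, y)| := by
          rw [← abs_div, abs_of_pos]
          rw [← inv_div]; exact inv_pos.2 (hQt _)
        rw [h5]
        exact div_le_div_of_nonneg_left (abs_nonneg _) (abs_pos.2 (hQn _)) (hQB _))
    simp only [inv_inv] at hT
    have cgis : Continuous (gi s) := cgi.comp (by fun_prop : Continuous fun y : ℝ => (s, y))
    have hτc : Continuous (fun t => T (gi s (w + Q₀ * t)) / Q₀) :=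
      (T.continuous.comp (cgis.comp (by fun_prop))).div_const _
    have hτm : StrictMono (fun t => T (gi s (w + Q₀ * t)) / Q₀) :=
      dk_scale_mono (T.strictMono.comp (mgi s)) hQ₀ w
    obtain ⟨c, hc⟩ : ∃ c : ℝ → ℝ × ℝ, c = fun t => (φ s (T.symm (Q₀ * t)), T.symm (Q₀ * t)) :=
      ⟨_, rfl⟩
    have hd : ∀ t ∈ J, Ψ (d t) = c (T (gi s (w + Q₀ * t)) / Q₀) := fun t ht => by
      rw [hc, hΨ]
      simp only
      rw [h1 t ht, h2 t ht, mul_div_cancel₀ _ hQ₀, OrderIso.symm_apply_apply]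
    have hmem : ∀ t ∈ (fun t => T (gi s (w + Q₀ * t)) / Q₀) '' J, c t ∈ V₁ \ {z | δ z = 0} := by
      rintro _ ⟨t, ht, rfl⟩
      simp only
      rw [← hd t ht]
      refine ⟨mΨ (hdV t ht).1, fun h0 => (hdV t ht).2 ?_⟩
      have := (imp _ (mΨ (hdV t ht).1)).2 h0
      rwa [ΦΨ] at this
    refine ⟨(fun t => T (gi s (w + Q₀ * t)) / Q₀) '' J, c, fun t => T (gi s (w + Q₀ * t)) / Q₀,
      ⟨?_, ?_, hmem, ?_⟩, hτc.continuousOn, hτm.strictMonoOn _, rfl, hd⟩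
    · exact (hJ.isPreconnected.image _ hτc.continuousOn).ordConnected
    · exact hJn.image_of_injOn hτm.injective.injOn
    · intro t ht
      have hr := reg _ (hmem t ht).1
      simp only
      rw [hr.1, hr.2]
      have e1 : HasDerivAt (fun t => T.symm (Q₀ * t)) (Qt (c t)) t := by
        have := (hT (Q₀ * t)).comp t ((hasDerivAt_id t).const_mul Q₀)
        refine this.congr_deriv ?_
        rw [hc]; field_simp
      have e2 : HasDerivAt (fun t => φ s (T.symm (Q₀ * t))) (f (c t) * Qt (c t)) t := by
        have := (F.der s (T.symm (Q₀ * t))).comp t e1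
        refine this.congr_deriv ?_
        rw [hc]
      have e3 := e2.prodMk e1
      rw [hc] at e3 ⊢
      exact e3.hasDerivWithinAt

lemma dk_order {u : ℝ → ℝ} (hu : AnalyticAt ℝ u 0) (N : ℕ)
    (h : ∀ i < N, iteratedDeriv i u 0 = 0) :
    ∃ C : ℝ, 0 ≤ C ∧ ∀ᶠ y in 𝓝 (0 : ℝ), |u y| ≤ C * |y| ^ N := by
  obtain ⟨v, hv, huv⟩ := (natCast_le_analyticOrderAt hu).1
    ((natCast_le_analyticOrderAt_iff_iteratedDeriv_eq_zero hu).2 h)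
  refine ⟨|v 0| + 1, by positivity, ?_⟩
  have hb : ∀ᶠ y in 𝓝 (0 : ℝ), |v y| < |v 0| + 1 :=
    hv.continuousAt.abs.eventually_lt_const (by linarith)
  filter_upwards [huv, hb] with y h1 h2
  rw [h1, sub_zero, smul_eq_mul, abs_mul, abs_pow, mul_comm]
  exact mul_le_mul_of_nonneg_right h2.le (by positivity)

lemma dk_impasse (k : ℕ) (hk : 4 ≤ k) (ε : ℝ) (hε : ε = 1 ∨ ε = -1) (z : ℝ × ℝ) :
    z.1 ^ 2 * z.2 + ε * z.2 ^ (k - 1) = 0 ↔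
      z.2 = 0 ∨ (0 ≤ -ε * z.2 ^ (k - 2) ∧ |z.1| = |z.2| ^ (((k : ℝ) - 2) / 2)) := by
  have e1 : z.1 ^ 2 * z.2 + ε * z.2 ^ (k - 1) = z.2 * (z.1 ^ 2 + ε * z.2 ^ (k - 2)) := by
    have : k - 1 = (k - 2) + 1 := by omega
    rw [this, pow_succ]; ring
  have e2 : (|z.2| ^ (((k : ℝ) - 2) / 2)) ^ 2 = |(-ε) * z.2 ^ (k - 2)| := by
    have h1 : |-ε| = 1 := by rcases hε with rfl | rfl <;> simp
    rw [abs_mul, h1, one_mul, abs_pow, ← Real.rpow_natCast, ← Real.rpow_mul (abs_nonneg _),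
      ← Real.rpow_natCast]
    congr 1
    push_cast [Nat.cast_sub (show 2 ≤ k by omega)]
    ring
  have e3 : |z.1| = |z.2| ^ (((k : ℝ) - 2) / 2) ↔ z.1 ^ 2 = |(-ε) * z.2 ^ (k - 2)| := by
    rw [← e2, ← sq_abs z.1, pow_left_inj₀ (abs_nonneg _) (by positivity) two_ne_zero]
  rw [e1, mul_eq_zero, e3]
  refine or_congr_right ⟨fun h => ?_, fun h => ?_⟩
  · have h1 : z.1 ^ 2 = -ε * z.2 ^ (k - 2) := by linarith
    rw [← h1]
    exact ⟨sq_nonneg _, (abs_of_nonneg (sq_nonneg _)).symm⟩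
  · rw [abs_of_nonneg h.1] at h
    linarith [h.2]

lemma dk_sign (a : ℝ) (n : ℕ) (y y' : ℝ) (h : 0 < y * y') :
    0 ≤ a * y ^ n ↔ 0 ≤ a * y' ^ n := by
  have key : ∀ y y' : ℝ, 0 < y * y' → 0 ≤ a * y ^ n → 0 ≤ a * y' ^ n := by
    intro y y' h h0
    have hy : y ≠ 0 := fun e => by simp [e] at h
    have h1 : y' = (y * y' / y ^ 2) * y := by field_simp
    rw [h1, mul_pow]
    have : a * ((y * y' / y ^ 2) ^ n * y ^ n) = (y * y' / y ^ 2) ^ n * (a * y ^ n) := by ring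
    rw [this]
    positivity
  exact ⟨key y y' h, key y' y (by linarith)⟩

/-- Clamping to `[-R, R]`. -/
noncomputable def dkClamp (R x : ℝ) : ℝ := max (-R) (min x R)

lemma dkClamp_id {R x : ℝ} (h : |x| ≤ R) : dkClamp R x = x := by
  have := abs_le.1 h
  simp [dkClamp, this.1, this.2]

lemma dkClamp_abs {R : ℝ} (hR : 0 ≤ R) (x : ℝ) : |dkClamp R x| ≤ R :=
  abs_le.2 ⟨le_max_left _ _, max_le (by linarith) (min_le_right _ _)⟩

lemma dkClamp_lip (R x x' : ℝ) : |dkClamp R x - dkClamp R x'| ≤ |x - x'| := by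
  unfold dkClamp
  refine (abs_max_sub_max_le_max _ _ _ _).trans ?_
  rw [sub_self, abs_zero]
  refine max_le (abs_nonneg _) ((abs_min_sub_min_le_max _ _ _ _).trans ?_)
  simp

lemma dkClamp_cont (R : ℝ) : Continuous (dkClamp R) := by
  unfold dkClamp; fun_prop

/-- (`D_k`-type impasse curve, `k ≥ 4`, Case 6 of Table 2.)
If `δ(x,y) = x²y + ε·y^{k−1}`, `X = (P,Q)` is real-analytic near the origin with `P(0,0) = 0`,
`Q(0,0) ≠ 0`, and `∂ⁿP/∂yⁿ(0,0) = 0` for all `1 ≤ 2n ≤ k − 4` (i.e. `k − 4 < 2n₀`), then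
`(X, δ)` is orientation-preserving `C⁰`-orbitally equivalent at the origin to the system
with constant adjoint vector field `(0, Q(0,0))`. -/
theorem Dk_case6 (k : ℕ) (hk : 4 ≤ k) (ε : ℝ) (hε : ε = 1 ∨ ε = -1)
    (P Q : ℝ × ℝ → ℝ)
    (hP : AnalyticAt ℝ P (0, 0)) (hQ : AnalyticAt ℝ Q (0, 0))
    (hP0 : P (0, 0) = 0) (hQ0 : Q (0, 0) ≠ 0)
    (hflat : ∀ n : ℕ, 1 ≤ n → 2 * n ≤ k - 4 → iteratedDeriv n (fun y => P (0, y)) 0 = 0) :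
    OrbitallyEquivAt (fun z => (P z, Q z))
      (fun z => z.1 ^ 2 * z.2 + ε * z.2 ^ (k - 1)) (0, 0)
      (fun _ => ((0 : ℝ), Q (0, 0)))
      (fun z => z.1 ^ 2 * z.2 + ε * z.2 ^ (k - 1)) (0, 0) := by
  have hm : 1 ≤ ((k : ℝ) - 2) / 2 := by
    have : (4 : ℝ) ≤ k := by exact_mod_cast hk
    linarith
  set Q₀ := Q (0, 0) with hQ₀
  set m : ℝ := ((k : ℝ) - 2) / 2 with hmdef
  set N : ℕ := (k - 4) / 2 + 1 with hN
  -- the slope function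
  set f₀ : ℝ × ℝ → ℝ := fun z => P z / Q z with hf₀
  have hf₀a : AnalyticAt ℝ f₀ (0, 0) := hP.div hQ hQ0
  obtain ⟨K, t, ht, hLip⟩ := (hf₀a.contDiffAt (n := 1)).exists_lipschitzOnWith
  have hua : AnalyticAt ℝ (fun y : ℝ => P (0, y)) 0 := by
    have : AnalyticAt ℝ (fun y : ℝ => ((0 : ℝ), y)) 0 := by fun_prop
    exact AnalyticAt.comp (f := fun y : ℝ => ((0 : ℝ), y)) (g := P) hP this
  obtain ⟨C, hC0, hC⟩ := dk_order hua N (fun i hi => by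
    rcases Nat.eq_zero_or_pos i with rfl | hi0
    · simpa using hP0
    · exact hflat i hi0 (by omega))
  have hQev : ∀ᶠ z in 𝓝 ((0 : ℝ), (0 : ℝ)), ContinuousAt Q z ∧ 1 / 2 < Q z / Q₀ ∧ Q z / Q₀ < 2 := by
    have h1 : ContinuousAt (fun z => Q z / Q₀) (0, 0) := hQ.continuousAt.div_const _
    have h2 : Q (0, 0) / Q₀ = 1 := div_self hQ0
    refine (hQ.eventually_analyticAt.mono fun z hz => hz.continuousAt).and
      ((h1.eventually_const_lt ?_).and (h1.eventually_lt_const ?_))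
    · beta_reduce; rw [h2]; norm_num
    · beta_reduce; rw [h2]; norm_num
  obtain ⟨R₁, hR₁, hball⟩ := Metric.nhds_basis_closedBall.mem_iff.1 (inter_mem ht hQev)
  obtain ⟨R₂, hR₂, hball₂⟩ := Metric.nhds_basis_closedBall.mem_iff.1 hC
  set R := min R₁ R₂ with hR
  have hR0 : 0 < R := lt_min hR₁ hR₂
  have inball : ∀ z : ℝ × ℝ, |z.1| ≤ R → |z.2| ≤ R → z ∈ t ∧ ContinuousAt Q z ∧
      1 / 2 < Q z / Q₀ ∧ Q z / Q₀ < 2 := fun z h1 h2 => by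
    refine hball ?_
    rw [Metric.mem_closedBall, Prod.dist_eq]
    simp only [Real.dist_eq, sub_zero]
    exact max_le (h1.trans (min_le_left _ _)) (h2.trans (min_le_left _ _))
  set c : ℝ × ℝ → ℝ × ℝ := fun z => (dkClamp R z.1, dkClamp R z.2) with hc
  have hcc : Continuous c :=
    ((dkClamp_cont R).comp continuous_fst).prodMk ((dkClamp_cont R).comp continuous_snd)
  have hcb : ∀ z, c z ∈ t ∧ ContinuousAt Q (c z) ∧ 1 / 2 < Q (c z) / Q₀ ∧ Q (c z) / Q₀ < 2 :=
    fun z => inball _ (dkClamp_abs hR0.le _) (dkClamp_abs hR0.le _)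
  have hcid : ∀ z : ℝ × ℝ, |z.1| ≤ R → |z.2| ≤ R → c z = z := fun z h1 h2 => by
    rw [hc]; simp only; rw [dkClamp_id h1, dkClamp_id h2]
  have fc : Continuous fun z => f₀ (c z) := hLip.continuousOn.comp_continuous hcc fun z => (hcb z).1
  have Qc : Continuous fun z => Q (c z) := continuous_iff_continuousAt.2 fun z =>
    ContinuousAt.comp (f := c) (g := Q) (hcb z).2.1 hcc.continuousAt
  have lip0 : ∀ z ∈ t, ∀ z' ∈ t, |f₀ z - f₀ z'| ≤ K * max |z.1 - z'.1| |z.2 - z'.2| := by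
    intro z hz z' hz'
    have := hLip.dist_le_mul z hz z' hz'
    rwa [Real.dist_eq, Prod.dist_eq, Real.dist_eq, Real.dist_eq] at this
  have hK : ∀ x x' y, |f₀ (c (x, y)) - f₀ (c (x', y))| ≤ K * |x - x'| := by
    intro x x' y
    refine (lip0 _ (hcb _).1 _ (hcb _).1).trans ?_
    refine mul_le_mul_of_nonneg_left ?_ K.2
    rw [hc]
    simpa using dkClamp_lip R x x'
  have f₀0 : f₀ (0, 0) = 0 := by rw [hf₀]; simp [hP0]
  have h0t : ((0 : ℝ), (0 : ℝ)) ∈ t := (inball (0, 0) (by simpa using hR0.le) (by simpa using hR0.le)).1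
  have hM : ∀ z, |f₀ (c z)| ≤ K * R := by
    intro z
    have := lip0 _ (hcb z).1 _ h0t
    rw [f₀0, sub_zero] at this
    refine this.trans (mul_le_mul_of_nonneg_left ?_ K.2)
    rw [sub_zero, sub_zero]
    exact max_le (dkClamp_abs hR0.le _) (dkClamp_abs hR0.le _)
  obtain ⟨φ, h, F, hbd⟩ := dk_exists_flow (fun z => f₀ (c z)) K (K * R) fc hK hM
  -- the transversality estimate
  set D : ℝ := 2 * C / |Q₀| with hD
  have hQ₀p : 0 < |Q₀| := abs_pos.2 hQ0
  have hD0 : 0 ≤ D := by positivity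
  have hK0 : (0 : ℝ) ≤ K := K.2
  set A : ℝ := 1 / (D + K + 1) with hA
  have hA0 : 0 < A := by positivity
  have hA1 : (D + K) * A < 1 := by
    rw [hA, mul_one_div, div_lt_one (by positivity)]; linarith
  have hAle : A ≤ 1 := by
    rw [hA, div_le_one (by positivity)]; linarith
  set ρ : ℝ := min R (A ^ 2) with hρ
  have hρ0 : 0 < ρ := lt_min hR0 (by positivity)
  refine dk_core _ m hm (fun y => 0 ≤ -ε * y ^ (k - 2)) (dk_impasse k hk ε hε)
    (dk_sign (-ε) (k - 2)) P Q (fun z => f₀ (c z)) (fun z => Q (c z)) F hK (by positivity) hbd Qc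
    hQ0 (fun z => by linarith [(hcb z).2.2.1]) (B := 2 * |Q₀|) (fun z => ?_) hR0 hρ0 ?_ ?_
  · have h1 := (hcb z).2.2
    have h2 : |Q (c z) / Q₀| ≤ 2 := abs_le.2 ⟨by linarith, by linarith⟩
    rwa [abs_div, div_le_iff₀ hQ₀p] at h2
  · intro z h1 h2
    rw [hcid z h1.le h2.le]
    have h3 := (inball z h1.le h2.le).2.2.1
    have h4 : Q z ≠ 0 := fun h0 => by rw [h0] at h3; norm_num at h3
    refine ⟨?_, rfl⟩
    rw [hf₀]; field_simp
  · intro x y hy hyρ hx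
    have hyR : |y| ≤ R := hyρ.trans (min_le_left _ _)
    have hyA : |y| ≤ A ^ 2 := hyρ.trans (min_le_right _ _)
    have hy1 : |y| ≤ 1 := hyA.trans (pow_le_one₀ hA0.le hAle)
    have hxy : |x| ≤ |y| := by
      rw [hx]
      calc |y| ^ m ≤ |y| ^ (1 : ℝ) := Real.rpow_le_rpow_of_exponent_ge hy hy1 hm
        _ = |y| := Real.rpow_one _
    have hxR : |x| ≤ R := hxy.trans hyR
    rw [hcid (x, y) hxR hyR]
    have hb0 := inball (0, y) (by simpa using hR0.le) hyR
    have hb1 := inball (x, y) hxR hyR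
    have l1 := lip0 _ hb1.1 _ hb0.1
    simp only [sub_zero, sub_self, abs_zero] at l1
    rw [max_eq_left (abs_nonneg _)] at l1
    have l2 : |f₀ (0, y)| ≤ D * |y| ^ N := by
      have h1 : |P (0, y)| ≤ C * |y| ^ N := by
        refine hball₂ ?_
        rw [Metric.mem_closedBall, Real.dist_eq, sub_zero]
        exact hyR.trans (min_le_right _ _)
      have h2 : |Q₀| / 2 ≤ |Q (0, y)| := by
        have h3 := hb0.2.2.1.le.trans (le_abs_self _)
        rw [abs_div, le_div_iff₀ hQ₀p] at h3
        linarith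
      rw [hf₀]
      simp only
      rw [abs_div, hD]
      calc |P (0, y)| / |Q (0, y)| ≤ (C * |y| ^ N) / (|Q₀| / 2) :=
            div_le_div₀ (by positivity) h1 (by positivity) h2
        _ = _ := by field_simp
    have l3 : |y| ^ N ≤ |y| ^ (m - 1) * √|y| := by
      rw [Real.sqrt_eq_rpow, ← Real.rpow_add hy, ← Real.rpow_natCast]
      refine Real.rpow_le_rpow_of_exponent_ge hy hy1 ?_
      have : k ≤ 2 * N + 3 - 0 := by omega
      have h5 : (k : ℝ) ≤ 2 * N + 3 := by exact_mod_cast this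
      rw [hmdef]; linarith
    have hsq : √|y| ≤ A := by
      rw [Real.sqrt_le_left hA0.le]; exact hyA
    have l4 : |x| ≤ |y| ^ (m - 1) * √|y| := by
      rw [hx]
      have h6 : |y| ^ m = |y| ^ (m - 1) * |y| := by
        rw [← Real.rpow_add_one hy.ne']; congr 1; ring
      rw [h6]
      refine mul_le_mul_of_nonneg_left ?_ (by positivity)
      refine Real.le_sqrt_of_sq_le ?_
      nlinarith
    have hpos : 0 < |y| ^ (m - 1) := Real.rpow_pos_of_pos hy _
    calc |f₀ (x, y)| = |(f₀ (x, y) - f₀ (0, y)) + f₀ (0, y)| := by ring_nf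
      _ ≤ K * |x| + D * |y| ^ N := (abs_add_le _ _).trans (add_le_add l1 l2)
      _ ≤ K * (|y| ^ (m - 1) * √|y|) + D * (|y| ^ (m - 1) * √|y|) := by gcongr
      _ = (D + K) * √|y| * |y| ^ (m - 1) := by ring
      _ ≤ (D + K) * A * |y| ^ (m - 1) := by gcongr
      _ < m * |y| ^ (m - 1) := by
        refine mul_lt_mul_of_pos_right (by linarith) hpos
end

section
/- Let δ(x, y) = y³ − y·x³ (an E₇-type singular impasse curve). Let X = (P, Q) be real-analytic on a neighborhood of the origin in ℝ² with Q(0,0) ≠ 0. Then the constrained system (X, δ) is orientation-preserving C⁰-orbitally equivalent at (0, 0) to the constrained system (Y, δ), where Y is the constant vector field Y ≡ (P(0,0), Q(0,0)). -/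
open Set Filter Topology

namespace E7

theorem orbital_symm {X Y : ℝ × ℝ → ℝ × ℝ} {δ γ : ℝ × ℝ → ℝ} {p₁ p₂ : ℝ × ℝ}
    (h : OrbitallyEquivAt X δ p₁ Y γ p₂) : OrbitallyEquivAt Y γ p₂ X δ p₁ := by
  obtain ⟨V₁, V₂, Φ, Ψ, h1, h2, h3, h4, h5, h6, h7, h8, h9, h10, h11, h12, h13, h14⟩ := h
  refine ⟨V₂, V₁, Ψ, Φ, h2, h1, h4, h3, h6, h5, h8, h7, h10, h9, ?_, ?_, h14, h13⟩
  · rw [← h11, h9 _ h3]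
  · rw [← h12, image_image]
    ext z
    constructor
    · rintro ⟨w, hw, rfl⟩
      simpa only [h9 w hw.2] using hw
    · intro hz
      exact ⟨z, hz, h9 z hz.2⟩

theorem phase_mono {X : ℝ × ℝ → ℝ × ℝ} {V W : Set (ℝ × ℝ)} {J : Set ℝ} {c : ℝ → ℝ × ℝ}
    (h : IsPhaseCurve X V J c) (hW : ∀ t ∈ J, c t ∈ V → c t ∈ W) : IsPhaseCurve X W J c :=
  ⟨h.1, h.2.1, fun t ht => hW t ht (h.2.2.1 t ht), h.2.2.2⟩

theorem orbital_trans {X Y Z : ℝ × ℝ → ℝ × ℝ} {δ γ η : ℝ × ℝ → ℝ} {p₁ p₂ p₃ : ℝ × ℝ}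
    (h : OrbitallyEquivAt X δ p₁ Y γ p₂) (k : OrbitallyEquivAt Y γ p₂ Z η p₃) :
    OrbitallyEquivAt X δ p₁ Z η p₃ := by
  obtain ⟨V₁, V₂, Φ, Ψ, h1, h2, h3, h4, h5, h6, h7, h8, h9, h10, h11, h12, h13, h14⟩ := h
  obtain ⟨W₁, W₂, Φ', Ψ', k1, k2, k3, k4, k5, k6, k7, k8, k9, k10, k11, k12, k13, k14⟩ := k
  have hδ : ∀ z ∈ V₁, (δ z = 0 ↔ γ (Φ z) = 0) := by
    intro z hz
    constructor
    · intro hd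
      have : Φ z ∈ {z | γ z = 0} ∩ V₂ := by rw [← h12]; exact ⟨z, ⟨hd, hz⟩, rfl⟩
      exact this.1
    · intro hd
      have : Φ z ∈ Φ '' ({z | δ z = 0} ∩ V₁) := by rw [h12]; exact ⟨hd, h7 hz⟩
      obtain ⟨w, hw, hwz⟩ := this
      have : w = z := by rw [← h9 w hw.2, hwz, h9 z hz]
      rw [← this]; exact hw.1
  have hγ : ∀ z ∈ W₁, (γ z = 0 ↔ η (Φ' z) = 0) := by
    intro z hz
    constructor
    · intro hd
      have : Φ' z ∈ {z | η z = 0} ∩ W₂ := by rw [← k12]; exact ⟨z, ⟨hd, hz⟩, rfl⟩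
      exact this.1
    · intro hd
      have : Φ' z ∈ Φ' '' ({z | γ z = 0} ∩ W₁) := by rw [k12]; exact ⟨hd, k7 hz⟩
      obtain ⟨w, hw, hwz⟩ := this
      have : w = z := by rw [← k9 w hw.2, hwz, k9 z hz]
      rw [← this]; exact hw.1
  have m1 : MapsTo (Φ' ∘ Φ) (V₁ ∩ Φ ⁻¹' W₁) (W₂ ∩ Ψ' ⁻¹' V₂) := by
    rintro z ⟨hz, hz'⟩
    refine ⟨k7 hz', ?_⟩
    simp only [mem_preimage, Function.comp] at *
    rw [k9 _ hz']; exact h7 hz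
  have m2 : MapsTo (Ψ ∘ Ψ') (W₂ ∩ Ψ' ⁻¹' V₂) (V₁ ∩ Φ ⁻¹' W₁) := by
    rintro z ⟨hz, hz'⟩
    refine ⟨h8 hz', ?_⟩
    simp only [mem_preimage, Function.comp] at *
    rw [h10 _ hz']; exact k8 hz
  have i2 : ∀ z ∈ W₂ ∩ Ψ' ⁻¹' V₂, (Φ' ∘ Φ) ((Ψ ∘ Ψ') z) = z := by
    rintro z ⟨hz, hz'⟩
    simp only [mem_preimage, Function.comp] at *
    rw [h10 _ hz', k10 _ hz]
  refine ⟨V₁ ∩ Φ ⁻¹' W₁, W₂ ∩ Ψ' ⁻¹' V₂, Φ' ∘ Φ, Ψ ∘ Ψ', h5.isOpen_inter_preimage h1 k1,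
    k6.isOpen_inter_preimage k2 h2, ⟨h3, by simpa [h11] using k3⟩,
    ⟨k4, by simpa [← k11, k9 _ k3] using h4⟩, ?_, ?_, m1, m2, ?_, i2, by simp [h11, k11], ?_,
    ?_, ?_⟩
  · exact k5.comp (h5.mono inter_subset_left) (fun z hz => hz.2)
  · exact h6.comp (k6.mono inter_subset_left) (fun z hz => hz.2)
  · rintro z ⟨hz, hz'⟩
    simp only [mem_preimage, Function.comp] at *
    rw [k9 _ hz', h9 _ hz]
  · ext z
    constructor
    · rintro ⟨w, ⟨hw, hw'⟩, rfl⟩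
      exact ⟨(hγ _ hw'.2).1 ((hδ _ hw'.1).1 hw), m1 hw'⟩
    · rintro ⟨hz, hz'⟩
      refine ⟨(Ψ ∘ Ψ') z, ⟨?_, m2 hz'⟩, i2 z hz'⟩
      have := m2 hz'
      refine (hδ _ this.1).2 ((hγ _ this.2).2 ?_)
      have e := i2 z hz'
      simp only [Function.comp] at e ⊢
      rw [e]; exact hz
  · intro J c hc
    obtain ⟨J', d, τ, hd, t1, t2, t3, t4⟩ := h13 J c
      (phase_mono hc fun t _ h => ⟨h.1.1, h.2⟩)
    obtain ⟨J'', e, σ, he, s1, s2, s3, s4⟩ := k13 J' d (phase_mono hd fun t ht h => by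
      rw [← t3] at ht
      obtain ⟨t, ht, rfl⟩ := ht
      refine ⟨?_, h.2⟩
      rw [← t4 t ht]; exact (hc.2.2.1 t ht).1.2)
    have mt : MapsTo τ J J' := by rw [← t3]; exact mapsTo_image _ _
    have key : ∀ t ∈ J, (Φ' ∘ Φ) (c t) = e ((σ ∘ τ) t) := by
      intro t ht
      simp only [Function.comp]
      rw [t4 t ht, s4 _ (mt ht)]
    refine ⟨J'', e, σ ∘ τ, ?_, s1.comp t1 mt, s2.comp t2 mt, by rw [image_comp, t3, s3], key⟩
    refine phase_mono he fun t ht h => ?_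
    rw [← s3, ← t3, ← image_comp] at ht
    obtain ⟨t, ht, rfl⟩ := ht
    refine ⟨?_, h.2⟩
    rw [← key t ht]
    exact m1 (hc.2.2.1 t ht).1
  · intro J c hc
    obtain ⟨J', d, τ, hd, t1, t2, t3, t4⟩ := k14 J c
      (phase_mono hc fun t _ h => ⟨h.1.1, h.2⟩)
    obtain ⟨J'', e, σ, he, s1, s2, s3, s4⟩ := h14 J' d (phase_mono hd fun t ht h => by
      rw [← t3] at ht
      obtain ⟨t, ht, rfl⟩ := ht
      refine ⟨?_, h.2⟩
      rw [← t4 t ht]; exact (hc.2.2.1 t ht).1.2)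
    have mt : MapsTo τ J J' := by rw [← t3]; exact mapsTo_image _ _
    have key : ∀ t ∈ J, (Ψ ∘ Ψ') (c t) = e ((σ ∘ τ) t) := by
      intro t ht
      simp only [Function.comp]
      rw [t4 t ht, s4 _ (mt ht)]
    refine ⟨J'', e, σ ∘ τ, ?_, s1.comp t1 mt, s2.comp t2 mt, by rw [image_comp, t3, s3], key⟩
    refine phase_mono he fun t ht h => ?_
    rw [← s3, ← t3, ← image_comp] at ht
    obtain ⟨t, ht, rfl⟩ := ht
    refine ⟨?_, h.2⟩
    rw [← key t ht]
    exact m2 (hc.2.2.1 t ht).1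

/-- Uniqueness of solutions of scalar ODEs on an interval. -/
theorem ode_unique {v : ℝ → ℝ → ℝ} {K : NNReal} {J : Set ℝ} (hJ : J.OrdConnected)
    (hv : ∀ t ∈ J, LipschitzWith K (v t)) {f g : ℝ → ℝ}
    (hf : ∀ t ∈ J, HasDerivWithinAt f (v t (f t)) J t)
    (hg : ∀ t ∈ J, HasDerivWithinAt g (v t (g t)) J t)
    {t₀ : ℝ} (ht₀ : t₀ ∈ J) (h : f t₀ = g t₀) {t : ℝ} (ht : t ∈ J) : f t = g t := by
  have cf : ContinuousOn f J := fun t ht => (hf t ht).continuousWithinAt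
  have cg : ContinuousOn g J := fun t ht => (hg t ht).continuousWithinAt
  rcases le_total t₀ t with hle | hle
  · have hsub : Icc t₀ t ⊆ J := hJ.out ht₀ ht
    have hn : ∀ x ∈ Ico t₀ t, J ∈ 𝓝[≥] x := fun x hx =>
      mem_of_superset (Icc_mem_nhdsGE hx.2) ((Icc_subset_Icc_left hx.1).trans hsub)
    exact ODE_solution_unique_of_mem_Icc_right (s := fun _ => univ) (K := K) (v := v)
      (fun x hx => (hv x (hsub ⟨hx.1, hx.2.le⟩)).lipschitzOnWith)
      (cf.mono hsub)
      (fun x hx => (hf x (hsub ⟨hx.1, hx.2.le⟩)).mono_of_mem_nhdsWithin (hn x hx))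
      (fun _ _ => mem_univ _) (cg.mono hsub)
      (fun x hx => (hg x (hsub ⟨hx.1, hx.2.le⟩)).mono_of_mem_nhdsWithin (hn x hx))
      (fun _ _ => mem_univ _) h ⟨hle, le_rfl⟩
  · have hsub : Icc t t₀ ⊆ J := hJ.out ht ht₀
    have hn : ∀ x ∈ Ioc t t₀, J ∈ 𝓝[≤] x := fun x hx =>
      mem_of_superset (Icc_mem_nhdsLE hx.1) ((Icc_subset_Icc_right hx.2).trans hsub)
    exact ODE_solution_unique_of_mem_Icc_left (s := fun _ => univ) (K := K) (v := v)
      (fun x hx => (hv x (hsub ⟨hx.1.le, hx.2⟩)).lipschitzOnWith)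
      (cf.mono hsub)
      (fun x hx => (hf x (hsub ⟨hx.1.le, hx.2⟩)).mono_of_mem_nhdsWithin (hn x hx))
      (fun _ _ => mem_univ _) (cg.mono hsub)
      (fun x hx => (hg x (hsub ⟨hx.1.le, hx.2⟩)).mono_of_mem_nhdsWithin (hn x hx))
      (fun _ _ => mem_univ _) h ⟨le_rfl, hle⟩

/-- A family of increasing bijections of the line, continuous in the parameter, has a jointly
continuous inverse. -/
theorem continuous_fiber_inv {f g : ℝ → ℝ → ℝ} (hm : ∀ s, StrictMono (f s))
    (hfg : ∀ s y, f s (g s y) = y) (hc : ∀ y, Continuous fun s => f s y) :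
    Continuous fun z : ℝ × ℝ => g z.1 z.2 := by
  rw [continuous_iff_lower_upperSemicontinuous, lowerSemicontinuous_iff_isOpen_preimage,
    upperSemicontinuous_iff_isOpen_preimage]
  refine ⟨fun b => ?_, fun b => ?_⟩
  · have : (fun z : ℝ × ℝ => g z.1 z.2) ⁻¹' Ioi b = {z | f z.1 b < z.2} := by
      ext z
      simp only [mem_preimage, mem_Ioi, mem_ofPred_eq]
      rw [← (hm z.1).lt_iff_lt, hfg]
    rw [this]
    exact isOpen_lt ((hc b).comp continuous_fst) continuous_snd
  · have : (fun z : ℝ × ℝ => g z.1 z.2) ⁻¹' Iio b = {z | z.2 < f z.1 b} := by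
      ext z
      simp only [mem_preimage, mem_Iio, mem_ofPred_eq]
      rw [← (hm z.1).lt_iff_lt, hfg]
    rw [this]
    exact isOpen_lt continuous_snd ((hc b).comp continuous_fst)

theorem continuous_fiber {f g : ℝ → ℝ → ℝ} (hm : ∀ s, StrictMono (f s))
    (hfg : ∀ s y, f s (g s y) = y) (hgf : ∀ s y, g s (f s y) = y)
    (hc : ∀ y, Continuous fun s => f s y) :
    Continuous fun z : ℝ × ℝ => f z.1 z.2 := by
  have h := continuous_fiber_inv hm hfg hc
  refine continuous_fiber_inv (f := g) ?_ hgf ?_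
  · intro s a b hab
    rw [← (hm s).lt_iff_lt, hfg, hfg]; exact hab
  · intro y
    exact h.comp (continuous_id.prodMk continuous_const)

/-- Clamp to `[-1,1]`. -/
noncomputable def cl (y : ℝ) : ℝ := max (-1) (min y 1)

theorem cl_mem (y : ℝ) : cl y ∈ Icc (-1 : ℝ) 1 := by
  unfold cl; constructor
  · exact le_max_left _ _
  · exact max_le (by norm_num) (min_le_right _ _)

theorem cl_of_mem {y : ℝ} (h : y ∈ Icc (-1 : ℝ) 1) : cl y = y := by
  unfold cl; rw [min_eq_left h.2, max_eq_right h.1]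

theorem continuous_cl : Continuous cl := by unfold cl; fun_prop

theorem cl_lip (y y' : ℝ) : |cl y - cl y'| ≤ |y - y'| := by
  unfold cl
  calc _ ≤ |min y 1 - min y' 1| := by
        simpa [max_comm] using abs_max_sub_max_le_abs (min y 1) (min y' 1) (-1)
    _ ≤ _ := abs_min_sub_min_le_max _ _ _ _ |>.trans (by simp)

/-- The straightened flow of `x' = g(x,y)`. Here `φ y s` is the position at `y` of the orbit
starting at `s` for `y = 0`, and `S y` is the inverse of `φ y`. -/
theorem exists_flow (g : ℝ → ℝ → ℝ) (M K : NNReal) (hM : ∀ x y, |g x y| ≤ M)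
    (hK : ∀ y, LipschitzWith K (fun x => g x y)) (hc : ∀ x, Continuous (g x)) :
    ∃ φ S : ℝ → ℝ → ℝ, (Continuous fun z : ℝ × ℝ => φ z.1 z.2) ∧
      (Continuous fun z : ℝ × ℝ => S z.1 z.2) ∧
      (∀ y s, S y (φ y s) = s) ∧ (∀ y x, φ y (S y x) = x) ∧ (∀ s, φ 0 s = s) ∧
      (∀ y, StrictMono (φ y)) ∧ (∀ s y y', |φ y s - φ y' s| ≤ M * |y - y'|) ∧
      (∀ s, ∀ y ∈ Ioo (-1 : ℝ) 1, HasDerivAt (fun y => φ y s) (g (φ y s) y) y) := by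
  have ex : ∀ t₀ x₀ : ℝ, ∃ α : ℝ → ℝ, α (cl t₀) = x₀ ∧
      ∀ t ∈ Icc (-1 : ℝ) 1, HasDerivWithinAt α (g (α t) t) (Icc (-1) 1) t := by
    intro t₀ x₀
    have : IsPicardLindelof (fun t x => g x t) (⟨cl t₀, cl_mem t₀⟩ : Icc (-1 : ℝ) 1) x₀
        (2 * M) 0 M K := by
      refine ⟨fun t _ => (hK t).lipschitzOnWith, fun x _ => (hc x).continuousOn,
        fun t _ x _ => hM x t, ?_⟩
      have := cl_mem t₀
      have : max (1 - cl t₀) (cl t₀ - (-1)) ≤ 2 :=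
        max_le (by linarith [this.1]) (by linarith [this.2])
      have h2 := mul_le_mul_of_nonneg_left this M.coe_nonneg
      push_cast
      linarith
    exact this.exists_eq_forall_mem_Icc_hasDerivWithinAt₀
  choose α hα hα' using ex
  have uniq : ∀ t₀ x₀ t₁ x₁ : ℝ, ∀ t ∈ Icc (-1 : ℝ) 1, α t₀ x₀ t = α t₁ x₁ t →
      ∀ t' ∈ Icc (-1 : ℝ) 1, α t₀ x₀ t' = α t₁ x₁ t' := by
    intro t₀ x₀ t₁ x₁ t ht h t' ht'
    exact ode_unique (v := fun t x => g x t) ordConnected_Icc (fun t _ => hK t) (hα' t₀ x₀)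
      (hα' t₁ x₁) ht h ht'
  have z0 : (0 : ℝ) ∈ Icc (-1 : ℝ) 1 := by constructor <;> norm_num
  have cl0 : cl 0 = 0 := cl_of_mem z0
  let φ : ℝ → ℝ → ℝ := fun y s => α 0 s (cl y)
  let S : ℝ → ℝ → ℝ := fun y x => α y x 0
  have hα0 : ∀ s, α 0 s 0 = s := fun s => by simpa [cl0] using hα 0 s
  have Sφ : ∀ y s, S y (φ y s) = s := by
    intro y s
    have := uniq y (φ y s) 0 s (cl y) (cl_mem y) (hα _ _) 0 z0
    simp only [S]
    rw [this, hα0]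
  have φS : ∀ y x, φ y (S y x) = x := by
    intro y x
    have := uniq 0 (S y x) y x 0 z0 (hα0 _) (cl y) (cl_mem y)
    simp only [φ]
    rw [this, hα]
  have lip : ∀ s y y', |φ y s - φ y' s| ≤ M * |y - y'| := by
    intro s y y'
    have := (convex_Icc (-1 : ℝ) 1).norm_image_sub_le_of_norm_hasDerivWithin_le (hα' 0 s)
      (fun x _ => hM _ _) (cl_mem y') (cl_mem y)
    calc _ ≤ M * |cl y - cl y'| := this
      _ ≤ _ := mul_le_mul_of_nonneg_left (cl_lip _ _) M.coe_nonneg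
  have cy : ∀ s, Continuous fun y => φ y s := by
    intro s
    refine (LipschitzWith.of_dist_le_mul (K := M) fun y y' => ?_).continuous
    simpa [Real.dist_eq] using lip s y y'
  have mono : ∀ y, StrictMono (φ y) := by
    intro y s s' hss
    by_contra hcon
    push Not at hcon
    -- intermediate value theorem
    have hcont : Continuous fun y => φ y s' - φ y s := (cy s').sub (cy s)
    have h0 : φ 0 s' - φ 0 s = s' - s := by simp only [φ, cl0, hα0]
    obtain ⟨t, ht⟩ : ∃ t, φ t s' - φ t s = 0 := by
      have := mem_range_of_exists_le_of_exists_ge hcont ⟨y, sub_nonpos.2 hcon⟩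
        ⟨0, by rw [h0]; linarith⟩
      exact this
    have h1 : φ t s' = φ t s := by linarith
    have := Sφ t s'
    rw [h1, Sφ] at this
    exact hss.ne this
  refine ⟨φ, S, continuous_fiber mono φS Sφ cy, continuous_fiber_inv mono φS cy, Sφ, φS,
    fun s => by simp only [φ, cl0, hα0], mono, lip, ?_⟩
  intro s y hy
  have hy' := Ioo_subset_Icc_self hy
  have h1 := (hα' 0 s y hy').hasDerivAt (Icc_mem_nhds hy.1 hy.2)
  have : φ y s = α 0 s y := by simp only [φ]; rw [cl_of_mem hy']
  rw [this]
  refine h1.congr_of_eventuallyEq ?_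
  filter_upwards [Icc_mem_nhds hy.1 hy.2] with t ht
  simp only [φ]; rw [cl_of_mem ht]


theorem exists_inv {f : ℝ → ℝ} (hm : StrictMono f) (hs : Function.Surjective f) :
    ∃ a : ℝ → ℝ, Continuous a ∧ StrictMono a ∧ (∀ x, a (f x) = x) ∧ ∀ y, f (a y) = y := by
  let e := hm.orderIsoOfSurjective f hs
  refine ⟨e.symm, e.symm.continuous, e.symm.strictMono, fun x => e.symm_apply_apply x,
    fun y => e.apply_symm_apply y⟩

theorem surj_of_near {f : ℝ → ℝ} (hc : Continuous f) {M : ℝ} (h : ∀ x, |f x - x| ≤ M) :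
    Function.Surjective f := by
  intro y
  refine mem_range_of_exists_le_of_exists_ge hc ⟨y - M, ?_⟩ ⟨y + M, ?_⟩
  · have := (abs_le.1 (h (y - M))).2; linarith
  · have := (abs_le.1 (h (y + M))).1; linarith

theorem graph_inv {φ S : ℝ → ℝ → ℝ} {M L : ℝ} (cS : Continuous fun z : ℝ × ℝ => S z.1 z.2)
    (φS : ∀ y x, φ y (S y x) = x) (φ0 : ∀ s, φ 0 s = s)
    (mono : ∀ y, StrictMono (φ y)) (lip : ∀ s y y', |φ y s - φ y' s| ≤ M * |y - y'|)
    (hM : 0 ≤ M) (k : ℝ → ℝ) (hk : ∀ x x', |k x - k x'| ≤ L * |x - x'|) (hk1 : ∀ x, |k x| ≤ 1)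
    (hML : M * L < 1) (hkc : Continuous k) :
    ∃ a : ℝ → ℝ, Continuous a ∧ StrictMono a ∧ (∀ x, a (S (k x) x) = x) ∧
      ∀ s, S (k (a s)) (a s) = s := by
  refine exists_inv (f := fun x => S (k x) x) ?_ (surj_of_near (M := M) ?_ ?_)
  · intro x x' hx
    have h1 := lip (S (k x) x) (k x') (k x)
    rw [φS] at h1
    have h2 := mul_le_mul_of_nonneg_left (hk x' x) hM
    rw [abs_of_pos (sub_pos.2 hx)] at h2
    have h3 := (abs_le.1 h1).2
    have h4 : M * L * (x' - x) < 1 * (x' - x) :=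
      mul_lt_mul_of_pos_right hML (sub_pos.2 hx)
    show S (k x) x < S (k x') x'
    rw [← (mono (k x')).lt_iff_lt, φS]
    linarith
  · exact cS.comp (hkc.prodMk continuous_id)
  · intro x
    have h1 := lip (S (k x) x) 0 (k x)
    rw [φS, φ0] at h1
    refine h1.trans ?_
    have := mul_le_mul_of_nonneg_left (hk1 x) hM
    simpa using this

theorem time_change (r : ℝ → ℝ) (hr : Continuous r) (hr2 : ∀ y, 1 / 2 ≤ r y) :
    ∃ T Ti : ℝ → ℝ, StrictMono T ∧ Continuous T ∧ (∀ y, Ti (T y) = y) ∧ (∀ t, T (Ti t) = t) ∧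
      ∀ t, HasDerivAt Ti (r (Ti t))⁻¹ t := by
  let T : ℝ → ℝ := fun y => ∫ x in (0 : ℝ)..y, r x
  have hT : ∀ y, HasDerivAt T (r y) y := fun y => (hr.integral_hasStrictDerivAt 0 y).hasDerivAt
  have cT : Continuous T := continuous_iff_continuousAt.2 fun y => (hT y).continuousAt
  have mT : StrictMono T := strictMono_of_hasDerivAt_pos hT fun y => by
    have := hr2 y; linarith
  have T0 : T 0 = 0 := by simp [T]
  have mono2 : Monotone fun y => T y - y / 2 := by
    refine monotone_of_deriv_nonneg ?_ ?_
    · exact fun y => ((hT y).sub ((hasDerivAt_id y).div_const 2)).differentiableAt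
    · intro y
      have := ((hT y).sub ((hasDerivAt_id y).div_const 2)).deriv
      erw [this]
      have := hr2 y; linarith
  have sT : Function.Surjective T := by
    intro y
    refine mem_range_of_exists_le_of_exists_ge cT ⟨-2 * |y|, ?_⟩ ⟨2 * |y|, ?_⟩
    · have := mono2 (show -2 * |y| ≤ 0 by have := abs_nonneg y; linarith)
      simp only [T0] at this
      have := neg_abs_le y; linarith
    · have := mono2 (show 0 ≤ 2 * |y| by have := abs_nonneg y; linarith)
      simp only [T0] at this
      have := le_abs_self y; linarith
  obtain ⟨Ti, h1, h2, h3, h4⟩ := exists_inv mT sT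
  refine ⟨T, Ti, mT, cT, h3, h4, fun t => ?_⟩
  refine HasDerivAt.of_local_left_inverse h1.continuousAt (hT _) ?_ (Eventually.of_forall h4)
  have := hr2 (Ti t); linarith

/-- Increasing piecewise linear map of `[0,∞)` sending `u` to `w`. -/
noncomputable def F (u w y : ℝ) : ℝ := if y ≤ u then y * w / u else y - u + w

/-- Admissible pairs. -/
def Good (u w : ℝ) : Prop := 0 ≤ u ∧ 0 ≤ w ∧ (u = 0 ↔ w = 0)

theorem Good.symm {u w : ℝ} (h : Good u w) : Good w u := ⟨h.2.1, h.1, h.2.2.symm⟩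

theorem Good.cases {u w : ℝ} (h : Good u w) : (u = 0 ∧ w = 0) ∨ (0 < u ∧ 0 < w) := by
  obtain ⟨h1, h2, h3⟩ := h
  rcases h1.eq_or_lt with h | h
  · exact Or.inl ⟨h.symm, h3.1 h.symm⟩
  · refine Or.inr ⟨h, lt_of_le_of_ne h2 fun h' => ?_⟩
    exact h.ne' (h3.2 h'.symm)

theorem F_zero (u w : ℝ) (h : Good u w) : F u w 0 = 0 := by
  unfold F; rw [if_pos h.1]; simp

theorem F_self (u w : ℝ) (h : Good u w) : F u w u = w := by
  unfold F; rw [if_pos le_rfl]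
  rcases h.cases with ⟨rfl, rfl⟩ | ⟨h1, h2⟩
  · simp
  · field_simp

theorem F_mono {u w : ℝ} (h : Good u w) {y y' : ℝ} (hy : 0 ≤ y) (hyy : y < y') :
    F u w y < F u w y' := by
  unfold F
  rcases h.cases with ⟨rfl, rfl⟩ | ⟨h1, h2⟩
  · split_ifs <;> simp <;> linarith
  · have hp : 0 < w / u := by positivity
    have e : u * (w / u) = w := by field_simp
    simp only [mul_div_assoc]
    split_ifs with a b
    · exact mul_lt_mul_of_pos_right hyy hp
    · have := mul_le_mul_of_nonneg_right a hp.le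
      linarith
    · linarith
    · linarith

theorem F_nonneg {u w : ℝ} (h : Good u w) {y : ℝ} (hy : 0 ≤ y) : 0 ≤ F u w y := by
  rcases hy.eq_or_lt with rfl | hy
  · rw [F_zero u w h]
  · rw [← F_zero u w h]; exact (F_mono h le_rfl hy).le

theorem F_inv {u w : ℝ} (h : Good u w) {y : ℝ} (hy : 0 ≤ y) : F w u (F u w y) = y := by
  rcases h.cases with ⟨rfl, rfl⟩ | ⟨h1, h2⟩
  · unfold F; split_ifs <;> simp_all <;> linarith
  · have hp : 0 < w / u := by positivity
    have e : u * (w / u) = w := by field_simp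
    by_cases a : y ≤ u
    · have e1 : F u w y = y * w / u := by unfold F; rw [if_pos a]
      have : y * w / u ≤ w := by
        have := mul_le_mul_of_nonneg_right a hp.le
        rw [mul_div_assoc]; linarith
      rw [e1]; unfold F; rw [if_pos this]; field_simp
    · have e1 : F u w y = y - u + w := by unfold F; rw [if_neg a]
      rw [e1]; unfold F; rw [if_neg (by linarith)]; ring

theorem F_formula {u w y : ℝ} (hu : 0 < u) :
    F u w y = min y u * w / u + max (y - u) 0 := by
  unfold F
  split_ifs with a
  · rw [min_eq_left a, max_eq_right (by linarith)]; ring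
  · rw [min_eq_right (by linarith), max_eq_left (by linarith)]; field_simp; ring

theorem F_cont {u w : ℝ → ℝ} (h : ∀ s, Good (u s) (w s)) (cu : Continuous u) (cw : Continuous w)
    {y : ℝ} (hy : 0 ≤ y) : Continuous fun s => F (u s) (w s) y := by
  rcases hy.eq_or_lt with rfl | hy
  · simp only [F_zero _ _ (h _)]; exact continuous_const
  refine continuous_iff_continuousAt.2 fun s => ?_
  rcases (h s).cases with ⟨h1, h2⟩ | ⟨h1, h2⟩
  · have ev : ∀ᶠ t in 𝓝 s, u t < y := cu.continuousAt.eventually_lt_const (by rw [h1]; exact hy)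
    have : (fun s => F (u s) (w s) y) =ᶠ[𝓝 s] fun s => y - u s + w s := by
      filter_upwards [ev] with t ht
      unfold F; rw [if_neg (by linarith)]
    refine ContinuousAt.congr_of_eventuallyEq ?_ this
    fun_prop
  · have ev : ∀ᶠ t in 𝓝 s, 0 < u t := cu.continuousAt.eventually_const_lt h1
    have : (fun s => F (u s) (w s) y) =ᶠ[𝓝 s]
        fun s => min y (u s) * w s / u s + max (y - u s) 0 := by
      filter_upwards [ev] with t ht
      exact F_formula ht
    refine ContinuousAt.congr_of_eventuallyEq ?_ this
    have := h1.ne'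
    fun_prop (disch := assumption)

/-- Two-sided version of `F`. -/
noncomputable def G (u w u' w' y : ℝ) : ℝ := if 0 ≤ y then F u w y else -F u' w' (-y)

theorem G_mono {u w u' w' : ℝ} (h : Good u w) (h' : Good u' w') : StrictMono (G u w u' w') := by
  intro y y' hy
  unfold G
  split_ifs with a b b
  · exact F_mono h a hy
  · linarith
  · have := F_nonneg h b
    have := F_mono h' le_rfl (show 0 < -y by linarith)
    rw [F_zero _ _ h'] at this
    linarith
  · have := F_mono h' (show 0 ≤ -y' by linarith) (show -y' < -y by linarith)
    linarith

theorem G_inv {u w u' w' : ℝ} (h : Good u w) (h' : Good u' w') (y : ℝ) :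
    G w u w' u' (G u w u' w' y) = y := by
  by_cases a : 0 ≤ y
  · have e : G u w u' w' y = F u w y := by unfold G; rw [if_pos a]
    rw [e]; unfold G; rw [if_pos (F_nonneg h a), F_inv h a]
  · have e : G u w u' w' y = -F u' w' (-y) := by unfold G; rw [if_neg a]
    have := F_mono h' le_rfl (show 0 < -y by linarith)
    rw [F_zero _ _ h'] at this
    rw [e]; unfold G; rw [if_neg (by linarith), neg_neg, F_inv h' (by linarith), neg_neg]

theorem G_zero {u w u' w' : ℝ} (h : Good u w) : G u w u' w' 0 = 0 := by
  unfold G; rw [if_pos le_rfl, F_zero _ _ h]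

theorem G_top {u w u' w' : ℝ} (h : Good u w) : G u w u' w' u = w := by
  unfold G; rw [if_pos h.1, F_self _ _ h]

theorem G_bot {u w u' w' : ℝ} (h : Good u w) (h' : Good u' w') : G u w u' w' (-u') = -w' := by
  rcases h'.cases with ⟨h1, h2⟩ | ⟨h1, h2⟩
  · rw [h1, h2, neg_zero, G_zero h]
  · unfold G; rw [if_neg (by linarith), neg_neg, F_self _ _ h']

theorem G_cont {u w u' w' : ℝ → ℝ} (h : ∀ s, Good (u s) (w s)) (cu : Continuous u)
    (cw : Continuous w) (h' : ∀ s, Good (u' s) (w' s)) (cu' : Continuous u')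
    (cw' : Continuous w') :
    Continuous fun z : ℝ × ℝ => G (u z.1) (w z.1) (u' z.1) (w' z.1) z.2 := by
  refine continuous_fiber (f := fun s y => G (u s) (w s) (u' s) (w' s) y)
    (g := fun s y => G (w s) (u s) (w' s) (u' s) y) (fun s => G_mono (h s) (h' s)) ?_ ?_ ?_
  · intro s y; exact G_inv (h s).symm (h' s).symm y
  · intro s y; exact G_inv (h s) (h' s) y
  · intro y
    by_cases a : 0 ≤ y
    · simp only [G, if_pos a]; exact F_cont h cu cw a
    · simp only [G, if_neg a]; exact (F_cont h' cu' cw' (by linarith)).neg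

/-- Truncated cusp function. -/
noncomputable def kap (e x : ℝ) : ℝ := (√(max 0 (min x e))) ^ 3

theorem kap_nonneg (e x : ℝ) : 0 ≤ kap e x := by unfold kap; positivity

theorem kap_cont (e : ℝ) : Continuous (kap e) := by unfold kap; fun_prop

theorem kap_le_one {e : ℝ} (he1 : e ≤ 1) (x : ℝ) : kap e x ≤ 1 := by
  unfold kap
  refine pow_le_one₀ (Real.sqrt_nonneg _) ?_
  refine Real.sqrt_le_iff.2 ⟨zero_le_one, ?_⟩
  rw [one_pow]
  exact max_le zero_le_one ((min_le_right _ _).trans he1)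

theorem kap_zero {e x : ℝ} (he : 0 < e) : kap e x = 0 ↔ x ≤ 0 := by
  unfold kap
  rw [pow_eq_zero_iff (by norm_num), Real.sqrt_eq_zero (le_max_left _ _)]
  constructor
  · intro h
    have := le_max_right 0 (min x e)
    rw [h] at this
    rcases min_le_iff.1 this with h | h
    · exact h
    · linarith
  · intro h
    exact max_eq_left ((min_le_left _ _).trans h)

theorem kap_lip {e : ℝ} (he : 0 < e) (x x' : ℝ) :
    |kap e x - kap e x'| ≤ 2 * √e * |x - x'| := by
  wlog hle : x ≤ x' generalizing x x'
  · rw [abs_sub_comm, abs_sub_comm x]; exact this _ _ (le_of_not_ge hle)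
  set c := max 0 (min x e) with hc
  set c' := max 0 (min x' e) with hc'
  have hcc : c ≤ c' := max_le_max le_rfl (min_le_min hle le_rfl)
  have h0 : 0 ≤ c := le_max_left _ _
  have he' : c' ≤ e := max_le he.le (min_le_right _ _)
  have hd : c' - c ≤ x' - x := by
    have : |c' - c| ≤ |x' - x| := by
      calc _ ≤ |min x' e - min x e| := by
            rw [hc, hc', max_comm 0, max_comm 0]
            exact abs_max_sub_max_le_abs (min x' e) (min x e) 0
        _ ≤ _ := abs_min_sub_min_le_max _ _ _ _ |>.trans (by simp)
    rwa [abs_of_nonneg (by linarith), abs_of_nonneg (by linarith)] at this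
  have k1 : kap e x = √c ^ 3 := rfl
  have k2 : kap e x' = √c' ^ 3 := rfl
  have s1 : √c ^ 2 = c := Real.sq_sqrt h0
  have s2 : √c' ^ 2 = c' := Real.sq_sqrt (h0.trans hcc)
  have t1 : √c ≤ √c' := Real.sqrt_le_sqrt hcc
  have t2 : √c' ≤ √e := Real.sqrt_le_sqrt he'
  have t0 : 0 ≤ √c := Real.sqrt_nonneg _
  rw [k1, k2, abs_sub_comm, abs_sub_comm x, abs_of_nonneg (by linarith : 0 ≤ x' - x),
    abs_of_nonneg (sub_nonneg.2 (pow_le_pow_left₀ t0 t1 3))]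
  generalize √c = α at *
  generalize √c' = β at *
  generalize √e = η at *
  have h1 : β ^ 3 - α ^ 3 ≤ 2 * η * (β ^ 2 - α ^ 2) := by
    have : 0 ≤ (β - α) * ((β + α) * (2 * η - β - α) + α * β) := by
      apply mul_nonneg (by linarith)
      apply add_nonneg
      · apply mul_nonneg <;> linarith
      · exact mul_nonneg t0 (by linarith)
    linarith
  have h2 : 2 * η * (β ^ 2 - α ^ 2) ≤ 2 * η * (x' - x) := by
    apply mul_le_mul_of_nonneg_left _ (by linarith)
    rw [s1, s2]; exact hd
  linarith

theorem delta_zero_iff {e x y : ℝ} (hx : x < e) :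
    y ^ 3 - y * x ^ 3 = 0 ↔ (y = 0 ∨ y = kap e x ∨ y = -kap e x) := by
  have hf : y ^ 3 - y * x ^ 3 = 0 ↔ (y = 0 ∨ y ^ 2 = x ^ 3) := by
    rw [show y ^ 3 - y * x ^ 3 = y * (y ^ 2 - x ^ 3) by ring, mul_eq_zero, sub_eq_zero]
  rw [hf]
  have hk : kap e x = √(max 0 x) ^ 3 := by unfold kap; rw [min_eq_left hx.le]
  rcases le_or_gt 0 x with h | h
  · have : x ^ 3 = kap e x ^ 2 := by
      rw [hk, max_eq_right h, ← pow_mul, mul_comm 3 2, pow_mul, Real.sq_sqrt h]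
    rw [this, sq_eq_sq_iff_eq_or_eq_neg]
  · have h0 : kap e x = 0 := by rw [hk, max_eq_left h.le]; simp
    rw [h0]
    have : x ^ 3 < 0 := by
      have : 0 < (-x) ^ 3 := by apply pow_pos; linarith
      linarith [show (-x) ^ 3 = -x ^ 3 by ring]
    constructor
    · rintro (h | h)
      · exact Or.inl h
      · nlinarith [sq_nonneg y]
    · rintro (h | h | h)
      · exact Or.inl h
      · exact Or.inl h
      · left; linarith


theorem mono_q {f : ℝ → ℝ} (hf : StrictMono f) {q : ℝ} (hq : q ≠ 0) :
    StrictMono fun t => f (q * t) / q := by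
  intro t t' ht
  rcases lt_or_gt_of_ne hq with h | h
  · exact div_lt_div_of_neg_of_lt h (hf (mul_lt_mul_of_neg_left ht h))
  · exact div_lt_div_of_pos_right (hf (mul_lt_mul_of_pos_left ht h)) h

theorem deriv_fst {c : ℝ → ℝ × ℝ} {v : ℝ × ℝ} {J : Set ℝ} {t : ℝ}
    (h : HasDerivWithinAt c v J t) : HasDerivWithinAt (fun t => (c t).1) v.1 J t := by
  exact (hasFDerivAt_fst (𝕜 := ℝ) (p := c t)).comp_hasDerivWithinAt t h

theorem deriv_snd {c : ℝ → ℝ × ℝ} {v : ℝ × ℝ} {J : Set ℝ} {t : ℝ}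
    (h : HasDerivWithinAt c v J t) : HasDerivWithinAt (fun t => (c t).2) v.2 J t := by
  exact (hasFDerivAt_snd (𝕜 := ℝ) (p := c t)).comp_hasDerivWithinAt t h

/-- The model impasse function. -/
noncomputable def gam (z : ℝ × ℝ) : ℝ := z.2 * (z.2 - max z.1 0) * (z.2 + max z.1 0)

theorem gam_zero_iff (s h : ℝ) :
    gam (s, h) = 0 ↔ (h = 0 ∨ h = max s 0 ∨ h = -max s 0) := by
  unfold gam
  simp only [mul_eq_zero, sub_eq_zero, or_assoc, add_eq_zero_iff_eq_neg]

/-- Assembling the equivalence with the model from a suitable homeomorphism. -/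
theorem core (P Q : ℝ × ℝ → ℝ) (q : ℝ) (hq : q ≠ 0) (g : ℝ → ℝ → ℝ) (Qt : ℝ × ℝ → ℝ)
    (M K : NNReal) (hM : ∀ x y, |g x y| ≤ M)
    (hK : ∀ y, LipschitzWith K (fun x => g x y)) (hc : ∀ x, Continuous (g x))
    (cQ : Continuous Qt) (hQ1 : ∀ z, 1 / 2 ≤ Qt z / q) (hQ2 : ∀ z, Qt z / q ≤ 2)
    (e : ℝ) (he : 0 < e) (he1 : e ≤ 1) (hMe : M * (2 * √e) < 1)
    (hQQ : ∀ z : ℝ × ℝ, |z.1| < e → |z.2| < e → Q z = Qt z)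
    (hPP : ∀ z : ℝ × ℝ, |z.1| < e → |z.2| < e → P z = g z.1 z.2 * Qt z) :
    OrbitallyEquivAt (fun z => (P z, Q z)) (fun z => z.2 ^ 3 - z.2 * z.1 ^ 3) (0, 0)
      (fun _ => (0, q)) gam (0, 0) := by
  obtain ⟨φ, S, cφ, cS, Sφ, φS, φ0, mono, lip, dφ⟩ := exists_flow g M K hM hK hc
  have S0 : ∀ x, S 0 x = x := fun x => by simpa [φ0] using φS 0 x
  have Sinj : ∀ y x x', S y x = S y x' → x = x' := fun y x x' h => by
    rw [← φS y x, h, φS]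
  obtain ⟨a, ca, ma, a1, a2⟩ := graph_inv cS φS φ0 mono lip M.coe_nonneg (kap e) (kap_lip he)
    (fun x => by rw [abs_of_nonneg (kap_nonneg _ _)]; exact kap_le_one he1 x) hMe (kap_cont e)
  obtain ⟨b, cb, mb, b1, b2⟩ := graph_inv cS φS φ0 mono lip M.coe_nonneg (fun x => -kap e x)
    (L := 2 * √e) (fun x x' => by
      rw [neg_sub_neg, abs_sub_comm]; exact kap_lip he x x')
    (fun x => by rw [abs_neg, abs_of_nonneg (kap_nonneg _ _)]; exact kap_le_one he1 x) hMe
    (kap_cont e).neg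
  have k0 : kap e 0 = 0 := (kap_zero he).2 le_rfl
  have a0 : a 0 = 0 := by have := a1 0; rwa [k0, S0] at this
  have b0 : b 0 = 0 := by have := b1 0; simpa only [k0, neg_zero, S0] using this
  set w : ℝ → ℝ := fun s => max s 0 with hw
  set u : ℝ → ℝ := fun s => kap e (a s) with hu
  set l : ℝ → ℝ := fun s => kap e (b s) with hl
  have cw : Continuous w := by fun_prop
  have cu : Continuous u := (kap_cont e).comp ca
  have cl' : Continuous l := (kap_cont e).comp cb
  have w0 : ∀ s, w s = 0 ↔ s ≤ 0 := fun s => max_eq_right_iff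
  have gu : ∀ s, Good (u s) (w s) := fun s => by
    refine ⟨kap_nonneg _ _, le_max_right _ _, ?_⟩
    rw [w0, hu, kap_zero he, ← a0, ma.le_iff_le, a0]
  have gl : ∀ s, Good (l s) (w s) := fun s => by
    refine ⟨kap_nonneg _ _, le_max_right _ _, ?_⟩
    rw [w0, hl, kap_zero he, ← b0, mb.le_iff_le, b0]
  let H : ℝ → ℝ → ℝ := fun s y => G (u s) (w s) (l s) (w s) y
  let Hi : ℝ → ℝ → ℝ := fun s y => G (w s) (u s) (w s) (l s) y
  have cH : Continuous fun z : ℝ × ℝ => H z.1 z.2 := G_cont gu cu cw gl cl' cw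
  have cHi : Continuous fun z : ℝ × ℝ => Hi z.1 z.2 :=
    G_cont (fun s => (gu s).symm) cw cu (fun s => (gl s).symm) cw cl'
  have mH : ∀ s, StrictMono (H s) := fun s => G_mono (gu s) (gl s)
  have mHi : ∀ s, StrictMono (Hi s) := fun s => G_mono (gu s).symm (gl s).symm
  have HiH : ∀ s y, Hi s (H s y) = y := fun s y => G_inv (gu s) (gl s) y
  have HHi : ∀ s y, H s (Hi s y) = y := fun s y => G_inv (gu s).symm (gl s).symm y
  have H0 : ∀ s, H s 0 = 0 := fun s => G_zero (gu s)
  have Ht : ∀ s, H s (u s) = w s := fun s => G_top (gu s)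
  have Hb : ∀ s, H s (-l s) = -w s := fun s => G_bot (gu s) (gl s)
  let Φ : ℝ × ℝ → ℝ × ℝ := fun z => (S z.2 z.1, H (S z.2 z.1) z.2)
  let Ψ : ℝ × ℝ → ℝ × ℝ := fun z => (φ (Hi z.1 z.2) z.1, Hi z.1 z.2)
  have cS' : Continuous fun z : ℝ × ℝ => S z.2 z.1 :=
    cS.comp (continuous_snd.prodMk continuous_fst)
  have cΦ : Continuous Φ := cS'.prodMk (cH.comp (cS'.prodMk continuous_snd))
  have cΨ : Continuous Ψ := (cφ.comp (cHi.prodMk continuous_fst)).prodMk cHi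
  have ΨΦ : ∀ z, Ψ (Φ z) = z := by
    intro z
    simp only [Φ, Ψ, HiH, φS]
  have ΦΨ : ∀ z, Φ (Ψ z) = z := by
    intro z
    simp only [Φ, Ψ, Sφ, HHi]
  let V : Set (ℝ × ℝ) := {z | |z.1| < e ∧ |z.2| < e}
  have oV1 : IsOpen {z : ℝ × ℝ | |z.1| < e} := isOpen_lt (by fun_prop) (by fun_prop)
  have oV2 : IsOpen {z : ℝ × ℝ | |z.2| < e} := isOpen_lt (by fun_prop) (by fun_prop)
  have oV : IsOpen V := oV1.inter oV2
  have key : ∀ z ∈ V, (gam (Φ z) = 0 ↔ z.2 ^ 3 - z.2 * z.1 ^ 3 = 0) := by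
    rintro ⟨x, y⟩ ⟨hx, hy⟩
    simp only at hx hy ⊢
    rw [delta_zero_iff (lt_of_abs_lt hx), gam_zero_iff]
    refine or_congr ?_ (or_congr ?_ ?_)
    · have := (mH (S y x)).injective.eq_iff (a := y) (b := 0)
      rwa [H0] at this
    · have : max (S y x) 0 = H (S y x) (u (S y x)) := (Ht _).symm
      rw [this, (mH _).injective.eq_iff]
      constructor
      · intro h
        have h2 := a2 (S y x)
        have h3 : kap e (a (S y x)) = y := h.symm
        rw [h3] at h2
        have h4 := Sinj _ _ _ h2
        rw [h4] at h3
        exact h3.symm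
      · intro h
        have := a1 x
        rw [← h] at this
        simp only [hu, this]; exact h
    · have : -max (S y x) 0 = H (S y x) (-l (S y x)) := (Hb _).symm
      rw [this, (mH _).injective.eq_iff]
      constructor
      · intro h
        have h2 := b2 (S y x)
        have h3 : -kap e (b (S y x)) = y := h.symm
        rw [h3] at h2
        have h4 := Sinj _ _ _ h2
        rw [h4] at h3
        exact h3.symm
      · intro h
        have := b1 x
        simp only [← h] at this
        simp only [hl, this]; exact h
  have mΦ : MapsTo Φ V (Ψ ⁻¹' V) := fun z hz => by
    simpa only [mem_preimage, ΨΦ] using hz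
  have Φ00 : Φ (0, 0) = (0, 0) := by simp only [Φ, S0, H0]
  have V0 : ((0, 0) : ℝ × ℝ) ∈ V := by simp [V, he]
  refine ⟨V, Ψ ⁻¹' V, Φ, Ψ, oV, oV.preimage cΨ, V0, ?_, cΦ.continuousOn, cΨ.continuousOn,
    mΦ, fun z hz => hz, fun z _ => ΨΦ z, fun z _ => ΦΨ z, Φ00, ?_, ?_, ?_⟩
  · rw [← Φ00]; exact mΦ V0
  · ext z
    constructor
    · rintro ⟨z, ⟨hz, hzV⟩, rfl⟩
      exact ⟨(key z hzV).2 hz, mΦ hzV⟩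
    · rintro ⟨hz, hzV⟩
      refine ⟨Ψ z, ⟨(key _ hzV).1 ?_, hzV⟩, ΦΨ z⟩
      rw [ΦΨ]; exact hz
  · rintro J c ⟨hJ, hJn, hcV, hcd⟩
    obtain ⟨t₀, ht₀⟩ := hJn.nonempty
    set x : ℝ → ℝ := fun t => (c t).1 with hx
    set y : ℝ → ℝ := fun t => (c t).2 with hy
    have dx : ∀ t ∈ J, HasDerivWithinAt x (g (x t) (y t) * Qt (c t)) J t := by
      intro t ht
      have : HasDerivWithinAt (fun t => (c t).1) (P (c t)) J t := deriv_fst (hcd t ht)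
      rwa [hPP _ (hcV t ht).1.1 (hcV t ht).1.2] at this
    have dy : ∀ t ∈ J, HasDerivWithinAt y (Qt (c t)) J t := by
      intro t ht
      have : HasDerivWithinAt (fun t => (c t).2) (Q (c t)) J t := deriv_snd (hcd t ht)
      rwa [hQQ _ (hcV t ht).1.1 (hcV t ht).1.2] at this
    have hy1 : ∀ t ∈ J, y t ∈ Ioo (-1 : ℝ) 1 := by
      intro t ht
      have := abs_lt.1 (hcV t ht).1.2
      exact ⟨by linarith [this.1], by linarith [this.2]⟩
    set s := S (y t₀) (x t₀) with hs
    have hxs : ∀ t ∈ J, x t = φ (y t) s := by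
      intro t ht
      refine ode_unique (v := fun t x => g x (y t) * Qt (c t)) (K := K * (2 * ‖q‖₊)) hJ ?_ dx
        (g := fun t => φ (y t) s) ?_ ht₀ ?_ ht
      · intro t _
        refine LipschitzWith.of_dist_le_mul fun x x' => ?_
        have h1 := (hK (y t)).dist_le_mul x x'
        rw [Real.dist_eq] at h1 ⊢
        rw [← sub_mul, abs_mul]
        have h2 : |Qt (c t)| ≤ 2 * |q| := by
          have h3 := hQ1 (c t)
          have h4 := hQ2 (c t)
          have : |Qt (c t) / q| ≤ 2 := by rw [abs_le]; constructor <;> linarith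
          rwa [abs_div, div_le_iff₀ (abs_pos.2 hq)] at this
        have := mul_le_mul h1 h2 (abs_nonneg _) (by positivity)
        push_cast
        rw [Real.norm_eq_abs]
        linarith
      · intro t ht
        exact (dφ s (y t) (hy1 t ht)).comp_hasDerivWithinAt t (dy t ht)
      · rw [hs, φS]
    have hSs : ∀ t ∈ J, S (y t) (x t) = s := by
      intro t ht
      rw [hxs t ht, Sφ]
    let τ : ℝ → ℝ := fun t => H s (y t) / q
    have cy : ContinuousOn y J := fun t ht => (dy t ht).continuousWithinAt
    have cHs : Continuous (H s) := cH.comp (continuous_const.prodMk continuous_id)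
    have cτ : ContinuousOn τ J := (cHs.comp_continuousOn cy).div_const q
    have my : StrictMonoOn (fun t => y t / q) J := by
      refine strictMonoOn_of_hasDerivWithinAt_pos hJ.convex (cy.div_const q)
        (f' := fun t => Qt (c t) / q) ?_ ?_
      · intro t ht
        exact ((dy t (interior_subset ht)).mono interior_subset).div_const q
      · intro t _
        have := hQ1 (c t)
        linarith
    have mτ : StrictMonoOn τ J := by
      intro t ht t' ht' htt
      have := mono_q (mH s) hq (my ht ht' htt)
      simpa only [mul_div_cancel₀ _ hq] using this
    have hd : ∀ t ∈ J, Φ (c t) = (s, q * τ t) := by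
      intro t ht
      simp only [τ, mul_div_cancel₀ _ hq]
      show (S (y t) (x t), H (S (y t) (x t)) (y t)) = _
      rw [hSs t ht]
    refine ⟨τ '' J, fun t => (s, q * t), τ, ⟨?_, ?_, ?_, ?_⟩, cτ, mτ, rfl, hd⟩
    · exact (hJ.isPreconnected.image τ cτ).ordConnected
    · exact hJn.image_of_injOn mτ.injOn
    · rintro _ ⟨t, ht, rfl⟩
      simp only
      rw [← hd t ht]
      exact ⟨mΦ (hcV t ht).1, fun h => (hcV t ht).2 ((key _ (hcV t ht).1).1 h)⟩
    · intro t _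
      have h2 : HasDerivAt (fun t : ℝ => q * t) q t := by
        simpa using (hasDerivAt_id t).const_mul q
      exact ((hasDerivAt_const t s).prodMk h2).hasDerivWithinAt
  · rintro J d ⟨hJ, hJn, hdV, hdd⟩
    obtain ⟨t₀, ht₀⟩ := hJn.nonempty
    set s := (d t₀).1 with hs
    set h₀ := (d t₀).2 with hh
    have d1 : ∀ t ∈ J, (d t).1 = s := by
      intro t ht
      exact ode_unique (v := fun _ _ => 0) (K := 0) hJ (fun _ _ => LipschitzWith.const _)
        (fun t ht => deriv_fst (hdd t ht)) (g := fun _ => s)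
        (fun t _ => hasDerivWithinAt_const _ _ _) ht₀ hs.symm ht
    have d2 : ∀ t ∈ J, (d t).2 = h₀ - q * t₀ + q * t := by
      intro t ht
      refine ode_unique (v := fun _ _ => q) (K := 0) hJ (fun _ _ => LipschitzWith.const _)
        (fun t ht => deriv_snd (hdd t ht)) (g := fun t => h₀ - q * t₀ + q * t)
        (fun t _ => ?_) ht₀ ?_ ht
      · have h2 : HasDerivAt (fun t : ℝ => q * t) q t := by
          simpa using (hasDerivAt_id t).const_mul q
        exact (h2.const_add _).hasDerivWithinAt
      · rw [hh]; ring
    have cφs : Continuous fun y => φ y s := cφ.comp (continuous_id.prodMk continuous_const)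
    have hQ0 : ∀ z, Qt z ≠ 0 := by
      intro z hz
      have := hQ1 z
      rw [hz, zero_div] at this
      linarith
    obtain ⟨T, Ti, mT, cT, TiT, TTi, dTi⟩ := time_change (fun y => q / Qt (φ y s, y))
      (continuous_const.div (cQ.comp (cφs.prodMk continuous_id)) fun y => hQ0 _) (fun y => by
        have h1 := hQ1 (φ y s, y)
        have h2 := hQ2 (φ y s, y)
        rw [one_div, ← inv_div (Qt (φ y s, y)) q]
        exact inv_anti₀ (by linarith) h2)
    let y : ℝ → ℝ := fun t => Hi s (h₀ - q * t₀ + q * t)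
    let τ : ℝ → ℝ := fun t => T (y t) / q
    let c : ℝ → ℝ × ℝ := fun t => (φ (Ti (q * t)) s, Ti (q * t))
    have hΨ : ∀ t ∈ J, Ψ (d t) = (φ (y t) s, y t) := by
      intro t ht
      simp only [Ψ, y, d1 t ht, d2 t ht]
    have hTi : ∀ t, Ti (q * τ t) = y t := by
      intro t
      simp only [τ, mul_div_cancel₀ _ hq, TiT]
    have hcτ : ∀ t ∈ J, Ψ (d t) = c (τ t) := by
      intro t ht
      simp only [hΨ t ht, c, hTi]
    have cHis : Continuous (Hi s) := cHi.comp (continuous_const.prodMk continuous_id)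
    have cτ : Continuous τ := by
      have : Continuous y := cHis.comp (by fun_prop)
      exact (cT.comp this).div_const q
    have mτ : StrictMono τ := by
      refine mono_q (f := fun h => T (Hi s (h₀ - q * t₀ + h))) ?_ hq
      intro h h' hh
      exact mT (mHi s (by linarith))
    have hcV : ∀ t ∈ J, c (τ t) ∈ V \ {z | z.2 ^ 3 - z.2 * z.1 ^ 3 = 0} := by
      intro t ht
      rw [← hcτ t ht]
      refine ⟨(hdV t ht).1, fun h => (hdV t ht).2 ?_⟩
      have := (key _ (hdV t ht).1).2 h
      rwa [ΦΨ] at this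
    refine ⟨τ '' J, c, τ, ⟨?_, ?_, ?_, ?_⟩, cτ.continuousOn, mτ.strictMonoOn J, rfl, hcτ⟩
    · exact (hJ.isPreconnected.image τ cτ.continuousOn).ordConnected
    · exact hJn.image_of_injOn mτ.injective.injOn
    · rintro _ ⟨t, ht, rfl⟩
      exact hcV t ht
    · rintro _ ⟨t, ht, rfl⟩
      have hv := (hcV t ht).1
      show HasDerivWithinAt c (P (c (τ t)), Q (c (τ t))) (τ '' J) (τ t)
      rw [hPP _ hv.1 hv.2, hQQ _ hv.1 hv.2]
      have hy1 : Ti (q * τ t) ∈ Ioo (-1 : ℝ) 1 := by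
        have := abs_lt.1 hv.2
        simp only [c] at this
        exact ⟨by linarith [this.1], by linarith [this.2]⟩
      have h2 : HasDerivAt (fun t : ℝ => q * t) q (τ t) := by
        simpa using (hasDerivAt_id (τ t)).const_mul q
      have h3 : HasDerivAt (fun t => Ti (q * t)) (Qt (c (τ t))) (τ t) := by
        have := (dTi (q * τ t)).comp (τ t) h2
        have h5 : (q / Qt (c (τ t)))⁻¹ * q = Qt (c (τ t)) := by
          rw [inv_div, div_mul_cancel₀ _ hq]
        rw [← h5]
        exact this
      have h4 := (dφ s _ hy1).comp (τ t) h3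
      exact (h4.prodMk h3).hasDerivWithinAt


theorem to_model (P Q : ℝ × ℝ → ℝ)
    (hP : AnalyticAt ℝ P (0, 0)) (hQ : AnalyticAt ℝ Q (0, 0)) (hQ0 : Q (0, 0) ≠ 0) :
    OrbitallyEquivAt (fun z => (P z, Q z)) (fun z => z.2 ^ 3 - z.2 * z.1 ^ 3) (0, 0)
      (fun _ => (0, Q (0, 0))) gam (0, 0) := by
  set q := Q (0, 0) with hq
  let g0 : ℝ × ℝ → ℝ := fun z => P z / Q z
  have ag : AnalyticAt ℝ g0 (0, 0) := hP.div hQ hQ0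
  have cg : ContDiffAt ℝ 1 g0 (0, 0) := ag.contDiffAt
  obtain ⟨K, t, ht, hK⟩ := cg.exists_lipschitzOnWith
  let M : NNReal := ‖g0 (0, 0)‖₊ + 1
  have e1 : ∀ᶠ z in 𝓝 ((0, 0) : ℝ × ℝ), ContinuousAt Q z := hQ.eventually_continuousAt
  have e2 : ∀ᶠ z in 𝓝 ((0, 0) : ℝ × ℝ), ContinuousAt g0 z := ag.eventually_continuousAt
  have cq : ContinuousAt (fun z => Q z / q) (0, 0) := hQ.continuousAt.div_const q
  have hq1 : Q (0, 0) / q = 1 := div_self hQ0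
  have e3 : ∀ᶠ z in 𝓝 ((0, 0) : ℝ × ℝ), 1 / 2 < Q z / q :=
    cq.eventually (lt_mem_nhds (by simp only [hq1]; norm_num))
  have e4 : ∀ᶠ z in 𝓝 ((0, 0) : ℝ × ℝ), Q z / q < 2 :=
    cq.eventually (gt_mem_nhds (by simp only [hq1]; norm_num))
  have e5 : ∀ᶠ z in 𝓝 ((0, 0) : ℝ × ℝ), |g0 z| < M :=
    ag.continuousAt.abs.eventually (gt_mem_nhds (by simp [M]))
  have e6 : ∀ᶠ z in 𝓝 ((0, 0) : ℝ × ℝ), z ∈ t := ht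
  obtain ⟨r, hr, hall⟩ := Metric.nhds_basis_closedBall.eventually_iff.1
    (e1.and (e2.and (e3.and (e4.and (e5.and e6)))))
  let p : ℝ → ℝ := fun x => max (-r) (min x r)
  have p1 : ∀ x, |p x| ≤ r := fun x => by
    rw [abs_le]
    exact ⟨le_max_left _ _, max_le (by linarith) (min_le_right _ _)⟩
  have p2 : ∀ x, |x| < r → p x = x := fun x hx => by
    have := abs_lt.1 hx
    simp only [p]
    rw [min_eq_left this.2.le, max_eq_right this.1.le]
  have p3 : ∀ x x', |p x - p x'| ≤ |x - x'| := fun x x' => by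
    refine (abs_max_sub_max_le_max _ _ _ _).trans ?_
    rw [sub_self, abs_zero]
    refine max_le (abs_nonneg _) ((abs_min_sub_min_le_max _ _ _ _).trans ?_)
    rw [sub_self, abs_zero]
    exact max_le le_rfl (abs_nonneg _)
  have cp : Continuous p := by fun_prop
  let π : ℝ × ℝ → ℝ × ℝ := fun z => (p z.1, p z.2)
  have cπ : Continuous π := by fun_prop
  have hπ : ∀ z, π z ∈ Metric.closedBall ((0, 0) : ℝ × ℝ) r := fun z => by
    rw [Metric.mem_closedBall, Prod.dist_eq]
    simp only [Real.dist_eq, sub_zero]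
    exact max_le (p1 _) (p1 _)
  have cont : ∀ {f : ℝ × ℝ → ℝ}, (∀ z, ContinuousAt f (π z)) → Continuous fun z => f (π z) :=
    fun hf => continuous_iff_continuousAt.2 fun z =>
      ContinuousAt.comp (f := π) (hf z) cπ.continuousAt
  let e : ℝ := min r (min 1 (1 / (4 * (M + 1)) ^ 2))
  have he : 0 < e := by positivity
  have her : e ≤ r := min_le_left _ _
  have he1 : e ≤ 1 := (min_le_right _ _).trans (min_le_left _ _)
  have he2 : e ≤ (1 / (4 * (M + 1))) ^ 2 := by
    rw [one_div_pow]
    exact (min_le_right _ _).trans (min_le_right _ _)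
  have hMe : M * (2 * √e) < 1 := by
    have h1 : √e ≤ 1 / (4 * ((M : ℝ) + 1)) := Real.sqrt_le_iff.2 ⟨by positivity, he2⟩
    have h0 : (0 : ℝ) ≤ M := M.coe_nonneg
    rw [le_div_iff₀ (by positivity)] at h1
    nlinarith [Real.sqrt_nonneg e, mul_nonneg h0 (Real.sqrt_nonneg e)]
  have hπe : ∀ z : ℝ × ℝ, |z.1| < e → |z.2| < e → π z = z := fun z h1 h2 => by
    simp only [π, p2 _ (h1.trans_le her), p2 _ (h2.trans_le her)]
  refine core P Q q hQ0 (fun x y => g0 (π (x, y))) (fun z => Q (π z)) M K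
    (fun x y => (hall (hπ _)).2.2.2.2.1.le) ?_ ?_ (cont fun z => (hall (hπ z)).1)
    (fun z => (hall (hπ z)).2.2.1.le) (fun z => (hall (hπ z)).2.2.2.1.le) e he he1 hMe ?_ ?_
  · intro y
    refine LipschitzWith.of_dist_le_mul fun x x' => ?_
    refine (hK.dist_le_mul _ (hall (hπ (x, y))).2.2.2.2.2 _
      (hall (hπ (x', y))).2.2.2.2.2).trans ?_
    refine mul_le_mul_of_nonneg_left ?_ K.coe_nonneg
    rw [Prod.dist_eq]
    simp only [π, dist_self, Real.dist_eq]
    exact max_le (p3 _ _) (abs_nonneg _)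
  · intro x
    exact (cont fun z => (hall (hπ z)).2.1).comp (continuous_const.prodMk continuous_id)
  · intro z h1 h2
    simp only [hπe z h1 h2]
  · intro z h1 h2
    have h3 := (hall (hπ z)).2.2.1
    simp only [hπe z h1 h2] at h3 ⊢
    have : Q z ≠ 0 := by
      intro h
      rw [h, zero_div] at h3
      linarith
    exact (div_mul_cancel₀ _ this).symm

end E7

/-- (`E₇`-type impasse curve, Case 7 of Table 2.)
If `δ(x,y) = y³ − y·x³` and `X = (P,Q)` is real-analytic near the origin with `Q(0,0) ≠ 0`,
then `(X, δ)` is orientation-preserving `C⁰`-orbitally equivalent at the origin to the system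
with constant adjoint vector field `(P(0,0), Q(0,0))`. -/
theorem E7_case7 (P Q : ℝ × ℝ → ℝ)
    (hP : AnalyticAt ℝ P (0, 0)) (hQ : AnalyticAt ℝ Q (0, 0))
    (hQ0 : Q (0, 0) ≠ 0) :
    OrbitallyEquivAt (fun z => (P z, Q z))
      (fun z => z.2 ^ 3 - z.2 * z.1 ^ 3) (0, 0)
      (fun _ => (P (0, 0), Q (0, 0)))
      (fun z => z.2 ^ 3 - z.2 * z.1 ^ 3) (0, 0) := by
  exact E7.orbital_trans (E7.to_model P Q hP hQ hQ0)
    (E7.orbital_symm (E7.to_model (fun _ => P (0, 0)) (fun _ => Q (0, 0))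
      analyticAt_const analyticAt_const hQ0))
end
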